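/- Fix m ∈ ℕ. Let (F_n) be a sequence of non-constant random variables in the finitely generated Wiener chaos of degree m (F_n = P_n(N^{(n)}), N^{(n)} ~ γ_{K_n}, P_n in the degree-m Hermite span). If the laws of F_n converge weakly to N(0,1), then superconvergence holds: for every q ∈ ℕ there exists N ∈ ℕ such that for all n ≥ N the law of F_n has a density f_n with respect to Lebesgue measure which is of class C^q, and sup_{x∈ℝ} | f_n^{(q)}(x) − φ^{(q)}(x) | → 0 as n → ∞, where φ(x) = (2π)^{−1/2} e^{−x²/2} is the standard Gaussian density and f^{(q)} denotes the q-th derivative. -/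

import Mathlib

open MeasureTheory ProbabilityTheory MvPolynomial Filter Topology

noncomputable def gaussPi (ι : Type) [Fintype ι] : Measure (ι → ℝ) :=
  Measure.pi fun _ => gaussianReal 0 1

noncomputable def hermiteProd {K : ℕ} (k : Fin K → ℕ) : MvPolynomial (Fin K) ℝ :=
  ∏ i, Polynomial.aeval (MvPolynomial.X i) (Polynomial.hermite (k i))

noncomputable def chaos (K m : ℕ) : Submodule ℝ (MvPolynomial (Fin K) ℝ) :=
  Submodule.span ℝ {P | ∃ k : Fin K → ℕ, ∑ i, k i = m ∧ P = hermiteProd k}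

noncomputable def sqField {ι : Type} [Fintype ι] (P : MvPolynomial ι ℝ) (x : ι → ℝ) : ℝ :=
  ∑ i, (eval x (pderiv i P)) ^ 2

def TendstoInLaw {E : Type} [MeasurableSpace E] [TopologicalSpace E]
    (μs : ℕ → Measure E) (μ : Measure E) : Prop :=
  ∀ f : BoundedContinuousFunction E ℝ,
    Tendsto (fun n => ∫ x, f x ∂μs n) atTop (𝓝 (∫ x, f x ∂μ))

namespace SC

noncomputable def gmom (n : ℕ) : ℝ := ∫ x, x ^ n ∂(gaussianReal 0 1)

lemma integrable_pow_gauss (n : ℕ) : Integrable (fun x : ℝ => x ^ n) (gaussianReal 0 1) := by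
  have h := (memLp_id_gaussianReal (μ := 0) (v := 1) (n : NNReal))
  rcases Nat.eq_zero_or_pos n with rfl | hn
  · simp
  have := h.integrable_norm_rpow (by simpa using hn.ne') (by simp)
  refine (this.mono' (by fun_prop) ?_)
  refine ae_of_all _ fun x => ?_
  simp

lemma gmom_zero : gmom 0 = 1 := by simp [gmom]
lemma gmom_one : gmom 1 = 0 := by simp [gmom]

lemma gpdf_eq (x : ℝ) : gaussianPDFReal 0 1 x = (√(2 * Real.pi))⁻¹ * Real.exp (-x ^ 2 / 2) := by
  simp [gaussianPDFReal]

lemma gpdf_deriv (x : ℝ) : HasDerivAt (gaussianPDFReal 0 1) (-(x * gaussianPDFReal 0 1 x)) x := by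
  have : gaussianPDFReal 0 1 = fun x : ℝ => (√(2 * Real.pi))⁻¹ * Real.exp (-x ^ 2 / 2) := by
    ext x; exact gpdf_eq x
  rw [this]
  have h1 : HasDerivAt (fun x : ℝ => -x ^ 2 / 2) (-x) x := by
    have := ((hasDerivAt_pow 2 x).neg).div_const 2
    refine this.congr_deriv ?_
    simp
    ring
  have := (h1.exp).const_mul (√(2 * Real.pi))⁻¹
  refine this.congr_deriv ?_
  ring

lemma integrable_pow_gpdf (n : ℕ) : Integrable (fun x : ℝ => x ^ n * gaussianPDFReal 0 1 x) := by
  have h := integrable_pow_gauss n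
  rw [gaussianReal_of_var_ne_zero 0 one_ne_zero,
    integrable_withDensity_iff_integrable_smul' (by fun_prop) (by simp [gaussianPDF])] at h
  refine h.congr (ae_of_all _ fun x => ?_)
  simp [gaussianPDF, gaussianPDFReal_nonneg, mul_comm]

lemma gmom_eq (n : ℕ) : gmom n = ∫ x : ℝ, x ^ n * gaussianPDFReal 0 1 x := by
  rw [gmom, integral_gaussianReal_eq_integral_smul one_ne_zero]
  simp [mul_comm]

lemma gmom_succ_succ (n : ℕ) : gmom (n + 2) = (n + 1) * gmom n := by
  have := integral_mul_deriv_eq_deriv_mul_of_integrable (u := fun x : ℝ => x ^ (n + 1))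
    (v := gaussianPDFReal 0 1) (u' := fun x => (n + 1) * x ^ n)
    (v' := fun x => -(x * gaussianPDFReal 0 1 x)) ?_ ?_ ?_ ?_ ?_
  · rw [gmom_eq, gmom_eq]
    have e1 : ∀ x : ℝ, x ^ (n + 1) * -(x * gaussianPDFReal 0 1 x)
        = -(x ^ (n + 2) * gaussianPDFReal 0 1 x) := fun x => by ring
    have e2 : ∀ x : ℝ, (n + 1) * x ^ n * gaussianPDFReal 0 1 x
        = (n + 1) * (x ^ n * gaussianPDFReal 0 1 x) := fun x => by ring
    simp only [e1, e2, integral_neg, integral_const_mul] at this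
    linarith
  · intro x _; simpa using hasDerivAt_pow (n + 1) x
  · intro x _; exact gpdf_deriv x
  · refine (integrable_pow_gpdf (n + 2)).neg.congr (ae_of_all _ fun x => ?_)
    simp; ring
  · refine ((integrable_pow_gpdf n).const_mul (n + 1 : ℝ)).congr (ae_of_all _ fun x => ?_)
    simp; ring
  · exact integrable_pow_gpdf (n + 1)

instance (ι : Type) [Fintype ι] : IsProbabilityMeasure (gaussPi ι) := by
  unfold gaussPi; infer_instance

variable {K : ℕ}

lemma eval_monomial_prod (s : Fin K →₀ ℕ) (a : ℝ) (x : Fin K → ℝ) :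
    eval x (monomial s a) = a * ∏ i, x i ^ s i := by
  rw [eval_monomial, Finsupp.prod_fintype _ _ (by simp)]

lemma integrable_eval (Q : MvPolynomial (Fin K) ℝ) :
    Integrable (fun x => eval x Q) (gaussPi (Fin K)) := by
  induction Q using MvPolynomial.induction_on' with
  | monomial s a =>
    simp only [eval_monomial_prod]
    refine Integrable.const_mul ?_ a
    exact Integrable.fintype_prod (f := fun i (y : ℝ) => y ^ s i)
      (fun i => integrable_pow_gauss (s i))
  | add p q hp hq => simp only [map_add]; exact hp.add hq

/-- Gaussian expectation of a polynomial. -/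
noncomputable def EE (Q : MvPolynomial (Fin K) ℝ) : ℝ := ∫ x, eval x Q ∂gaussPi (Fin K)

lemma EE_add (p q : MvPolynomial (Fin K) ℝ) : EE (p + q) = EE p + EE q := by
  simp only [EE, map_add]
  exact integral_add (integrable_eval p) (integrable_eval q)

lemma EE_smul (c : ℝ) (p : MvPolynomial (Fin K) ℝ) : EE (c • p) = c * EE p := by
  simp only [EE, smul_eval]
  exact integral_const_mul c _

/-- expectation as a linear map. -/
noncomputable def EL : MvPolynomial (Fin K) ℝ →ₗ[ℝ] ℝ where
  toFun := EE
  map_add' := EE_add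
  map_smul' c p := by simp [EE_smul]

lemma EE_eq_EL (p : MvPolynomial (Fin K) ℝ) : EE p = EL p := rfl

lemma EE_sum {ι : Type*} (s : Finset ι) (f : ι → MvPolynomial (Fin K) ℝ) :
    EE (∑ i ∈ s, f i) = ∑ i ∈ s, EE (f i) := map_sum EL f s

lemma EE_sub (p q : MvPolynomial (Fin K) ℝ) : EE (p - q) = EE p - EE q := map_sub EL p q
lemma EE_zero : EE (0 : MvPolynomial (Fin K) ℝ) = 0 := map_zero EL
lemma EE_C (c : ℝ) : EE (C c : MvPolynomial (Fin K) ℝ) = c := by simp [EE]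
lemma EE_one : EE (1 : MvPolynomial (Fin K) ℝ) = 1 := by simp [EE]
lemma EE_C_mul (c : ℝ) (p : MvPolynomial (Fin K) ℝ) : EE (C c * p) = c * EE p := by
  rw [← smul_eq_C_mul, EE_smul]

lemma EE_mono {p q : MvPolynomial (Fin K) ℝ} (h : ∀ x, eval x p ≤ eval x q) : EE p ≤ EE q :=
  integral_mono (integrable_eval p) (integrable_eval q) h

lemma EE_nonneg {p : MvPolynomial (Fin K) ℝ} (h : ∀ x, 0 ≤ eval x p) : 0 ≤ EE p :=
  integral_nonneg h

lemma EE_sq_nonneg (p : MvPolynomial (Fin K) ℝ) : 0 ≤ EE (p * p) :=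
  EE_nonneg fun x => by simpa using mul_self_nonneg _

lemma EE_monomial (s : Fin K →₀ ℕ) (a : ℝ) : EE (monomial s a) = a * ∏ i, gmom (s i) := by
  simp only [EE, eval_monomial_prod, integral_const_mul, gaussPi]
  rw [integral_fintype_prod_eq_prod (f := fun i (y : ℝ) => y ^ s i)]
  rfl

lemma ibp (i : Fin K) (g : MvPolynomial (Fin K) ℝ) : EE (X i * g) = EE (pderiv i g) := by
  induction g using MvPolynomial.induction_on' with
  | monomial s a =>
    rw [X, monomial_mul, pderiv_monomial, EE_monomial, EE_monomial,
      Fintype.prod_eq_mul_prod_compl i, Fintype.prod_eq_mul_prod_compl i]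
    have h : ∀ t : Fin K →₀ ℕ, (∀ j ≠ i, t j = s j) →
        ∏ j ∈ {i}ᶜ, gmom (t j) = ∏ j ∈ {i}ᶜ, gmom (s j) := by
      intro t ht
      refine Finset.prod_congr rfl fun j hj => ?_
      rw [ht j (by simpa using hj)]
    rw [h (Finsupp.single i 1 + s) (fun j hj => by simp [hj.symm]),
      h (s - Finsupp.single i 1) (fun j hj => by simp [hj.symm])]
    have : gmom ((Finsupp.single i 1 + s : Fin K →₀ ℕ) i) =
        s i * gmom ((s - Finsupp.single i 1 : Fin K →₀ ℕ) i) := by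
      simp only [Finsupp.coe_add, Pi.add_apply, Finsupp.single_eq_same, Finsupp.coe_tsub,
        Pi.sub_apply]
      rcases hsi : s i with _ | n
      · simp [gmom_one]
      · rw [show 1 + (n + 1) = n + 2 by ring, gmom_succ_succ]; simp
    rw [this]; ring
  | add p q hp hq => rw [mul_add, EE_add, hp, hq, map_add, EE_add]

/-- creation operator -/
noncomputable def del (i : Fin K) (g : MvPolynomial (Fin K) ℝ) : MvPolynomial (Fin K) ℝ :=
  X i * g - pderiv i g

lemma EE_del (i : Fin K) (g h : MvPolynomial (Fin K) ℝ) :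
    EE (del i g * h) = EE (g * pderiv i h) := by
  have h1 := ibp i (g * h)
  rw [Derivation.leibniz, smul_eq_mul, smul_eq_mul, EE_add] at h1
  rw [del, sub_mul, EE_sub, mul_assoc, h1, mul_comm h]
  ring

lemma pderiv_comm' (i j : Fin K) (g : MvPolynomial (Fin K) ℝ) :
    pderiv i (pderiv j g) = pderiv j (pderiv i g) := by
  have h : ⁅(pderiv i : Derivation ℝ (MvPolynomial (Fin K) ℝ) (MvPolynomial (Fin K) ℝ)),
      (pderiv j : Derivation ℝ (MvPolynomial (Fin K) ℝ) (MvPolynomial (Fin K) ℝ))⁆ = 0 := by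
    apply MvPolynomial.derivation_ext
    intro k
    rw [Derivation.commutator_apply]
    simp only [pderiv_X, Derivation.zero_apply, Pi.single_apply]
    split_ifs <;> simp
  have := congrArg (fun D => D g) h
  simp only [Derivation.commutator_apply, Derivation.zero_apply] at this
  exact sub_eq_zero.1 this

lemma pderiv_del (i j : Fin K) (g : MvPolynomial (Fin K) ℝ) :
    pderiv j (del i g) = (if i = j then g else 0) + del i (pderiv j g) := by
  rw [del, map_sub, Derivation.leibniz, pderiv_X, pderiv_comm' j i, del, smul_eq_mul, smul_eq_mul,
    Pi.single_apply]
  split_ifs with h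
  · ring
  · ring

lemma del_add (i : Fin K) (g h : MvPolynomial (Fin K) ℝ) : del i (g + h) = del i g + del i h := by
  simp only [del, map_add]; ring
lemma del_smul (i : Fin K) (c : ℝ) (g : MvPolynomial (Fin K) ℝ) :
    del i (c • g) = c • del i g := by
  simp only [del, Derivation.map_smul, mul_smul_comm, smul_sub]
lemma del_zero (i : Fin K) : del i (0 : MvPolynomial (Fin K) ℝ) = 0 := by simp [del]

/-- the chaoses, through creation operators -/
noncomputable def Ch : ℕ → Submodule ℝ (MvPolynomial (Fin K) ℝ)
  | 0 => Submodule.span ℝ {1}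
  | n + 1 => Submodule.span ℝ {P | ∃ i, ∃ g ∈ Ch n, P = del i g}

lemma del_mem {n : ℕ} {g : MvPolynomial (Fin K) ℝ} (hg : g ∈ Ch n) (i : Fin K) :
    del i g ∈ Ch (n + 1) := Submodule.subset_span ⟨i, g, hg, rfl⟩

lemma Ch_succ_induction {n : ℕ} {p : MvPolynomial (Fin K) ℝ → Prop}
    (h0 : p 0) (hadd : ∀ a b, p a → p b → p (a + b)) (hsmul : ∀ (c : ℝ) a, p a → p (c • a))
    (hdel : ∀ i, ∀ g ∈ Ch n, p (del i g)) {F} (hF : F ∈ Ch (K := K) (n + 1)) : p F := by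
  refine Submodule.span_induction (p := fun x _ => p x) ?_ h0 (fun a b _ _ => hadd a b)
    (fun c a _ => hsmul c a) hF
  rintro _ ⟨i, g, hg, rfl⟩; exact hdel i g hg

lemma mem_Ch_zero {F : MvPolynomial (Fin K) ℝ} (hF : F ∈ Ch 0) : ∃ c, F = C c := by
  obtain ⟨c, rfl⟩ := Submodule.mem_span_singleton.1 hF
  exact ⟨c, by rw [smul_eq_C_mul, mul_one]⟩

lemma pderiv_Ch_zero {F : MvPolynomial (Fin K) ℝ} (hF : F ∈ Ch 0) (j : Fin K) :
    pderiv j F = 0 := by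
  obtain ⟨c, rfl⟩ := mem_Ch_zero hF; simp

lemma pderiv_mem_Ch : ∀ {n : ℕ} {F : MvPolynomial (Fin K) ℝ} (_ : F ∈ Ch (n + 1)) (j : Fin K),
    pderiv j F ∈ Ch n := by
  intro n
  induction n with
  | zero =>
    intro F hF j
    refine Ch_succ_induction (p := fun F => pderiv j F ∈ Ch 0) (by simp) ?_ ?_ ?_ hF
    · intro a b ha hb; rw [map_add]; exact add_mem ha hb
    · intro c a ha; rw [Derivation.map_smul]; exact Submodule.smul_mem _ _ ha
    · intro i g hg
      rw [pderiv_del, pderiv_Ch_zero hg, del_zero, add_zero]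
      split_ifs; exacts [hg, zero_mem _]
  | succ n ih =>
    intro F hF j
    refine Ch_succ_induction (p := fun F => pderiv j F ∈ Ch (n + 1)) (by simp) ?_ ?_ ?_ hF
    · intro a b ha hb; rw [map_add]; exact add_mem ha hb
    · intro c a ha; rw [Derivation.map_smul]; exact Submodule.smul_mem _ _ ha
    · intro i g hg
      rw [pderiv_del]
      refine add_mem ?_ (del_mem (ih hg j) i)
      split_ifs; exacts [hg, zero_mem _]

lemma number_op : ∀ {n : ℕ} {F : MvPolynomial (Fin K) ℝ} (_ : F ∈ Ch n),
    ∑ i, del i (pderiv i F) = (n : ℝ) • F := by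
  intro n
  induction n with
  | zero =>
    intro F hF
    simp [pderiv_Ch_zero hF, del_zero]
  | succ n ih =>
    intro F hF
    refine Ch_succ_induction (p := fun F => ∑ i, del i (pderiv i F) = ((n + 1 : ℕ) : ℝ) • F)
      (by simp [del_zero]) ?_ ?_ ?_ hF
    · intro a b ha hb
      simp only [map_add, del_add, Finset.sum_add_distrib, ha, hb, smul_add]
    · intro c a ha
      simp only [Derivation.map_smul, del_smul, ← Finset.smul_sum, ha]
      rw [smul_comm]
    · intro j g hg
      have hc : ∀ i, del i (del j (pderiv i g)) = del j (del i (pderiv i g)) := by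
        intro i
        have e : ∀ h : MvPolynomial (Fin K) ℝ, del i (del j h) = del j (del i h) := by
          intro h
          have h1 := pderiv_del i j h
          have h2 := pderiv_del j i h
          rw [del, h2, del.eq_1 j (del i h), h1]
          simp only [del]
          rw [pderiv_comm' i j]
          by_cases hij : i = j
          · subst hij; ring
          · simp [hij, Ne.symm hij]; ring
        exact e _
      simp only [pderiv_del, del_add, Finset.sum_add_distrib, hc]
      have h3 : ∑ i, del j (del i (pderiv i g)) = del j (∑ i, del i (pderiv i g)) := by
        have : ∀ s : Finset (Fin K), ∑ i ∈ s, del j (del i (pderiv i g))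
            = del j (∑ i ∈ s, del i (pderiv i g)) := by
          intro s
          induction s using Finset.induction_on with
          | empty => simp [del_zero]
          | insert a s ha ih => rw [Finset.sum_insert ha, Finset.sum_insert ha, del_add, ih]
        exact this _
      rw [h3, ih hg, del_smul]
      rw [Finset.sum_eq_single j (by intro b _ hb; simp [Ne.symm hb, del_zero]) (by simp)]
      simp only [if_true]
      push_cast; rw [add_smul, one_smul, add_comm]

lemma energy {n : ℕ} {F : MvPolynomial (Fin K) ℝ} (hF : F ∈ Ch n) (G : MvPolynomial (Fin K) ℝ) :
    ∑ i, EE (pderiv i F * pderiv i G) = n * EE (F * G) := by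
  have h := number_op hF
  have : EE ((∑ i, del i (pderiv i F)) * G) = EE (((n : ℝ) • F) * G) := by rw [h]
  rw [Finset.sum_mul, EE_sum, smul_mul_assoc, EE_smul] at this
  rw [← this]
  exact Finset.sum_congr rfl fun i _ => (EE_del i _ _).symm

lemma chaos_le_Ch : ∀ m : ℕ, chaos K m ≤ Ch m := by
  intro m
  refine Submodule.span_le.2 ?_
  rintro _ ⟨k, hk, rfl⟩
  induction m generalizing k with
  | zero =>
    have : k = 0 := by ext i; simpa using (Finset.sum_eq_zero_iff.1 hk) i
    subst this
    exact Submodule.mem_span_singleton.2 ⟨1, by simp [hermiteProd]⟩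
  | succ n ih =>
    obtain ⟨i, hi⟩ : ∃ i, k i ≠ 0 := by
      by_contra h; push Not at h; simp [h] at hk
    obtain ⟨a, ha⟩ := Nat.exists_eq_succ_of_ne_zero hi
    let k' := Function.update k i a
    have hk' : ∑ j, k' j = n := by
      have h1 := Finset.sum_update_of_mem (Finset.mem_univ i) k a
      have h2 := Finset.add_sum_erase Finset.univ k (Finset.mem_univ i)
      simp only [k']
      rw [h1, Finset.sdiff_singleton_eq_erase]
      omega
    have h := del_mem (ih k' hk') i
    suffices hh : hermiteProd k = del i (hermiteProd k') by rw [hh]; exact h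
    have e1 : ∀ f : Fin K → ℕ, hermiteProd f =
        (Polynomial.aeval (X i : MvPolynomial (Fin K) ℝ) (Polynomial.hermite (f i))) *
        ∏ j ∈ {i}ᶜ, Polynomial.aeval (X j : MvPolynomial (Fin K) ℝ) (Polynomial.hermite (f j)) := by
      intro f; rw [hermiteProd, Fintype.prod_eq_mul_prod_compl i]
    have e2 : ∏ j ∈ {i}ᶜ, Polynomial.aeval (X j : MvPolynomial (Fin K) ℝ)
          (Polynomial.hermite (k' j)) =
        ∏ j ∈ {i}ᶜ, Polynomial.aeval (X j : MvPolynomial (Fin K) ℝ) (Polynomial.hermite (k j)) := by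
      refine Finset.prod_congr rfl fun j hj => ?_
      have : j ≠ i := by simpa using hj
      simp [k', this]
    have e3 : pderiv i (∏ j ∈ {i}ᶜ, Polynomial.aeval (X j : MvPolynomial (Fin K) ℝ)
        (Polynomial.hermite (k j))) = 0 := by
      refine Finset.prod_induction _ (fun p => pderiv i p = 0) ?_ (by simp) ?_
      · intro a b ha hb
        rw [Derivation.leibniz, ha, hb]; simp
      intro j hj
      have hji : j ≠ i := by simpa using hj
      have : pderiv i (Polynomial.aeval (X j : MvPolynomial (Fin K) ℝ)
        (Polynomial.hermite (k j))) = 0 := by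
        rw [Polynomial.aeval_eq_sum_range, map_sum]
        refine Finset.sum_eq_zero fun l _ => ?_
        rw [map_zsmul, Derivation.leibniz_pow, pderiv_X_of_ne hji]; simp
      exact this
    have e4 : ∀ p : Polynomial ℤ, pderiv i (Polynomial.aeval (X i : MvPolynomial (Fin K) ℝ) p)
        = Polynomial.aeval (X i : MvPolynomial (Fin K) ℝ) (Polynomial.derivative p) := by
      intro p
      induction p using Polynomial.induction_on' with
      | add p q hp hq => simp [hp, hq]
      | monomial n a =>
        simp [Polynomial.derivative_monomial, Polynomial.aeval_monomial]
        ring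
    rw [e1 k, e1 k', e2, ha, show k' i = a by simp [k'], del, Derivation.leibniz, e3, smul_zero,
      zero_add, smul_eq_mul, e4, Nat.succ_eq_add_one, Polynomial.hermite_succ, map_sub, map_mul,
      Polynomial.aeval_X]
    ring

end SC

namespace SC
variable {K : ℕ}

/-- four-argument functionals -/
abbrev Fun4 (K : ℕ) := MvPolynomial (Fin K) ℝ → MvPolynomial (Fin K) ℝ →
  MvPolynomial (Fin K) ℝ → MvPolynomial (Fin K) ℝ → ℝ

noncomputable def opA : Module.End ℝ (Fun4 K) where
  toFun Φ := fun F G F' G' => ∑ i, Φ (pderiv i F) G (pderiv i F') G'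
  map_add' Φ Ψ := by funext F G F' G'; simp [Finset.sum_add_distrib]
  map_smul' c Φ := by funext F G F' G'; simp [Finset.mul_sum]

noncomputable def opB : Module.End ℝ (Fun4 K) where
  toFun Φ := fun F G F' G' => ∑ i, Φ (pderiv i F) G F' (pderiv i G')
  map_add' Φ Ψ := by funext F G F' G'; simp [Finset.sum_add_distrib]
  map_smul' c Φ := by funext F G F' G'; simp [Finset.mul_sum]

noncomputable def opC : Module.End ℝ (Fun4 K) where
  toFun Φ := fun F G F' G' => ∑ i, Φ F (pderiv i G) (pderiv i F') G'
  map_add' Φ Ψ := by funext F G F' G'; simp [Finset.sum_add_distrib]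
  map_smul' c Φ := by funext F G F' G'; simp [Finset.mul_sum]

noncomputable def opD : Module.End ℝ (Fun4 K) where
  toFun Φ := fun F G F' G' => ∑ i, Φ F (pderiv i G) F' (pderiv i G')
  map_add' Φ Ψ := by funext F G F' G'; simp [Finset.sum_add_distrib]
  map_smul' c Φ := by funext F G F' G'; simp [Finset.mul_sum]

lemma opA_apply (Φ : Fun4 K) (F G F' G') :
    opA Φ F G F' G' = ∑ i, Φ (pderiv i F) G (pderiv i F') G' := rfl
lemma opB_apply (Φ : Fun4 K) (F G F' G') :
    opB Φ F G F' G' = ∑ i, Φ (pderiv i F) G F' (pderiv i G') := rfl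
lemma opC_apply (Φ : Fun4 K) (F G F' G') :
    opC Φ F G F' G' = ∑ i, Φ F (pderiv i G) (pderiv i F') G' := rfl
lemma opD_apply (Φ : Fun4 K) (F G F' G') :
    opD Φ F G F' G' = ∑ i, Φ F (pderiv i G) F' (pderiv i G') := rfl

lemma comm_AB : Commute (opA (K := K)) opB := by
  refine LinearMap.ext fun Φ => ?_
  funext F G F' G'
  simp only [Module.End.mul_apply, opA_apply, opB_apply]
  rw [Finset.sum_comm]
  exact Finset.sum_congr rfl fun i _ => Finset.sum_congr rfl fun j _ => by rw [pderiv_comm' i j]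
lemma comm_AC : Commute (opA (K := K)) opC := by
  refine LinearMap.ext fun Φ => ?_
  funext F G F' G'
  simp only [Module.End.mul_apply, opA_apply, opC_apply]
  rw [Finset.sum_comm]
  exact Finset.sum_congr rfl fun i _ => Finset.sum_congr rfl fun j _ => by rw [pderiv_comm' i j]
lemma comm_AD : Commute (opA (K := K)) opD := by
  refine LinearMap.ext fun Φ => ?_
  funext F G F' G'
  simp only [Module.End.mul_apply, opA_apply, opD_apply]
  rw [Finset.sum_comm]
lemma comm_BC : Commute (opB (K := K)) opC := by
  refine LinearMap.ext fun Φ => ?_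
  funext F G F' G'
  simp only [Module.End.mul_apply, opB_apply, opC_apply]
  rw [Finset.sum_comm]
lemma comm_BD : Commute (opB (K := K)) opD := by
  refine LinearMap.ext fun Φ => ?_
  funext F G F' G'
  simp only [Module.End.mul_apply, opB_apply, opD_apply]
  rw [Finset.sum_comm]
  exact Finset.sum_congr rfl fun i _ => Finset.sum_congr rfl fun j _ => by rw [pderiv_comm' i j]
lemma comm_CD : Commute (opC (K := K)) opD := by
  refine LinearMap.ext fun Φ => ?_
  funext F G F' G'
  simp only [Module.End.mul_apply, opC_apply, opD_apply]
  rw [Finset.sum_comm]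
  exact Finset.sum_congr rfl fun i _ => Finset.sum_congr rfl fun j _ => by rw [pderiv_comm' i j]

/-- base functional -/
noncomputable def v0 : Fun4 K := fun F G F' G' => EE (F * G) * EE (F' * G')

/-- contractions -/
noncomputable def N4 (r : ℕ) : Fun4 K := ((opA * opD : Module.End ℝ (Fun4 K)) ^ r) v0

lemma AD_apply (Φ : Fun4 K) (F G F' G') :
    (opA * opD : Module.End ℝ (Fun4 K)) Φ F G F' G' =
      ∑ i, ∑ j, Φ (pderiv i F) (pderiv j G) (pderiv i F') (pderiv j G') := by
  simp only [Module.End.mul_apply, opA_apply, opD_apply]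

lemma N4_zero (F G F' G' : MvPolynomial (Fin K) ℝ) :
    N4 0 F G F' G' = EE (F * G) * EE (F' * G') := rfl

lemma N4_succ (r : ℕ) (F G F' G' : MvPolynomial (Fin K) ℝ) :
    N4 (r + 1) F G F' G' =
      ∑ i, ∑ j, N4 r (pderiv i F) (pderiv j G) (pderiv i F') (pderiv j G') := by
  rw [N4, pow_succ', Module.End.mul_apply, AD_apply]; rfl

lemma N4_nonneg (r : ℕ) : ∀ F G : MvPolynomial (Fin K) ℝ, 0 ≤ N4 r F G F G := by
  induction r with
  | zero => intro F G; rw [N4_zero]; exact mul_self_nonneg _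
  | succ r ih =>
    intro F G; rw [N4_succ]
    exact Finset.sum_nonneg fun i _ => Finset.sum_nonneg fun j _ => ih _ _

lemma N4_cs (r : ℕ) : ∀ F G F' G' : MvPolynomial (Fin K) ℝ,
    2 * N4 r F G F' G' ≤ N4 r F G F G + N4 r F' G' F' G' := by
  induction r with
  | zero =>
    intro F G F' G'; simp only [N4_zero]
    nlinarith [sq_nonneg (EE (F * G) - EE (F' * G'))]
  | succ r ih =>
    intro F G F' G'
    simp only [N4_succ, Finset.mul_sum, ← Finset.sum_add_distrib]
    exact Finset.sum_le_sum fun i _ => Finset.sum_le_sum fun j _ => ih _ _ _ _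

lemma N4_add1 (r : ℕ) : ∀ a b G F' G' : MvPolynomial (Fin K) ℝ,
    N4 r (a + b) G F' G' = N4 r a G F' G' + N4 r b G F' G' := by
  induction r with
  | zero => intros; simp only [N4_zero, add_mul, EE_add]
  | succ r ih => intros; simp only [N4_succ, map_add, ih, Finset.sum_add_distrib]
lemma N4_smul1 (r : ℕ) : ∀ (c : ℝ) (F G F' G' : MvPolynomial (Fin K) ℝ),
    N4 r (c • F) G F' G' = c * N4 r F G F' G' := by
  induction r with
  | zero => intros; simp only [N4_zero, smul_mul_assoc, EE_smul, mul_assoc]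
  | succ r ih => intros; simp only [N4_succ, Derivation.map_smul, ih, Finset.mul_sum]

/-- exchange of the two pairs -/
lemma N4_swap (r : ℕ) : ∀ F G F' G' : MvPolynomial (Fin K) ℝ,
    N4 r F G F' G' = N4 r F' G' F G := by
  induction r with
  | zero => intros; simp only [N4_zero]; ring
  | succ r ih =>
    intro F G F' G'; simp only [N4_succ]
    exact Finset.sum_congr rfl fun i _ => Finset.sum_congr rfl fun j _ => ih _ _ _ _

lemma N4_swap' (r : ℕ) : ∀ F G F' G' : MvPolynomial (Fin K) ℝ,
    N4 r F G F' G' = N4 r G F G' F' := by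
  induction r with
  | zero => intros F G F' G'; simp only [N4_zero]; rw [mul_comm F, mul_comm F']
  | succ r ih =>
    intro F G F' G'; simp only [N4_succ]
    rw [Finset.sum_comm]
    exact Finset.sum_congr rfl fun i _ => Finset.sum_congr rfl fun j _ => ih _ _ _ _

lemma N4_zero1 (r : ℕ) (G F' G' : MvPolynomial (Fin K) ℝ) : N4 r 0 G F' G' = 0 := by
  have := N4_smul1 r 0 0 G F' G'; simpa using this

lemma N4_sum1 (r : ℕ) {ι : Type*} (s : Finset ι) (f : ι → MvPolynomial (Fin K) ℝ) (G F' G') :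
    N4 r (∑ i ∈ s, f i) G F' G' = ∑ i ∈ s, N4 r (f i) G F' G' := by
  classical
  induction s using Finset.induction_on with
  | empty => simp [N4_zero1]
  | insert a s ha ih => rw [Finset.sum_insert ha, Finset.sum_insert ha, N4_add1, ih]

lemma N4_sum2 (r : ℕ) {ι : Type*} (s : Finset ι) (f : ι → MvPolynomial (Fin K) ℝ) (G F' G') :
    N4 r G (∑ i ∈ s, f i) F' G' = ∑ i ∈ s, N4 r G (f i) F' G' := by
  rw [N4_swap', N4_sum1]; exact Finset.sum_congr rfl fun i _ => N4_swap' _ _ _ _ _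
lemma N4_sum3 (r : ℕ) {ι : Type*} (s : Finset ι) (f : ι → MvPolynomial (Fin K) ℝ) (G F' G') :
    N4 r F' G' (∑ i ∈ s, f i) G = ∑ i ∈ s, N4 r F' G' (f i) G := by
  rw [N4_swap, N4_sum1]; exact Finset.sum_congr rfl fun i _ => N4_swap _ _ _ _ _
lemma N4_sum4 (r : ℕ) {ι : Type*} (s : Finset ι) (f : ι → MvPolynomial (Fin K) ℝ) (G F' G') :
    N4 r F' G' G (∑ i ∈ s, f i) = ∑ i ∈ s, N4 r F' G' G (f i) := by
  rw [N4_swap, N4_sum2]; exact Finset.sum_congr rfl fun i _ => N4_swap _ _ _ _ _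
lemma N4_smul2 (r : ℕ) (c : ℝ) (F G F' G' : MvPolynomial (Fin K) ℝ) :
    N4 r F (c • G) F' G' = c * N4 r F G F' G' := by
  rw [N4_swap', N4_smul1, N4_swap']
lemma N4_smul3 (r : ℕ) (c : ℝ) (F G F' G' : MvPolynomial (Fin K) ℝ) :
    N4 r F G (c • F') G' = c * N4 r F G F' G' := by
  rw [N4_swap, N4_smul1, N4_swap]
lemma N4_smul4 (r : ℕ) (c : ℝ) (F G F' G' : MvPolynomial (Fin K) ℝ) :
    N4 r F G F' (c • G') = c * N4 r F G F' G' := by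
  rw [N4_swap, N4_smul2, N4_swap]

lemma sum_swap4 {α β γ δ : Type*} [Fintype α] [Fintype β] [Fintype γ] [Fintype δ]
    (f : α → β → γ → δ → ℝ) :
    ∑ k, ∑ l, ∑ i, ∑ j, f k l i j = ∑ i, ∑ j, ∑ k, ∑ l, f k l i j := by
  calc ∑ k, ∑ l, ∑ i, ∑ j, f k l i j = ∑ k, ∑ i, ∑ l, ∑ j, f k l i j :=
        Finset.sum_congr rfl fun k _ => Finset.sum_comm
    _ = ∑ i, ∑ k, ∑ l, ∑ j, f k l i j := Finset.sum_comm
    _ = ∑ i, ∑ k, ∑ j, ∑ l, f k l i j :=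
        Finset.sum_congr rfl fun k _ => Finset.sum_congr rfl fun j _ => Finset.sum_comm
    _ = ∑ i, ∑ j, ∑ k, ∑ l, f k l i j := Finset.sum_congr rfl fun k _ => Finset.sum_comm

/-- trace identity -/
lemma N4_trace : ∀ (r n : ℕ) {F G F' G' : MvPolynomial (Fin K) ℝ}, F ∈ Ch (n + r) →
    F' ∈ Ch (n + r) →
    ∑ k, ∑ l, N4 r (pderiv k F) (pderiv k G) (pderiv l F') (pderiv l G') =
      (n : ℝ) ^ 2 * N4 r F G F' G' := by
  intro r
  induction r with
  | zero =>
    intro n F G F' G' hF hF'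
    simp only [N4_zero, ← Finset.mul_sum, ← Finset.sum_mul]
    have h1 := energy hF G
    have h2 := energy hF' G'
    simp only [add_zero] at h1 h2
    rw [h1, h2]; ring
  | succ r ih =>
    intro n F G F' G' hF hF'
    simp only [N4_succ]
    have : ∀ (i j : Fin K), ∑ k, ∑ l, N4 r (pderiv i (pderiv k F)) (pderiv j (pderiv k G))
        (pderiv i (pderiv l F')) (pderiv j (pderiv l G')) =
        (n : ℝ) ^ 2 * N4 r (pderiv i F) (pderiv j G) (pderiv i F') (pderiv j G') := by
      intro i j
      rw [← ih n (F := pderiv i F) (F' := pderiv i F') (pderiv_mem_Ch hF i) (pderiv_mem_Ch hF' i)]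
      refine Finset.sum_congr rfl fun k _ => Finset.sum_congr rfl fun l _ => ?_
      rw [pderiv_comm' i, pderiv_comm' j, pderiv_comm' i l, pderiv_comm' j l]
    calc _ = ∑ i, ∑ j, ∑ k, ∑ l, N4 r (pderiv i (pderiv k F)) (pderiv j (pderiv k G))
              (pderiv i (pderiv l F')) (pderiv j (pderiv l G')) := by
          exact sum_swap4 _
      _ = _ := by
          simp only [this, Finset.mul_sum]

end SC

namespace SC
variable {K : ℕ}

/-- killed by `n` derivatives -/
def Kil : ℕ → MvPolynomial (Fin K) ℝ → Prop
  | 0, F => F = 0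
  | n + 1, F => ∀ i, Kil n (pderiv i F)

lemma Kil_zero : ∀ n, Kil n (0 : MvPolynomial (Fin K) ℝ)
  | 0 => rfl
  | n + 1 => fun i => by rw [map_zero]; exact Kil_zero n

lemma Kil_succ {n : ℕ} : ∀ {F : MvPolynomial (Fin K) ℝ}, Kil n F → Kil (n + 1) F := by
  induction n with
  | zero => intro F h; rw [show F = 0 from h]; exact Kil_zero _
  | succ n ih => intro F h i; exact ih (h i)

lemma Kil_mono {n n' : ℕ} (h : n ≤ n') {F : MvPolynomial (Fin K) ℝ} (hF : Kil n F) : Kil n' F := by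
  induction n', h using Nat.le_induction with
  | base => exact hF
  | succ n' _ ih => exact Kil_succ ih

lemma Kil_add {n : ℕ} : ∀ {F G : MvPolynomial (Fin K) ℝ}, Kil n F → Kil n G → Kil n (F + G) := by
  induction n with
  | zero => intro F G hF hG; rw [show F = 0 from hF, show G = 0 from hG]; exact add_zero 0
  | succ n ih => intro F G hF hG i; rw [map_add]; exact ih (hF i) (hG i)

lemma Kil_Ch {n : ℕ} : ∀ {F : MvPolynomial (Fin K) ℝ}, F ∈ Ch n → Kil (n + 1) F := by
  induction n with
  | zero => intro F hF i; exact pderiv_Ch_zero hF i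
  | succ n ih => intro F hF i; exact ih (pderiv_mem_Ch hF i)

/-- sums of chaoses up to `d` -/
noncomputable def Wd : ℕ → Submodule ℝ (MvPolynomial (Fin K) ℝ)
  | 0 => Ch 0
  | d + 1 => Wd d ⊔ Ch (d + 1)

lemma Ch_le_Wd : ∀ d, Ch (K := K) d ≤ Wd d
  | 0 => le_rfl
  | _ + 1 => le_sup_right

lemma Wd_le_succ (d : ℕ) : Wd (K := K) d ≤ Wd (d + 1) := le_sup_left

lemma Wd_mono : Monotone (Wd (K := K)) := monotone_nat_of_le_succ Wd_le_succ

lemma Kil_Wd : ∀ (d : ℕ) {F : MvPolynomial (Fin K) ℝ}, F ∈ Wd d → Kil (d + 1) F := by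
  intro d
  induction d with
  | zero => intro F hF; exact Kil_Ch hF
  | succ d ih =>
    intro F hF
    obtain ⟨a, ha, b, hb, rfl⟩ := Submodule.mem_sup.1 hF
    exact Kil_add (Kil_succ (ih ha)) (Kil_Ch hb)

lemma X_mul_Ch (i : Fin K) {d : ℕ} {g : MvPolynomial (Fin K) ℝ} (hg : g ∈ Ch d) :
    X i * g ∈ Wd (d + 1) := by
  have e : X i * g = del i g + pderiv i g := by rw [del]; ring
  rw [e]
  refine add_mem (Ch_le_Wd _ (del_mem hg i)) ?_
  cases d with
  | zero => rw [pderiv_Ch_zero hg]; exact zero_mem _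
  | succ d => exact Wd_mono (by omega) (Ch_le_Wd _ (pderiv_mem_Ch hg i))

lemma X_mul_Wd (i : Fin K) : ∀ {d : ℕ} {g : MvPolynomial (Fin K) ℝ}, g ∈ Wd d →
    X i * g ∈ Wd (d + 1) := by
  intro d
  induction d with
  | zero => intro g hg; exact X_mul_Ch i hg
  | succ d ih =>
    intro g hg
    obtain ⟨a, ha, b, hb, rfl⟩ := Submodule.mem_sup.1 hg
    rw [mul_add]
    exact add_mem (Wd_mono (by omega) (ih ha)) (X_mul_Ch i hb)

lemma Ch_mul_Wd : ∀ (m j : ℕ) {f g : MvPolynomial (Fin K) ℝ}, f ∈ Ch m → g ∈ Wd j →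
    f * g ∈ Wd (m + j) := by
  intro m
  induction m using Nat.strong_induction_on with
  | _ m ih =>
    intro j f g hf hg
    cases m with
    | zero =>
      obtain ⟨c, rfl⟩ := mem_Ch_zero hf
      rw [← smul_eq_C_mul, zero_add]
      exact Submodule.smul_mem _ _ hg
    | succ m =>
      refine Ch_succ_induction (p := fun f => f * g ∈ Wd (m + 1 + j)) (by simp) ?_ ?_ ?_ hf
      · intro a b ha hb; rw [add_mul]; exact add_mem ha hb
      · intro c a ha; rw [smul_mul_assoc]; exact Submodule.smul_mem _ _ ha
      · intro i f hf
        rw [del, sub_mul, mul_assoc]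
        refine sub_mem ?_ ?_
        · have := X_mul_Wd i (ih m (by omega) j hf hg)
          rwa [show m + 1 + j = m + j + 1 by ring]
        · cases m with
          | zero => rw [pderiv_Ch_zero hf, zero_mul]; exact zero_mem _
          | succ m =>
            exact Wd_mono (by omega) (ih m (by omega) j (pderiv_mem_Ch hf i) hg)

lemma orth_Ch {j n : ℕ} (h : j < n) {F G : MvPolynomial (Fin K) ℝ} (hF : F ∈ Ch j)
    (hG : G ∈ Ch n) : EE (F * G) = 0 := by
  have h1 := energy hF G
  have h2 := energy hG F
  have h3 : ∑ i, EE (pderiv i F * pderiv i G) = ∑ i, EE (pderiv i G * pderiv i F) :=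
    Finset.sum_congr rfl fun i _ => by rw [mul_comm]
  rw [h1, h2, mul_comm G F] at h3
  have h4 : ((j : ℝ) - n) * EE (F * G) = 0 := by linarith
  have h5 : (j : ℝ) < n := by exact_mod_cast h
  rcases mul_eq_zero.1 h4 with h6 | h6
  · linarith
  · exact h6

lemma orth_Wd : ∀ {d n : ℕ} (_ : d < n) {F G : MvPolynomial (Fin K) ℝ} (_ : F ∈ Wd d)
    (_ : G ∈ Ch n), EE (F * G) = 0 := by
  intro d
  induction d with
  | zero => intro n h F G hF hG; exact orth_Ch h hF hG
  | succ d ih =>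
    intro n h F G hF hG
    obtain ⟨a, ha, b, hb, rfl⟩ := Submodule.mem_sup.1 hF
    rw [add_mul, EE_add, ih (by omega) ha hG, orth_Ch h hb hG, add_zero]

lemma one_mem_Ch : (1 : MvPolynomial (Fin K) ℝ) ∈ Ch 0 := Submodule.mem_span_singleton_self 1

lemma EE_Ch {n : ℕ} (hn : 0 < n) {F : MvPolynomial (Fin K) ℝ} (hF : F ∈ Ch n) : EE F = 0 := by
  have := orth_Ch hn one_mem_Ch hF
  simpa using this

/-- iterated gradient pairing -/
noncomputable def ww : ℕ → MvPolynomial (Fin K) ℝ → MvPolynomial (Fin K) ℝ → ℝ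
  | 0, Q, Q' => EE Q * EE Q'
  | d + 1, Q, Q' => ∑ i, ww d (pderiv i Q) (pderiv i Q')

lemma ww_succ (d : ℕ) (Q Q' : MvPolynomial (Fin K) ℝ) :
    ww (d + 1) Q Q' = ∑ i, ww d (pderiv i Q) (pderiv i Q') := rfl

lemma ww_comm : ∀ (d : ℕ) (Q Q' : MvPolynomial (Fin K) ℝ), ww d Q Q' = ww d Q' Q := by
  intro d
  induction d with
  | zero => intro Q Q'; simp only [ww]; ring
  | succ d ih => intro Q Q'; simp only [ww_succ]; exact Finset.sum_congr rfl fun i _ => ih _ _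

lemma ww_add : ∀ (d : ℕ) (a b Q' : MvPolynomial (Fin K) ℝ),
    ww d (a + b) Q' = ww d a Q' + ww d b Q' := by
  intro d
  induction d with
  | zero => intro a b Q'; simp only [ww, EE_add]; ring
  | succ d ih => intro a b Q'; simp only [ww_succ, map_add, ih, Finset.sum_add_distrib]

lemma ww_add' (d : ℕ) (a b Q' : MvPolynomial (Fin K) ℝ) :
    ww d Q' (a + b) = ww d Q' a + ww d Q' b := by
  rw [ww_comm, ww_add, ww_comm d a, ww_comm d b]

lemma ww_Kil : ∀ (d : ℕ) {Q : MvPolynomial (Fin K) ℝ} (Q' : MvPolynomial (Fin K) ℝ), Kil d Q →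
    ww d Q Q' = 0 := by
  intro d
  induction d with
  | zero => intro Q Q' h; rw [show Q = 0 from h, ww, EE_zero, zero_mul]
  | succ d ih => intro Q Q' h; rw [ww_succ]; exact Finset.sum_eq_zero fun i _ => ih _ (h i)

lemma ww_Ch : ∀ (d : ℕ) {F G : MvPolynomial (Fin K) ℝ}, F ∈ Ch d → G ∈ Ch d →
    ww d F G = d.factorial * EE (F * G) := by
  intro d
  induction d with
  | zero =>
    intro F G hF hG
    obtain ⟨c, rfl⟩ := mem_Ch_zero hF
    obtain ⟨c', rfl⟩ := mem_Ch_zero hG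
    rw [ww, EE_C_mul, EE_C, EE_C]; simp
  | succ d ih =>
    intro F G hF hG
    rw [ww_succ, Finset.sum_congr rfl fun i _ => ih (pderiv_mem_Ch hF i) (pderiv_mem_Ch hG i),
      ← Finset.mul_sum, energy hF, Nat.factorial_succ]
    push_cast; ring

lemma EE_sq_le (L : MvPolynomial (Fin K) ℝ) : (EE L) ^ 2 ≤ EE (L * L) := by
  have h := EE_sq_nonneg (L - C (EE L))
  have e : (L - C (EE L)) * (L - C (EE L)) = L * L - C (2 * EE L) * L + C (EE L ^ 2) := by
    simp only [map_mul, map_pow, map_ofNat]; ring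
  rw [e, EE_add, EE_sub, EE_C_mul, EE_C] at h
  nlinarith

lemma bessel (d : ℕ) {Q : MvPolynomial (Fin K) ℝ} (hQ : Q ∈ Wd (d + 1)) :
    (EE Q) ^ 2 + ww (d + 1) Q Q / (d + 1).factorial ≤ EE (Q * Q) := by
  obtain ⟨L, hL, T, hT, rfl⟩ := Submodule.mem_sup.1 hQ
  have h1 : EE (L * T) = 0 := orth_Wd (Nat.lt_succ_self d) hL hT
  have h2 : EE T = 0 := EE_Ch (Nat.succ_pos d) hT
  have h3 : ww (d + 1) (L + T) (L + T) = (d + 1).factorial * EE (T * T) := by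
    rw [ww_add, ww_Kil _ _ (Kil_Wd d hL), ww_add', ww_comm _ T L, ww_Kil _ _ (Kil_Wd d hL),
      ww_Ch _ hT hT]; ring
  have h4 : EE ((L + T) * (L + T)) = EE (L * L) + EE (T * T) := by
    rw [show (L + T) * (L + T) = L * L + L * T + L * T + T * T by ring]
    simp only [EE_add, h1]; ring
  rw [h3, h4, EE_add, h2, add_zero, mul_div_cancel_left₀ _ (by positivity)]
  linarith [EE_sq_le L]

lemma ww_mul : ∀ (d : ℕ) (F G F' G' : MvPolynomial (Fin K) ℝ),
    ww d (F * G) (F' * G') =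
      (((opA + opD) + (opB + opC) : Module.End ℝ (Fun4 K)) ^ d) v0 F G F' G' := by
  intro d
  induction d with
  | zero => intro F G F' G'; rfl
  | succ d ih =>
    intro F G F' G'
    rw [pow_succ', Module.End.mul_apply]
    simp only [LinearMap.add_apply, Pi.add_apply, opA_apply, opB_apply, opC_apply, opD_apply, ← ih]
    simp only [ww_succ, Derivation.leibniz, smul_eq_mul, ww_add, ww_add', Finset.sum_add_distrib]
    simp only [mul_comm]
    ring

/-- vanishing orders -/
def Van (n1 n2 n3 n4 : ℕ) (Φ : Fun4 K) : Prop := ∀ F G F' G',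
  (Kil n1 F ∨ Kil n2 G ∨ Kil n3 F' ∨ Kil n4 G') → Φ F G F' G' = 0

lemma Van_v0 : Van 0 0 0 0 (v0 (K := K)) := by
  rintro F G F' G' (h | h | h | h)
  · rw [show F = 0 from h]; simp [v0, EE_zero]
  · rw [show G = 0 from h]; simp [v0, EE_zero]
  · rw [show F' = 0 from h]; simp [v0, EE_zero]
  · rw [show G' = 0 from h]; simp [v0, EE_zero]

lemma VanA (a : ℕ) {n1 n2 n3 n4 : ℕ} {Φ : Fun4 K} (h : Van n1 n2 n3 n4 Φ) :
    Van (n1 + a) n2 (n3 + a) n4 ((opA ^ a) Φ) := by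
  induction a with
  | zero => exact h
  | succ a ih =>
    intro F G F' G' hh
    rw [pow_succ', Module.End.mul_apply, opA_apply]
    refine Finset.sum_eq_zero fun i _ => ih _ _ _ _ ?_
    rcases hh with hh | hh | hh | hh
    exacts [Or.inl (hh i), Or.inr (Or.inl hh), Or.inr (Or.inr (Or.inl (hh i))),
      Or.inr (Or.inr (Or.inr hh))]
lemma VanB (a : ℕ) {n1 n2 n3 n4 : ℕ} {Φ : Fun4 K} (h : Van n1 n2 n3 n4 Φ) :
    Van (n1 + a) n2 n3 (n4 + a) ((opB ^ a) Φ) := by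
  induction a with
  | zero => exact h
  | succ a ih =>
    intro F G F' G' hh
    rw [pow_succ', Module.End.mul_apply, opB_apply]
    refine Finset.sum_eq_zero fun i _ => ih _ _ _ _ ?_
    rcases hh with hh | hh | hh | hh
    exacts [Or.inl (hh i), Or.inr (Or.inl hh), Or.inr (Or.inr (Or.inl hh)),
      Or.inr (Or.inr (Or.inr (hh i)))]
lemma VanC (a : ℕ) {n1 n2 n3 n4 : ℕ} {Φ : Fun4 K} (h : Van n1 n2 n3 n4 Φ) :
    Van n1 (n2 + a) (n3 + a) n4 ((opC ^ a) Φ) := by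
  induction a with
  | zero => exact h
  | succ a ih =>
    intro F G F' G' hh
    rw [pow_succ', Module.End.mul_apply, opC_apply]
    refine Finset.sum_eq_zero fun i _ => ih _ _ _ _ ?_
    rcases hh with hh | hh | hh | hh
    exacts [Or.inl hh, Or.inr (Or.inl (hh i)), Or.inr (Or.inr (Or.inl (hh i))),
      Or.inr (Or.inr (Or.inr hh))]
lemma VanD (a : ℕ) {n1 n2 n3 n4 : ℕ} {Φ : Fun4 K} (h : Van n1 n2 n3 n4 Φ) :
    Van n1 (n2 + a) n3 (n4 + a) ((opD ^ a) Φ) := by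
  induction a with
  | zero => exact h
  | succ a ih =>
    intro F G F' G' hh
    rw [pow_succ', Module.End.mul_apply, opD_apply]
    refine Finset.sum_eq_zero fun i _ => ih _ _ _ _ ?_
    rcases hh with hh | hh | hh | hh
    exacts [Or.inl hh, Or.inr (Or.inl (hh i)), Or.inr (Or.inr (Or.inl hh)),
      Or.inr (Or.inr (Or.inr (hh i)))]

lemma BC_Ch : ∀ (j : ℕ) {F G F' G' : MvPolynomial (Fin K) ℝ}, F ∈ Ch j → G ∈ Ch j → F' ∈ Ch j →
    G' ∈ Ch j → ((opB * opC : Module.End ℝ (Fun4 K)) ^ j) v0 F G F' G' =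
      (j.factorial : ℝ) ^ 2 * (EE (F * G') * EE (G * F')) := by
  intro j
  induction j with
  | zero =>
    intro F G F' G' hF hG hF' hG'
    obtain ⟨a, rfl⟩ := mem_Ch_zero hF
    obtain ⟨b, rfl⟩ := mem_Ch_zero hG
    obtain ⟨c, rfl⟩ := mem_Ch_zero hF'
    obtain ⟨d, rfl⟩ := mem_Ch_zero hG'
    simp only [pow_zero, Module.End.one_apply, v0, EE_C_mul, EE_C, Nat.factorial]; push_cast; ring
  | succ j ih =>
    intro F G F' G' hF hG hF' hG'
    rw [pow_succ', Module.End.mul_apply, Module.End.mul_apply]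
    simp only [opB_apply, opC_apply]
    calc _ = ∑ i, ∑ l, (j.factorial : ℝ) ^ 2 *
            (EE (pderiv i F * pderiv i G') * EE (pderiv l G * pderiv l F')) :=
          Finset.sum_congr rfl fun i _ => Finset.sum_congr rfl fun l _ =>
            ih (pderiv_mem_Ch hF i) (pderiv_mem_Ch hG l) (pderiv_mem_Ch hF' l) (pderiv_mem_Ch hG' i)
      _ = (j.factorial : ℝ) ^ 2 * ((∑ i, EE (pderiv i F * pderiv i G')) *
            ∑ l, EE (pderiv l G * pderiv l F')) := by
          rw [Finset.sum_mul_sum, Finset.mul_sum]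
          exact Finset.sum_congr rfl fun i _ => by rw [Finset.mul_sum]
      _ = _ := by
          rw [energy hF, energy hG, Nat.factorial_succ]; push_cast; ring

lemma AD_Ch : ∀ (j : ℕ) {F G F' G' : MvPolynomial (Fin K) ℝ}, F ∈ Ch j → G ∈ Ch j → F' ∈ Ch j →
    G' ∈ Ch j → N4 j F G F' G' =
      (j.factorial : ℝ) ^ 2 * (EE (F * F') * EE (G * G')) := by
  intro j
  induction j with
  | zero =>
    intro F G F' G' hF hG hF' hG'
    obtain ⟨a, rfl⟩ := mem_Ch_zero hF
    obtain ⟨b, rfl⟩ := mem_Ch_zero hG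
    obtain ⟨c, rfl⟩ := mem_Ch_zero hF'
    obtain ⟨d, rfl⟩ := mem_Ch_zero hG'
    simp only [N4_zero, EE_C_mul, EE_C, Nat.factorial]; push_cast; ring
  | succ j ih =>
    intro F G F' G' hF hG hF' hG'
    rw [N4_succ]
    calc _ = ∑ i, ∑ l, (j.factorial : ℝ) ^ 2 *
            (EE (pderiv i F * pderiv i F') * EE (pderiv l G * pderiv l G')) :=
          Finset.sum_congr rfl fun i _ => Finset.sum_congr rfl fun l _ =>
            ih (pderiv_mem_Ch hF i) (pderiv_mem_Ch hG l) (pderiv_mem_Ch hF' i) (pderiv_mem_Ch hG' l)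
      _ = (j.factorial : ℝ) ^ 2 * ((∑ i, EE (pderiv i F * pderiv i F')) *
            ∑ l, EE (pderiv l G * pderiv l G')) := by
          rw [Finset.sum_mul_sum, Finset.mul_sum]
          exact Finset.sum_congr rfl fun i _ => by rw [Finset.mul_sum]
      _ = _ := by
          rw [energy hF, energy hG, Nat.factorial_succ]; push_cast; ring

lemma AD_BC : ∀ (a c : ℕ) {F G F' G' : MvPolynomial (Fin K) ℝ}, F ∈ Ch (c + a) → G ∈ Ch (c + a) →
    F' ∈ Ch (c + a) → G' ∈ Ch (c + a) →
    ((opA * opD : Module.End ℝ (Fun4 K)) ^ a) (((opB * opC : Module.End ℝ (Fun4 K)) ^ c) v0)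
      F G F' G' = (c.factorial : ℝ) ^ 2 * N4 a F G' F' G := by
  intro a
  induction a with
  | zero =>
    intro c F G F' G' hF hG hF' hG'
    rw [pow_zero, Module.End.one_apply, BC_Ch c hF hG hF' hG', N4_zero, mul_comm G F']
  | succ a ih =>
    intro c F G F' G' hF hG hF' hG'
    rw [pow_succ', Module.End.mul_apply, AD_apply, N4_succ, Finset.mul_sum]
    refine Finset.sum_congr rfl fun i _ => ?_
    rw [Finset.mul_sum]
    exact Finset.sum_congr rfl fun l _ => ih c (pderiv_mem_Ch hF i) (pderiv_mem_Ch hG l)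
      (pderiv_mem_Ch hF' i) (pderiv_mem_Ch hG' l)

/-- a term of the expansion -/
noncomputable def tt (F : MvPolynomial (Fin K) ℝ) (a b c e : ℕ) : ℝ :=
  ((opA ^ a * opD ^ b * (opB ^ c * opC ^ e) : Module.End ℝ (Fun4 K)) v0) F F F F

lemma tt_diag {m : ℕ} {F : MvPolynomial (Fin K) ℝ} (hF : F ∈ Ch m) {a c : ℕ} (h : c + a = m) :
    tt F a a c c = (c.factorial : ℝ) ^ 2 * N4 a F F F F := by
  subst h
  rw [tt, ← comm_AD.mul_pow, ← comm_BC.mul_pow, Module.End.mul_apply, AD_BC a c hF hF hF hF]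

lemma tt_nonneg {m : ℕ} {F : MvPolynomial (Fin K) ℝ} (hF : F ∈ Ch m) {a b c e : ℕ}
    (h : a + b + (c + e) = 2 * m) : 0 ≤ tt F a b c e := by
  by_cases hd : a = b ∧ c = e
  · obtain ⟨rfl, rfl⟩ := hd
    rw [tt_diag hF (by omega)]
    exact mul_nonneg (by positivity) (N4_nonneg _ _ _)
  · have hv := VanA a (VanD b (VanB c (VanC e (Van_v0 (K := K)))))
    refine le_of_eq (Eq.symm ?_)
    rw [tt]
    simp only [Module.End.mul_apply]
    apply hv
    have hk := Kil_Ch hF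
    by_cases h1 : m + 1 ≤ 0 + c + a
    · exact Or.inl (Kil_mono h1 hk)
    by_cases h2 : m + 1 ≤ 0 + e + b
    · exact Or.inr (Or.inl (Kil_mono h2 hk))
    by_cases h3 : m + 1 ≤ 0 + e + a
    · exact Or.inr (Or.inr (Or.inl (Kil_mono h3 hk)))
    by_cases h4 : m + 1 ≤ 0 + c + b
    · exact Or.inr (Or.inr (Or.inr (Kil_mono h4 hk)))
    omega

lemma end_nat (T : Module.End ℝ (Fun4 K)) (n : ℕ) (Φ : Fun4 K) (F G F' G') :
    (T * (n : Module.End ℝ (Fun4 K))) Φ F G F' G' = n * T Φ F G F' G' := by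
  rw [← nsmul_eq_mul', LinearMap.smul_apply, Pi.smul_apply, Pi.smul_apply, Pi.smul_apply,
    Pi.smul_apply, nsmul_eq_mul]

lemma ww_expand (n : ℕ) (F : MvPolynomial (Fin K) ℝ) :
    ww n (F * F) (F * F) = ∑ j ∈ Finset.range (n + 1), (n.choose j : ℝ) *
      ∑ a ∈ Finset.range (j + 1), (j.choose a : ℝ) *
        ∑ c ∈ Finset.range (n - j + 1), ((n - j).choose c : ℝ) * tt F a (j - a) c (n - j - c) := by
  have hc : Commute (opA + opD : Module.End ℝ (Fun4 K)) (opB + opC) :=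
    ((comm_AB.add_right comm_AC)).add_left ((comm_BD.symm.add_right comm_CD.symm))
  rw [ww_mul, hc.add_pow]
  simp only [comm_AD.add_pow, comm_BC.add_pow]
  simp only [LinearMap.sum_apply, Finset.sum_apply]
  refine Finset.sum_congr rfl fun j _ => ?_
  rw [end_nat, Finset.sum_mul]
  congr 1
  simp only [LinearMap.sum_apply, Finset.sum_apply]
  refine Finset.sum_congr rfl fun a _ => ?_
  rw [mul_assoc, (Nat.cast_commute (j.choose a) _).eq, ← mul_assoc, end_nat, Finset.mul_sum]
  congr 1
  simp only [LinearMap.sum_apply, Finset.sum_apply]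
  refine Finset.sum_congr rfl fun c _ => ?_
  rw [← mul_assoc, end_nat]
  rfl

lemma fourth {m r : ℕ} (hr1 : 1 ≤ r) (hr2 : r < m) {F : MvPolynomial (Fin K) ℝ} (hF : F ∈ Ch m) :
    3 * EE (F * F) ^ 2 + N4 r F F F F / (r.factorial : ℝ) ^ 2 ≤ EE (F * F * (F * F)) := by
  have hW : F * F ∈ Wd (2 * m - 1 + 1) := by
    rw [show 2 * m - 1 + 1 = m + m by omega]; exact Ch_mul_Wd m m hF (Ch_le_Wd m hF)
  have hb := bessel _ hW
  rw [show 2 * m - 1 + 1 = 2 * m by omega, ww_expand] at hb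
  set g : ℕ → ℝ := fun j => ((2 * m).choose j : ℝ) *
      ∑ a ∈ Finset.range (j + 1), (j.choose a : ℝ) *
        ∑ c ∈ Finset.range (2 * m - j + 1), ((2 * m - j).choose c : ℝ) *
          tt F a (j - a) c (2 * m - j - c) with hg
  have ht : ∀ j ∈ Finset.range (2 * m + 1), ∀ a ∈ Finset.range (j + 1),
      ∀ c ∈ Finset.range (2 * m - j + 1), 0 ≤ tt F a (j - a) c (2 * m - j - c) := by
    intro j hj a ha c hc
    simp only [Finset.mem_range] at hj ha hc
    exact tt_nonneg hF (by omega)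
  have hg0 : ∀ j ∈ Finset.range (2 * m + 1), 0 ≤ g j := by
    intro j hj
    refine mul_nonneg (by positivity) (Finset.sum_nonneg fun a ha => mul_nonneg (by positivity)
      (Finset.sum_nonneg fun c hc => mul_nonneg (by positivity) (ht j hj a ha c hc)))
  have hk : ∀ k ≤ m, ((2 * m).factorial : ℝ) * (N4 k F F F F / (k.factorial : ℝ) ^ 2) ≤ g (2 * k) := by
    intro k hk
    have hj : 2 * k ∈ Finset.range (2 * m + 1) := by simp; omega
    have hka : k ∈ Finset.range (2 * k + 1) := by simp; omega
    have hkc : m - k ∈ Finset.range (2 * m - 2 * k + 1) := by simp; omega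
    have h1 : ((2 * k).choose k : ℝ) * (((2 * m - 2 * k).choose (m - k) : ℝ) *
        tt F k (2 * k - k) (m - k) (2 * m - 2 * k - (m - k))) ≤
        ∑ a ∈ Finset.range (2 * k + 1), ((2 * k).choose a : ℝ) *
        ∑ c ∈ Finset.range (2 * m - 2 * k + 1), ((2 * m - 2 * k).choose c : ℝ) *
          tt F a (2 * k - a) c (2 * m - 2 * k - c) := by
      refine le_trans ?_ (Finset.single_le_sum (f := fun a => ((2 * k).choose a : ℝ) *
        ∑ c ∈ Finset.range (2 * m - 2 * k + 1), ((2 * m - 2 * k).choose c : ℝ) *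
          tt F a (2 * k - a) c (2 * m - 2 * k - c)) (fun a ha => mul_nonneg (by positivity)
      (Finset.sum_nonneg fun c hc => mul_nonneg (by positivity) (ht _ hj a ha c hc))) hka)
      refine mul_le_mul_of_nonneg_left ?_ (by positivity)
      exact Finset.single_le_sum (f := fun c => ((2 * m - 2 * k).choose c : ℝ) *
          tt F k (2 * k - k) c (2 * m - 2 * k - c))
        (fun c hc => mul_nonneg (by positivity) (ht _ hj k hka c hc)) hkc
    have h2 := mul_le_mul_of_nonneg_left h1 (by positivity : (0 : ℝ) ≤ ((2 * m).choose (2 * k) : ℝ))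
    refine le_trans (le_of_eq ?_) h2
    rw [show 2 * k - k = k by omega, show 2 * m - 2 * k - (m - k) = m - k by omega,
      tt_diag hF (by omega : m - k + k = m)]
    have e1 : ((2 * m).choose (2 * k) : ℝ) * ((2 * k).factorial * (2 * m - 2 * k).factorial) =
        (2 * m).factorial := by
      rw [← mul_assoc]
      exact_mod_cast Nat.choose_mul_factorial_mul_factorial (by omega : 2 * k ≤ 2 * m)
    have e2 : ((2 * k).choose k : ℝ) * (k.factorial * k.factorial) = (2 * k).factorial := by
      have := Nat.choose_mul_factorial_mul_factorial (by omega : k ≤ 2 * k)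
      rw [show 2 * k - k = k by omega] at this
      rw [← mul_assoc]; exact_mod_cast this
    have e3 : ((2 * m - 2 * k).choose (m - k) : ℝ) * ((m - k).factorial * (m - k).factorial) =
        (2 * m - 2 * k).factorial := by
      have := Nat.choose_mul_factorial_mul_factorial (by omega : m - k ≤ 2 * m - 2 * k)
      rw [show 2 * m - 2 * k - (m - k) = m - k by omega] at this
      rw [← mul_assoc]; exact_mod_cast this
    rw [← e1, ← e2, ← e3]
    have : (k.factorial : ℝ) ≠ 0 := by positivity
    field_simp
  have hsub : ({0, 2 * r, 2 * m} : Finset ℕ) ⊆ Finset.range (2 * m + 1) := by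
    intro x hx; simp at hx ⊢; omega
  have hs := Finset.sum_le_sum_of_subset_of_nonneg hsub (f := g) (fun j hj _ => hg0 j hj)
  rw [Finset.sum_insert (by simp; omega), Finset.sum_insert (by simp; omega),
    Finset.sum_singleton] at hs
  have k0 := hk 0 (by omega)
  have kr := hk r (by omega)
  have km := hk m le_rfl
  rw [N4_zero] at k0
  rw [AD_Ch m hF hF hF hF] at km
  simp only [mul_zero, Nat.factorial_zero, Nat.cast_one, one_pow, div_one] at k0
  rw [mul_div_cancel_left₀ _ (by positivity)] at km
  have hfac : (0 : ℝ) < (2 * m).factorial := by positivity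
  have : 2 * EE (F * F) ^ 2 + N4 r F F F F / (r.factorial : ℝ) ^ 2 ≤
      (∑ x ∈ Finset.range (2 * m + 1), g x) / (2 * m).factorial := by
    rw [le_div_iff₀ hfac]
    linarith
  linarith

end SC

namespace SC

lemma young7 {a b : ℝ} (ha : 0 ≤ a) (hb : 0 ≤ b) :
    7 * a ^ 3 * b ≤ 1 / 2 * a ^ 4 + 19208 * b ^ 4 := by
  by_cases h : 14 * b ≤ a
  · have : a ^ 3 * (14 * b) ≤ a ^ 3 * a := mul_le_mul_of_nonneg_left h (by positivity)
    have h2 : 0 ≤ b ^ 4 := by positivity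
    nlinarith
  · push Not at h
    have h1 : a ^ 3 ≤ (14 * b) ^ 3 := pow_le_pow_left₀ ha h.le 3
    have h2 := mul_le_mul_of_nonneg_right h1 hb
    have h3 : 0 ≤ a ^ 4 := by positivity
    nlinarith

lemma minkowski4 {K : ℕ} {ι : Type} [Fintype ι] (f : ι → MvPolynomial (Fin K) ℝ) (s : ι → ℝ)
    (hs : ∀ i, 0 ≤ s i) {C0 : ℝ} (hC : 0 ≤ C0)
    (h : ∀ i, EE ((f i) ^ 8) ≤ C0 * (s i) ^ 4) :
    EE ((∑ i, (f i) ^ 2) ^ 4) ≤ C0 * (∑ i, s i) ^ 4 := by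
  classical
  rcases isEmpty_or_nonempty ι with he | hne
  · simp [EE_zero]
  have key : ∀ ε : ℝ, 0 < ε → EE ((∑ i, (f i) ^ 2) ^ 4) ≤ C0 * (∑ i, (s i + ε)) ^ 4 := by
    intro ε hε
    have hp : ∀ i, 0 < s i + ε := fun i => by linarith [hs i]
    set S := ∑ i, (s i + ε) with hS
    have hSp : 0 < S := Finset.sum_pos (fun i _ => hp i) Finset.univ_nonempty
    have h1 : EE ((∑ i, (f i) ^ 2) ^ 4) ≤
        EE (∑ i, C (S ^ 3 / (s i + ε) ^ 3) * (f i) ^ 8) := by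
      refine EE_mono fun x => ?_
      simp only [map_pow, map_sum, map_mul, eval_C]
      have hj := Real.pow_arith_mean_le_arith_mean_pow Finset.univ
        (fun i => (s i + ε) / S) (fun i => S * (eval x (f i)) ^ 2 / (s i + ε))
        (fun i _ => (div_pos (hp i) hSp).le) (by rw [← Finset.sum_div, ← hS, div_self hSp.ne'])
        (fun i _ => div_nonneg (mul_nonneg hSp.le (sq_nonneg _)) (hp i).le) 4
      refine le_trans (le_of_eq ?_) (le_trans hj (le_of_eq ?_))
      · congr 1
        refine Finset.sum_congr rfl fun i _ => ?_
        have := (hp i).ne'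
        field_simp
      · refine Finset.sum_congr rfl fun i _ => ?_
        have := (hp i).ne'
        field_simp
    refine h1.trans ?_
    rw [EE_sum]
    calc ∑ i, EE (C (S ^ 3 / (s i + ε) ^ 3) * f i ^ 8) ≤ ∑ i, C0 * S ^ 3 * (s i + ε) := by
          refine Finset.sum_le_sum fun i _ => ?_
          rw [EE_C_mul]
          have h2 : EE (f i ^ 8) ≤ C0 * (s i + ε) ^ 4 := (h i).trans
            (mul_le_mul_of_nonneg_left (pow_le_pow_left₀ (hs i) (by linarith) 4) hC)
          refine (mul_le_mul_of_nonneg_left h2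
            (div_nonneg (by positivity) (pow_nonneg (hp i).le 3))).trans (le_of_eq ?_)
          have := (hp i).ne'
          field_simp
      _ = C0 * S ^ 4 := by rw [← Finset.mul_sum, ← hS]; ring
  have ht : Tendsto (fun ε : ℝ => C0 * (∑ i, (s i + ε)) ^ 4) (𝓝[>] 0)
      (𝓝 (C0 * (∑ i, (s i + 0)) ^ 4)) := by
    refine Tendsto.mono_left ?_ nhdsWithin_le_nhds
    exact Continuous.tendsto (f := fun ε : ℝ => C0 * (∑ i, (s i + ε)) ^ 4) (by fun_prop) 0
  simp only [add_zero] at ht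
  refine ge_of_tendsto ht ?_
  filter_upwards [self_mem_nhdsWithin] with ε hε
  exact key ε hε

lemma hyper (m : ℕ) : ∃ C0 : ℝ, 0 ≤ C0 ∧ ∀ (K : ℕ) (F : MvPolynomial (Fin K) ℝ), F ∈ Ch m →
    EE (F ^ 8) ≤ C0 * (EE (F * F)) ^ 4 := by
  induction m with
  | zero =>
    refine ⟨1, zero_le_one, fun K F hF => ?_⟩
    obtain ⟨c, rfl⟩ := mem_Ch_zero hF
    rw [← map_pow, ← map_mul, EE_C, EE_C]; apply le_of_eq; ring
  | succ m ih =>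
    obtain ⟨C0, hC0, h⟩ := ih
    refine ⟨2 * 19208 * (C0 * ((m + 1 : ℕ) : ℝ) ^ 4), by positivity, fun K F hF => ?_⟩
    have h1 := energy hF (F ^ 7)
    have h2 := energy hF F
    have h3 := minkowski4 (fun i => pderiv i F) (fun i => EE (pderiv i F * pderiv i F))
      (fun i => EE_sq_nonneg _) hC0 (fun i => h K _ (pderiv_mem_Ch hF i))
    rw [h2] at h3
    have h4 : EE (7 * F ^ 6 * (∑ i, (pderiv i F) ^ 2)) = ((m + 1 : ℕ) : ℝ) * EE (F ^ 8) := by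
      have e8 : F ^ 8 = F * F ^ 7 := pow_succ' F 7
      rw [e8, ← h1, ← EE_sum, Finset.mul_sum]
      refine congrArg EE (Finset.sum_congr rfl fun i _ => ?_)
      rw [Derivation.leibniz_pow]
      simp only [smul_eq_mul, nsmul_eq_mul]; push_cast; ring
    have h5 : EE (7 * F ^ 6 * (∑ i, (pderiv i F) ^ 2)) ≤
        EE (C (1 / 2) * F ^ 8 + C 19208 * (∑ i, (pderiv i F) ^ 2) ^ 4) := by
      refine EE_mono fun x => ?_
      simp only [map_add, map_mul, map_pow, map_sum, eval_C, map_ofNat]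
      have := young7 (a := (eval x F) ^ 2) (b := ∑ i, (eval x (pderiv i F)) ^ 2) (by positivity)
        (Finset.sum_nonneg fun i _ => sq_nonneg _)
      refine le_trans (le_of_eq ?_) (le_trans this (le_of_eq ?_)) <;> ring
    rw [EE_add, EE_C_mul, EE_C_mul, h4] at h5
    have h6 : 0 ≤ EE (F ^ 8) := EE_nonneg fun x => by
      rw [map_pow]; positivity
    have h7 : EE (F ^ 8) ≤ ((m + 1 : ℕ) : ℝ) * EE (F ^ 8) := by
      refine le_mul_of_one_le_left h6 ?_
      push_cast; linarith [(Nat.cast_nonneg m : (0 : ℝ) ≤ m)]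
    rw [mul_pow] at h3
    linarith

end SC

namespace SC

lemma min_lower {x T : ℝ} (hT : 0 < T) : x ≤ min x T + x ^ 2 / (4 * T) := by
  rcases le_total x T with h | h
  · rw [min_eq_left h]; have : 0 ≤ x ^ 2 / (4 * T) := by positivity
    linarith
  · rw [min_eq_right h]
    have : x - T ≤ x ^ 2 / (4 * T) := by
      rw [le_div_iff₀ (by positivity)]; nlinarith [sq_nonneg (x - 2 * T)]
    linarith

/-- truncation as a bounded continuous function -/
noncomputable def truncB (h : ℝ → ℝ) (hc : Continuous h) (h0 : ∀ x, 0 ≤ h x) (R : ℝ) :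
    BoundedContinuousFunction ℝ ℝ :=
  BoundedContinuousFunction.ofNormedAddCommGroup (fun x => min (h x) R) (by fun_prop) |R| (by
    intro x
    rw [Real.norm_eq_abs]
    rcases le_total (h x) R with h1 | h1
    · rw [min_eq_left h1, abs_of_nonneg (h0 x)]; exact h1.trans (le_abs_self R)
    · rw [min_eq_right h1])

lemma truncB_apply (h : ℝ → ℝ) (hc : Continuous h) (h0 : ∀ x, 0 ≤ h x) (R x : ℝ) :
    truncB h hc h0 R x = min (h x) R := rfl

lemma trunc_bounds (μ : Measure ℝ) [IsProbabilityMeasure μ] {h : ℝ → ℝ} (hc : Continuous h)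
    (h0 : ∀ x, 0 ≤ h x) (hi : Integrable h μ) (hi2 : Integrable (fun x => h x ^ 2) μ)
    {R : ℝ} (hR : 0 < R) :
    ∫ x, truncB h hc h0 R x ∂μ ≤ ∫ x, h x ∂μ ∧
    ∫ x, h x ∂μ ≤ ∫ x, truncB h hc h0 R x ∂μ + (∫ x, h x ^ 2 ∂μ) / (4 * R) := by
  have hb : Integrable (fun x => truncB h hc h0 R x) μ :=
    (truncB h hc h0 R).integrable μ
  constructor
  · exact integral_mono hb hi fun x => min_le_left _ _
  · rw [← integral_div, ← integral_add hb (hi2.div_const _)]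
    exact integral_mono hi (hb.add (hi2.div_const _)) fun x => min_lower hR

lemma moment_conv (μs : ℕ → Measure ℝ) [∀ n, IsProbabilityMeasure (μs n)] (μ : Measure ℝ)
    [IsProbabilityMeasure μ] (hlaw : TendstoInLaw μs μ) {h : ℝ → ℝ} (hc : Continuous h)
    (h0 : ∀ x, 0 ≤ h x) (hi : ∀ n, Integrable h (μs n))
    (hi2 : ∀ n, Integrable (fun x => h x ^ 2) (μs n)) (hi' : Integrable h μ)
    (hi2' : Integrable (fun x => h x ^ 2) μ) (B : ℝ)
    (hB : ∀ᶠ n in atTop, ∫ x, h x ^ 2 ∂(μs n) ≤ B) :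
    Tendsto (fun n => ∫ x, h x ∂(μs n)) atTop (𝓝 (∫ x, h x ∂μ)) := by
  rw [Metric.tendsto_atTop']
  intro ε hε
  set B' := ∫ x, h x ^ 2 ∂μ with hB'
  set R := (|B| + |B'| + 1) / ε with hR
  have hRp : 0 < R := by positivity
  have hRB : |B| / (4 * R) < ε / 2 ∧ |B'| / (4 * R) < ε / 2 := by
    have e : ε * R = |B| + |B'| + 1 := by rw [hR]; field_simp
    have a1 := abs_nonneg B
    have a2 := abs_nonneg B'
    constructor <;> rw [div_lt_iff₀ (by positivity)] <;> nlinarith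
  have h1 := hlaw (truncB h hc h0 R)
  rw [Metric.tendsto_atTop] at h1
  obtain ⟨N, hN⟩ := h1 (ε / 2) (by positivity)
  obtain ⟨N', hN'⟩ := eventually_atTop.1 hB
  refine ⟨max N N', fun n hn => ?_⟩
  have hn1 := hN n ((le_max_left _ _).trans hn.le)
  have hn2 := hN' n ((le_max_right _ _).trans hn.le)
  rw [Real.dist_eq, abs_lt] at hn1 ⊢
  have t1 := trunc_bounds (μs n) hc h0 (hi n) (hi2 n) hRp
  have t2 := trunc_bounds μ hc h0 hi' hi2' hRp
  have t3 : (∫ x, h x ^ 2 ∂(μs n)) / (4 * R) ≤ |B| / (4 * R) :=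
    div_le_div_of_nonneg_right (hn2.trans (le_abs_self B)) (by positivity)
  have t4 : B' / (4 * R) ≤ |B'| / (4 * R) :=
    div_le_div_of_nonneg_right (le_abs_self B') (by positivity)
  rw [← hB'] at t2
  constructor <;> linarith [hRB.1, hRB.2, t1.1, t1.2, t2.1, t2.2]

/-- law of a polynomial -/
noncomputable def plaw {K : ℕ} (F : MvPolynomial (Fin K) ℝ) : Measure ℝ :=
  Measure.map (fun x => eval x F) (gaussPi (Fin K))

lemma cont_eval {K : ℕ} (F : MvPolynomial (Fin K) ℝ) : Continuous (fun x : Fin K → ℝ => eval x F) :=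
  MvPolynomial.continuous_eval F

instance {K : ℕ} (F : MvPolynomial (Fin K) ℝ) : IsProbabilityMeasure (plaw F) :=
  Measure.isProbabilityMeasure_map (cont_eval F).measurable.aemeasurable

lemma plaw_pow {K : ℕ} (F : MvPolynomial (Fin K) ℝ) (n : ℕ) :
    Integrable (fun x : ℝ => x ^ n) (plaw F) ∧ ∫ x, x ^ n ∂(plaw F) = EE (F ^ n) := by
  constructor
  · rw [plaw, integrable_map_measure (by fun_prop) (cont_eval F).measurable.aemeasurable]
    have := integrable_eval (F ^ n)
    simp only [map_pow] at this
    exact this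
  · rw [plaw, integral_map (cont_eval F).measurable.aemeasurable (by fun_prop), EE]
    simp only [map_pow]

lemma small_contr {m : ℕ} (K : ℕ → ℕ) (P : (n : ℕ) → MvPolynomial (Fin (K n)) ℝ)
    (hP : ∀ n, P n ∈ Ch m)
    (hlaw : TendstoInLaw (fun n => plaw (P n)) (gaussianReal 0 1)) :
    Tendsto (fun n => EE (P n * P n)) atTop (𝓝 1) ∧
    ∀ r, 1 ≤ r → r < m → Tendsto (fun n => N4 r (P n) (P n) (P n) (P n)) atTop (𝓝 0) := by
  obtain ⟨C0, hC0, hC⟩ := hyper m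
  set a : ℕ → ℝ := fun n => EE (P n * P n) with ha
  have ha0 : ∀ n, 0 ≤ a n := fun n => EE_sq_nonneg _
  set D := C0 + 1 with hD
  have hDp : 0 < D := by positivity
  have h8 : ∀ n, EE (P n ^ 8) ≤ D * a n ^ 4 := fun n =>
    (hC _ _ (hP n)).trans (mul_le_mul_of_nonneg_right (by linarith) (by positivity))
  have h4 : ∀ n, EE (P n ^ 4) ≤ D * a n ^ 2 := by
    intro n
    have h1 := EE_sq_le (P n ^ 4)
    rw [← pow_add] at h1
    refine le_of_sq_le_sq ?_ (by positivity)
    refine h1.trans ((h8 n).trans ?_)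
    have h2 : D ≤ D ^ 2 := by nlinarith
    have h3 : 0 ≤ a n ^ 4 := by positivity
    nlinarith
  have hg : ∀ n, Integrable (fun x : ℝ => x ^ n) (gaussianReal 0 1) := integrable_pow_gauss
  have g2 : ∫ x, x ^ 2 ∂(gaussianReal 0 1) = 1 := by
    have := gmom_succ_succ 0; rw [gmom_zero] at this; simpa [gmom] using this
  have g4 : ∫ x, x ^ 4 ∂(gaussianReal 0 1) = 3 := by
    have := gmom_succ_succ 2; rw [show gmom 2 = 1 from g2] at this
    rw [gmom] at this; rw [this]; norm_num
  -- boundedness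
  have hbd : ∀ᶠ n in atTop, a n ≤ 4 := by
    have hsq : Continuous (fun x : ℝ => x ^ 2) := by fun_prop
    set T := 2 * D with hT
    have h1 := hlaw (truncB (fun x : ℝ => x ^ 2) hsq (fun x => sq_nonneg x) T)
    have h2 : ∫ x, truncB (fun x : ℝ => x ^ 2) hsq (fun x => sq_nonneg x) T x ∂gaussianReal 0 1
        < 2 := by
      have := (trunc_bounds (gaussianReal 0 1) hsq (fun x => sq_nonneg x) (hg 2)
        (by simpa [← pow_mul] using hg 4) (R := T) (by positivity)).1
      rw [g2] at this; linarith
    filter_upwards [h1.eventually (gt_mem_nhds h2)] with n hn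
    by_contra hcon
    push Not at hcon
    have han : 0 < a n := by linarith
    set T' := D * a n / 2 with hT'
    have hT'p : 0 < T' := by positivity
    have hTT : T < T' := by rw [hT, hT']; nlinarith
    have t := (trunc_bounds (plaw (P n)) hsq (fun x => sq_nonneg x) (plaw_pow (P n) 2).1
      (by simpa [← pow_mul] using (plaw_pow (P n) 4).1) hT'p).2
    have e2 : ∫ x, x ^ 2 ∂(plaw (P n)) = a n := by rw [(plaw_pow (P n) 2).2, sq]
    have e4 : ∫ x, (x ^ 2) ^ 2 ∂(plaw (P n)) = EE (P n ^ 4) := by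
      simp only [← pow_mul]; exact (plaw_pow (P n) 4).2
    rw [e2, e4] at t
    have t2 : EE (P n ^ 4) / (4 * T') ≤ a n / 2 := by
      rw [div_le_iff₀ (by positivity), hT']
      nlinarith [h4 n]
    have t3 : ∫ x, truncB (fun x : ℝ => x ^ 2) hsq (fun x => sq_nonneg x) T' x ∂(plaw (P n)) ≤
        T' / T * ∫ x, truncB (fun x : ℝ => x ^ 2) hsq (fun x => sq_nonneg x) T x ∂(plaw (P n)) := by
      rw [← integral_const_mul]
      refine integral_mono ((truncB _ hsq _ T').integrable _)
        (((truncB _ hsq _ T).integrable _).const_mul _) fun x => ?_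
      simp only [truncB_apply]
      have hTp : 0 < T := by positivity
      rw [mul_min_of_nonneg _ _ (by positivity), div_mul_cancel₀ _ hTp.ne']
      refine min_le_min_right _ ?_
      refine le_mul_of_one_le_left (sq_nonneg x) ?_
      rw [one_le_div hTp]; exact hTT.le
    have t4 : T' / T * ∫ x, truncB (fun x : ℝ => x ^ 2) hsq (fun x => sq_nonneg x) T x ∂(plaw (P n))
        < T' / T * 2 := mul_lt_mul_of_pos_left hn (by positivity)
    have t5 : T' / T * 2 = a n / 2 := by rw [hT', hT]; field_simp
    linarith
  have hb4 : ∀ᶠ n in atTop, EE (P n ^ 4) ≤ D * 4 ^ 2 := by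
    filter_upwards [hbd] with n hn
    exact (h4 n).trans (mul_le_mul_of_nonneg_left (pow_le_pow_left₀ (ha0 n) hn 2) hDp.le)
  have hb8 : ∀ᶠ n in atTop, EE (P n ^ 8) ≤ D * 4 ^ 4 := by
    filter_upwards [hbd] with n hn
    exact (h8 n).trans (mul_le_mul_of_nonneg_left (pow_le_pow_left₀ (ha0 n) hn 4) hDp.le)
  have c2 : Tendsto a atTop (𝓝 1) := by
    have := moment_conv (fun n => plaw (P n)) (gaussianReal 0 1) hlaw
      (h := fun x => x ^ 2) (by fun_prop) (fun x => sq_nonneg x) (fun n => (plaw_pow (P n) 2).1)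
      (fun n => by simpa [← pow_mul] using (plaw_pow (P n) 4).1) (hg 2)
      (by simpa [← pow_mul] using hg 4) (D * 4 ^ 2) (by
        filter_upwards [hb4] with n hn
        rw [← (plaw_pow (P n) 4).2] at hn
        simpa [← pow_mul] using hn)
    rw [g2] at this
    refine this.congr fun n => ?_
    rw [(plaw_pow (P n) 2).2, sq]
  have c4 : Tendsto (fun n => EE (P n ^ 4)) atTop (𝓝 3) := by
    have := moment_conv (fun n => plaw (P n)) (gaussianReal 0 1) hlaw
      (h := fun x => x ^ 4) (by fun_prop) (fun x => by positivity) (fun n => (plaw_pow (P n) 4).1)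
      (fun n => by simpa [← pow_mul] using (plaw_pow (P n) 8).1) (hg 4)
      (by simpa [← pow_mul] using hg 8) (D * 4 ^ 4) (by
        filter_upwards [hb8] with n hn
        rw [← (plaw_pow (P n) 8).2] at hn
        simpa [← pow_mul] using hn)
    rw [g4] at this
    exact this.congr fun n => (plaw_pow (P n) 4).2
  refine ⟨c2, fun r hr1 hr2 => ?_⟩
  have lim : Tendsto (fun n => (r.factorial : ℝ) ^ 2 * (EE (P n ^ 4) - 3 * a n ^ 2)) atTop
      (𝓝 ((r.factorial : ℝ) ^ 2 * (3 - 3 * 1 ^ 2))) :=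
    (c4.sub ((c2.pow 2).const_mul 3)).const_mul _
  norm_num at lim
  refine squeeze_zero (fun n => N4_nonneg r _ _) (fun n => ?_) lim
  have hf := fourth hr1 hr2 (hP n)
  rw [show P n * P n * (P n * P n) = P n ^ 4 by ring] at hf
  have hp : (0 : ℝ) < (r.factorial : ℝ) ^ 2 := by positivity
  have : N4 r (P n) (P n) (P n) (P n) / (r.factorial : ℝ) ^ 2 ≤ EE (P n ^ 4) - 3 * a n ^ 2 := by
    simp only [ha]; linarith
  rw [div_le_iff₀ hp] at this
  linarith

end SC

namespace SC

/-- iid Gaussian vectors -/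
noncomputable def gs (k K : ℕ) : Measure (Fin k → Fin K → ℝ) :=
  Measure.pi fun _ => gaussPi (Fin K)

instance (k K : ℕ) : IsProbabilityMeasure (gs k K) := by unfold gs; infer_instance

lemma bdd_integrable {α : Type*} [MeasurableSpace α] [TopologicalSpace α] [BorelSpace α]
    (μ : Measure α) [IsFiniteMeasure μ] {f : α → ℝ} (hf : Measurable f) {B : ℝ}
    (h : ∀ x, |f x| ≤ B) : Integrable f μ :=
  Integrable.of_bound hf.aestronglyMeasurable B (ae_of_all _ h)

lemma gs_succ_integral {k K : ℕ} (f : (Fin K → ℝ) → (Fin k → Fin K → ℝ) → ℝ)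
    (hf : Measurable (Function.uncurry f)) {B : ℝ} (hB : ∀ g Y, |f g Y| ≤ B) :
    ∫ X, f (X 0) (Fin.tail X) ∂gs (k + 1) K = ∫ Y, ∫ g, f g Y ∂gaussPi (Fin K) ∂gs k K := by
  have h := measurePreserving_piFinSuccAbove (fun _ : Fin (k + 1) => gaussPi (Fin K)) 0
  have h2 := h.integral_comp' (g := Function.uncurry f)
  have e : ∀ X : Fin (k + 1) → Fin K → ℝ, Function.uncurry f
      ((MeasurableEquiv.piFinSuccAbove (fun _ : Fin (k + 1) => Fin K → ℝ) 0) X) =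
      f (X 0) (Fin.tail X) := by
    intro X; rfl
  simp only [e] at h2
  rw [gs, h2]
  have hi : Integrable (Function.uncurry f) ((gaussPi (Fin K)).prod (gs k K)) :=
    Integrable.of_bound hf.aestronglyMeasurable B (ae_of_all _ fun x => hB x.1 x.2)
  exact integral_prod_symm _ hi

lemma gauss_exp {L : ℕ} (v : Fin L → ℝ) :
    ∫ g, Complex.exp ((∑ i, g i * v i : ℝ) * Complex.I) ∂gaussPi (Fin L) =
      (Real.exp (-(∑ i, v i ^ 2) / 2) : ℂ) := by
  have e : ∀ g : Fin L → ℝ, Complex.exp ((∑ i, g i * v i : ℝ) * Complex.I) =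
      ∏ i, Complex.exp ((v i : ℂ) * (g i : ℂ) * Complex.I) := by
    intro g
    rw [← Complex.exp_sum]
    congr 1
    push_cast
    rw [Finset.sum_mul]
    exact Finset.sum_congr rfl fun i _ => by ring
  simp only [e]
  rw [gaussPi, integral_fintype_prod_eq_prod
    (f := fun i (x : ℝ) => Complex.exp ((v i : ℂ) * (x : ℂ) * Complex.I))]
  have h : ∀ i, ∫ x : ℝ, Complex.exp ((v i : ℂ) * (x : ℂ) * Complex.I) ∂gaussianReal 0 1 =
      Complex.exp (-(v i : ℂ) ^ 2 / 2) := by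
    intro i
    have := charFun_gaussianReal (μ := 0) (v := 1) (v i)
    rw [charFun_apply_real] at this
    rw [this]; congr 1; simp; ring
  simp only [h]
  rw [← Complex.exp_sum]
  push_cast
  congr 1
  rw [← Finset.sum_neg_distrib, Finset.sum_div]

lemma gauss_cos {L : ℕ} (v : Fin L → ℝ) :
    ∫ g, Real.cos (∑ i, g i * v i) ∂gaussPi (Fin L) = Real.exp (-(∑ i, v i ^ 2) / 2) := by
  have h := gauss_exp v
  have hi : Integrable (fun g : Fin L → ℝ => Complex.exp ((∑ i, g i * v i : ℝ) * Complex.I))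
      (gaussPi (Fin L)) := by
    refine Integrable.of_bound (C := 1) (Measurable.aestronglyMeasurable (by fun_prop))
      (ae_of_all _ fun g => ?_)
    rw [Complex.norm_exp_ofReal_mul_I]
  have h2 := integral_re hi
  have e : ∀ x : ℝ, RCLike.re (Complex.exp (x * Complex.I)) = Real.cos x := by
    intro x; exact Complex.exp_ofReal_mul_I_re x
  simp only [e] at h2
  rw [h2, h]
  exact Complex.ofReal_re _

/-- multilinear form of the top derivative -/
noncomputable def MM {K : ℕ} : (k : ℕ) → MvPolynomial (Fin K) ℝ → (Fin k → Fin K → ℝ) → ℝ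
  | 0, F, _ => EE F
  | k + 1, F, X => ∑ i, X 0 i * MM k (pderiv i F) (Fin.tail X)

variable {K : ℕ}

lemma MM_succ (k : ℕ) (F : MvPolynomial (Fin K) ℝ) (X : Fin (k + 1) → Fin K → ℝ) :
    MM (k + 1) F X = ∑ i, X 0 i * MM k (pderiv i F) (Fin.tail X) := rfl

lemma MM_add : ∀ (k : ℕ) (F G : MvPolynomial (Fin K) ℝ) (X : Fin k → Fin K → ℝ),
    MM k (F + G) X = MM k F X + MM k G X
  | 0, F, G, X => EE_add F G
  | k + 1, F, G, X => by
    simp only [MM_succ, map_add, MM_add k, mul_add, Finset.sum_add_distrib]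

lemma MM_smul : ∀ (k : ℕ) (c : ℝ) (F : MvPolynomial (Fin K) ℝ) (X : Fin k → Fin K → ℝ),
    MM k (c • F) X = c * MM k F X
  | 0, c, F, X => EE_smul c F
  | k + 1, c, F, X => by
    simp only [MM_succ, Derivation.map_smul, MM_smul k, Finset.mul_sum]
    exact Finset.sum_congr rfl fun i _ => by ring

lemma MM_sum {ι : Type*} (s : Finset ι) (k : ℕ) (f : ι → MvPolynomial (Fin K) ℝ)
    (X : Fin k → Fin K → ℝ) : MM k (∑ i ∈ s, f i) X = ∑ i ∈ s, MM k (f i) X := by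
  classical
  induction s using Finset.induction_on with
  | empty => have := MM_smul k 0 0 X; simpa using this
  | insert a s ha ih => rw [Finset.sum_insert ha, Finset.sum_insert ha, MM_add, ih]

lemma MM_cont : ∀ (k : ℕ) (F : MvPolynomial (Fin K) ℝ), Continuous (MM k F)
  | 0, F => continuous_const
  | k + 1, F => by
    have h := fun i => MM_cont k (pderiv i F)
    have ht : Continuous (fun X : Fin (k + 1) → Fin K → ℝ => Fin.tail X) := by
      unfold Fin.tail; fun_prop
    change Continuous (fun X : Fin (k + 1) → Fin K → ℝ =>
      ∑ i, X 0 i * MM k (pderiv i F) (Fin.tail X))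
    refine continuous_finsetSum _ fun i _ => ?_
    exact Continuous.mul (by fun_prop) ((h i).comp ht)

/-- Gaussian cosine functional -/
noncomputable def PH (k : ℕ) (F : MvPolynomial (Fin K) ℝ) (lam : ℝ) : ℝ :=
  ∫ X, Real.cos (lam * MM k F X) ∂gs k K

lemma PH_le_one (k : ℕ) (F : MvPolynomial (Fin K) ℝ) (lam : ℝ) : PH k F lam ≤ 1 := by
  have h : Integrable (fun X => Real.cos (lam * MM k F X)) (gs k K) :=
    bdd_integrable _ (by have := MM_cont k F; fun_prop) (B := 1) fun x => Real.abs_cos_le_one _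
  calc PH k F lam ≤ ∫ X, (1 : ℝ) ∂gs k K :=
        integral_mono h (integrable_const 1) fun x => Real.cos_le_one _
    _ = 1 := by simp

lemma PH_smul (k : ℕ) (F : MvPolynomial (Fin K) ℝ) (c lam : ℝ) :
    PH k (c • F) lam = PH k F (c * lam) := by
  simp only [PH, MM_smul]
  refine integral_congr_ae (ae_of_all _ fun X => ?_)
  simp only; congr 1; ring

lemma PH_succ (k : ℕ) (F : MvPolynomial (Fin K) ℝ) (lam : ℝ) :
    PH (k + 1) F lam = ∫ Y, Real.exp (-(lam ^ 2 * ∑ i, MM k (pderiv i F) Y ^ 2) / 2) ∂gs k K := by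
  have h := fun i => MM_cont k (pderiv i F)
  have := gs_succ_integral (k := k) (K := K)
    (fun g Y => Real.cos (lam * ∑ i, g i * MM k (pderiv i F) Y))
    (by
      refine Continuous.measurable ?_
      refine Real.continuous_cos.comp (continuous_const.mul (continuous_finsetSum _ fun i _ => ?_))
      exact Continuous.mul (by fun_prop) ((h i).comp continuous_snd)) (B := 1)
    (fun g Y => Real.abs_cos_le_one _)
  rw [PH]
  simp only [MM_succ]
  rw [this]
  refine integral_congr_ae (ae_of_all _ fun Y => ?_)
  simp only
  have h2 := gauss_cos (fun i => lam * MM k (pderiv i F) Y)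
  have e : ∀ g : Fin K → ℝ, ∑ i, g i * (lam * MM k (pderiv i F) Y) =
      lam * ∑ i, g i * MM k (pderiv i F) Y := by
    intro g; rw [Finset.mul_sum]; exact Finset.sum_congr rfl fun i _ => by ring
  simp only [e] at h2
  rw [h2, Finset.mul_sum]
  simp only [mul_pow]

/-- directional derivative -/
noncomputable def dirD (g : Fin K → ℝ) (F : MvPolynomial (Fin K) ℝ) : MvPolynomial (Fin K) ℝ :=
  ∑ i, g i • pderiv i F

lemma dirD_mem {n : ℕ} {F : MvPolynomial (Fin K) ℝ} (hF : F ∈ Ch (n + 1)) (g : Fin K → ℝ) :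
    dirD g F ∈ Ch n :=
  Submodule.sum_mem _ fun i _ => Submodule.smul_mem _ _ (pderiv_mem_Ch hF i)

lemma MM_dirD (k : ℕ) (F : MvPolynomial (Fin K) ℝ) (g : Fin K → ℝ) (X : Fin k → Fin K → ℝ) :
    MM k (dirD g F) X = ∑ i, g i * MM k (pderiv i F) X := by
  rw [dirD, MM_sum]; simp only [MM_smul]

/-- Wick formulas -/
lemma gauss2 (i j : Fin K) : ∫ g, g i * g j ∂gaussPi (Fin K) = if i = j then 1 else 0 := by
  have h : EE (X i * X j : MvPolynomial (Fin K) ℝ) = if i = j then 1 else 0 := by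
    rw [ibp, pderiv_X, Pi.single_apply]
    by_cases h : i = j
    · subst h; simp [EE_one]
    · simp [h, Ne.symm h, EE_zero]
  rw [← h]; simp [EE]

lemma gauss2_int (i j : Fin K) : Integrable (fun g => g i * g j) (gaussPi (Fin K)) := by
  have := integrable_eval (X i * X j : MvPolynomial (Fin K) ℝ)
  simpa using this

lemma gauss4_int (i j k l : Fin K) :
    Integrable (fun g => g i * g j * (g k * g l)) (gaussPi (Fin K)) := by
  have := integrable_eval (X i * X j * (X k * X l) : MvPolynomial (Fin K) ℝ)
  simpa using this

lemma pderiv_X' (i j : Fin K) : pderiv i (X j : MvPolynomial (Fin K) ℝ) =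
    C (if i = j then 1 else 0) := by
  rw [pderiv_X, Pi.single_apply]
  by_cases h : i = j
  · subst h; simp
  · simp [h, Ne.symm h]

lemma gauss4 (i j k l : Fin K) : ∫ g, g i * g j * (g k * g l) ∂gaussPi (Fin K) =
    (if i = j then 1 else 0) * (if k = l then 1 else 0) +
    (if i = k then 1 else 0) * (if j = l then 1 else 0) +
    (if i = l then 1 else 0) * (if j = k then 1 else 0) := by
  have h2 : ∀ i j : Fin K, EE (X i * X j : MvPolynomial (Fin K) ℝ) = if i = j then 1 else 0 := by
    intro i j; rw [ibp, pderiv_X', EE_C]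
  have h : EE (X i * (X j * (X k * X l)) : MvPolynomial (Fin K) ℝ) =
    (if i = j then 1 else 0) * (if k = l then 1 else 0) +
    (if i = k then 1 else 0) * (if j = l then 1 else 0) +
    (if i = l then 1 else 0) * (if j = k then 1 else 0) := by
    rw [ibp]
    simp only [Derivation.leibniz, smul_eq_mul, pderiv_X', mul_add, EE_add]
    rw [show (X j * (X k * C (if i = l then 1 else 0)) : MvPolynomial (Fin K) ℝ) =
      C (if i = l then 1 else 0) * (X j * X k) by ring,
      show (X j * (X l * C (if i = k then 1 else 0)) : MvPolynomial (Fin K) ℝ) =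
      C (if i = k then 1 else 0) * (X j * X l) by ring,
      show (X k * X l * C (if i = j then 1 else 0) : MvPolynomial (Fin K) ℝ) =
      C (if i = j then 1 else 0) * (X k * X l) by ring]
    simp only [EE_C_mul, h2]
    ring
  rw [← h]; simp [EE, mul_assoc]

end SC

namespace SC
variable {K : ℕ}

lemma gs_eval_int {L : ℕ} (l : Fin L) {f : (Fin K → ℝ) → ℝ} (hf : Integrable f (gaussPi (Fin K))) :
    Integrable (fun G : Fin L → Fin K → ℝ => f (G l)) (gs L K) :=
  (measurePreserving_eval (fun _ : Fin L => gaussPi (Fin K)) l).integrable_comp_of_integrable hf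

lemma gs_eval {L : ℕ} (l : Fin L) {f : (Fin K → ℝ) → ℝ} (hf : Continuous f) :
    ∫ G : Fin L → Fin K → ℝ, f (G l) ∂gs L K = ∫ g, f g ∂gaussPi (Fin K) := by
  have h := measurePreserving_eval (fun _ : Fin L => gaussPi (Fin K)) l
  rw [← h.map_eq, integral_map h.measurable.aemeasurable hf.aestronglyMeasurable]
  rfl

lemma gs_pair {L : ℕ} {l l' : Fin L} (hl : l ≠ l') (k j k' j' : Fin K) :
    Integrable (fun G : Fin L → Fin K → ℝ => (G l k * G l j) * (G l' k' * G l' j')) (gs L K) ∧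
    ∫ G : Fin L → Fin K → ℝ, (G l k * G l j) * (G l' k' * G l' j') ∂gs L K =
      (if k = j then 1 else 0) * (if k' = j' then 1 else 0) := by
  have hi : iIndepFun (fun (i : Fin L) (ω : Fin L → Fin K → ℝ) => ω i) (gs L K) :=
    iIndepFun_pi (μ := fun _ : Fin L => gaussPi (Fin K)) (X := fun _ x => x)
      fun i => aemeasurable_id
  have hi2 := (hi.indepFun hl).comp (φ := fun g : Fin K → ℝ => g k * g j)
    (ψ := fun g : Fin K → ℝ => g k' * g j') (by fun_prop) (by fun_prop)
  have i1 := gs_eval_int (L := L) l (gauss2_int k j)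
  have i2 := gs_eval_int (L := L) l' (gauss2_int k' j')
  refine ⟨hi2.integrable_mul i1 i2, ?_⟩
  have := hi2.integral_fun_mul_eq_mul_integral i1.aestronglyMeasurable i2.aestronglyMeasurable
  simp only [Function.comp] at this
  rw [this, gs_eval l (f := fun g => g k * g j) (by fun_prop),
    gs_eval l' (f := fun g => g k' * g j') (by fun_prop), gauss2, gauss2]

lemma gs_same {L : ℕ} (l : Fin L) (k j k' j' : Fin K) :
    Integrable (fun G : Fin L → Fin K → ℝ => (G l k * G l j) * (G l k' * G l j')) (gs L K) ∧
    ∫ G : Fin L → Fin K → ℝ, (G l k * G l j) * (G l k' * G l j') ∂gs L K =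
      (if k = j then 1 else 0) * (if k' = j' then 1 else 0) +
      (if k = k' then 1 else 0) * (if j = j' then 1 else 0) +
      (if k = j' then 1 else 0) * (if j = k' then 1 else 0) := by
  refine ⟨gs_eval_int l (gauss4_int k j k' j'), ?_⟩
  rw [gs_eval l (f := fun g => (g k * g j) * (g k' * g j')) (by fun_prop), gauss4]

lemma N4_dir (r : ℕ) (F : MvPolynomial (Fin K) ℝ) (g h : Fin K → ℝ) :
    N4 r (dirD g F) (dirD h F) (dirD g F) (dirD h F) =
      ∑ k, ∑ k', ∑ j, ∑ j', ((g k * g j) * (h k' * h j')) *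
        N4 r (pderiv k F) (pderiv k' F) (pderiv j F) (pderiv j' F) := by
  have h1 : ∀ g A B C, N4 r (dirD g F) A B C = ∑ k, g k * N4 r (pderiv k F) A B C := by
    intro g A B C; simp only [dirD, N4_sum1, N4_smul1]
  have h2 : ∀ g A B C, N4 r A (dirD g F) B C = ∑ k, g k * N4 r A (pderiv k F) B C := by
    intro g A B C; simp only [dirD, N4_sum2, N4_smul2]
  have h3 : ∀ g A B C, N4 r A B (dirD g F) C = ∑ k, g k * N4 r A B (pderiv k F) C := by
    intro g A B C; simp only [dirD, N4_sum3, N4_smul3]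
  have h4 : ∀ g A B C, N4 r A B C (dirD g F) = ∑ k, g k * N4 r A B C (pderiv k F) := by
    intro g A B C; simp only [dirD, N4_sum4, N4_smul4]
  rw [h1]
  refine Finset.sum_congr rfl fun k _ => ?_
  rw [h2, Finset.mul_sum]
  refine Finset.sum_congr rfl fun k' _ => ?_
  rw [h3, Finset.mul_sum, Finset.mul_sum]
  refine Finset.sum_congr rfl fun j _ => ?_
  rw [h4, Finset.mul_sum, Finset.mul_sum, Finset.mul_sum]
  refine Finset.sum_congr rfl fun j' _ => ?_
  ring

lemma N4_dir_int {L : ℕ} (r : ℕ) (F : MvPolynomial (Fin K) ℝ) (l l' : Fin L) :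
    Integrable (fun G : Fin L → Fin K → ℝ =>
      N4 r (dirD (G l) F) (dirD (G l') F) (dirD (G l) F) (dirD (G l') F)) (gs L K) := by
  simp only [N4_dir]
  refine integrable_finsetSum _ fun k _ => integrable_finsetSum _ fun k' _ =>
    integrable_finsetSum _ fun j _ => integrable_finsetSum _ fun j' _ => ?_
  refine Integrable.mul_const ?_ _
  by_cases h : l = l'
  · subst h; exact (gs_same l k j k' j').1
  · exact (gs_pair h k j k' j').1

lemma N4_dir_integral {L : ℕ} (r : ℕ) (F : MvPolynomial (Fin K) ℝ) (l l' : Fin L) :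
    ∫ G : Fin L → Fin K → ℝ,
      N4 r (dirD (G l) F) (dirD (G l') F) (dirD (G l) F) (dirD (G l') F) ∂gs L K =
    ∑ k, ∑ k', ∑ j, ∑ j', (∫ G : Fin L → Fin K → ℝ,
      (G l k * G l j) * (G l' k' * G l' j') ∂gs L K) *
        N4 r (pderiv k F) (pderiv k' F) (pderiv j F) (pderiv j' F) := by
  have hI : ∀ k k' j j', Integrable (fun G : Fin L → Fin K → ℝ =>
      ((G l k * G l j) * (G l' k' * G l' j')) *
        N4 r (pderiv k F) (pderiv k' F) (pderiv j F) (pderiv j' F)) (gs L K) := by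
    intro k k' j j'
    refine Integrable.mul_const ?_ _
    by_cases h : l = l'
    · subst h; exact (gs_same l k j k' j').1
    · exact (gs_pair h k j k' j').1
  simp only [N4_dir]
  rw [integral_finsetSum _ fun k _ => integrable_finsetSum _ fun k' _ =>
    integrable_finsetSum _ fun j _ => integrable_finsetSum _ fun j' _ => hI k k' j j']
  refine Finset.sum_congr rfl fun k _ => ?_
  rw [integral_finsetSum _ fun k' _ =>
    integrable_finsetSum _ fun j _ => integrable_finsetSum _ fun j' _ => hI k k' j j']
  refine Finset.sum_congr rfl fun k' _ => ?_
  rw [integral_finsetSum _ fun j _ => integrable_finsetSum _ fun j' _ => hI k k' j j']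
  refine Finset.sum_congr rfl fun j _ => ?_
  rw [integral_finsetSum _ fun j' _ => hI k k' j j']
  refine Finset.sum_congr rfl fun j' _ => ?_
  rw [integral_mul_const]

lemma N4_dir_ne {L : ℕ} (r : ℕ) (F : MvPolynomial (Fin K) ℝ) {l l' : Fin L} (h : l ≠ l') :
    ∫ G : Fin L → Fin K → ℝ,
      N4 r (dirD (G l) F) (dirD (G l') F) (dirD (G l) F) (dirD (G l') F) ∂gs L K =
    N4 (r + 1) F F F F := by
  rw [N4_dir_integral, N4_succ]
  simp only [(gs_pair h _ _ _ _).2]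
  simp [ite_mul]

lemma N4_dir_same {L : ℕ} {r n : ℕ} {F : MvPolynomial (Fin K) ℝ} (hF : F ∈ Ch (n + r))
    (l : Fin L) :
    ∫ G : Fin L → Fin K → ℝ,
      N4 r (dirD (G l) F) (dirD (G l) F) (dirD (G l) F) (dirD (G l) F) ∂gs L K ≤
    2 * N4 (r + 1) F F F F + (n : ℝ) ^ 2 * N4 r F F F F := by
  rw [N4_dir_integral]
  simp only [(gs_same l _ _ _ _).2]
  simp only [add_mul, Finset.sum_add_distrib]
  simp only [ite_mul, one_mul, zero_mul, Finset.sum_ite_eq, Finset.mem_univ, if_true,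
    Finset.sum_ite_irrel, Finset.sum_const_zero, mul_ite, mul_zero, Finset.sum_ite_eq']
  have h1 : ∑ x, ∑ y, N4 r (pderiv x F) (pderiv y F) (pderiv x F) (pderiv y F) =
      N4 (r + 1) F F F F := (N4_succ r F F F F).symm
  have h2 := N4_trace r n (G := F) (G' := F) hF hF
  have h3 : ∑ x, ∑ y, 2 * N4 r (pderiv x F) (pderiv y F) (pderiv y F) (pderiv x F) ≤
      ∑ x, ∑ y, (N4 r (pderiv x F) (pderiv y F) (pderiv x F) (pderiv y F) +
        N4 r (pderiv y F) (pderiv x F) (pderiv y F) (pderiv x F)) :=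
    Finset.sum_le_sum fun i _ => Finset.sum_le_sum fun j _ => N4_cs r _ _ _ _
  simp only [Finset.sum_add_distrib, ← Finset.mul_sum] at h3
  have h4 : ∑ x, ∑ y, N4 r (pderiv y F) (pderiv x F) (pderiv y F) (pderiv x F) =
      N4 (r + 1) F F F F := by rw [Finset.sum_comm, h1]
  rw [h1, h4] at h3
  rw [h1, h2]
  linarith

lemma EE_comb {ι : Type*} [Fintype ι] (b b' : ι → ℝ) (f g : ι → MvPolynomial (Fin K) ℝ) :
    EE ((∑ l, b l • f l) * (∑ l, b' l • g l)) = ∑ l, ∑ l', b l * b' l' * EE (f l * g l') := by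
  simp only [Finset.sum_mul_sum, EE_sum, smul_mul_assoc, mul_smul_comm, EE_smul]
  exact Finset.sum_congr rfl fun l _ => Finset.sum_congr rfl fun l' _ => by ring

lemma EE_dir (F : MvPolynomial (Fin K) ℝ) (g h : Fin K → ℝ) :
    EE (dirD g F * dirD h F) = ∑ k, ∑ k', (g k * h k') * EE (pderiv k F * pderiv k' F) :=
  EE_comb g h _ _

lemma EE_dir_integral {L n : ℕ} {F : MvPolynomial (Fin K) ℝ} (hF : F ∈ Ch n) (l : Fin L) :
    Integrable (fun G : Fin L → Fin K → ℝ => EE (dirD (G l) F * dirD (G l) F)) (gs L K) ∧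
    ∫ G : Fin L → Fin K → ℝ, EE (dirD (G l) F * dirD (G l) F) ∂gs L K = n * EE (F * F) := by
  have hI : ∀ k k', Integrable (fun G : Fin L → Fin K → ℝ =>
      (G l k * G l k') * EE (pderiv k F * pderiv k' F)) (gs L K) := fun k k' =>
    Integrable.mul_const (gs_eval_int l (gauss2_int k k')) _
  simp only [EE_dir]
  refine ⟨integrable_finsetSum _ fun k _ => integrable_finsetSum _ fun k' _ => hI k k', ?_⟩
  rw [integral_finsetSum _ fun k _ => integrable_finsetSum _ fun k' _ => hI k k']
  rw [← energy hF]
  refine Finset.sum_congr rfl fun k _ => ?_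
  rw [integral_finsetSum _ fun k' _ => hI k k']
  simp only [integral_mul_const]
  have : ∀ k', ∫ G : Fin L → Fin K → ℝ, G l k * G l k' ∂gs L K = if k = k' then 1 else 0 := by
    intro k'; rw [gs_eval l (f := fun g => g k * g k') (by fun_prop), gauss2]
  simp [this]

/-- centred Gram entry -/
noncomputable def gerr {L : ℕ} (n : ℕ) (F : MvPolynomial (Fin K) ℝ) (G : Fin L → Fin K → ℝ)
    (l l' : Fin L) : ℝ :=
  EE (dirD (G l) F * dirD (G l') F) - if l = l' then n * EE (F * F) else 0

lemma gerr_bound {L n : ℕ} {F : MvPolynomial (Fin K) ℝ} (hF : F ∈ Ch n) (l l' : Fin L) :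
    Integrable (fun G : Fin L → Fin K → ℝ => gerr n F G l l' ^ 2) (gs L K) ∧
    ∫ G : Fin L → Fin K → ℝ, gerr n F G l l' ^ 2 ∂gs L K ≤ 2 * N4 1 F F F F := by
  have hN := N4_nonneg 1 F F
  by_cases h : l = l'
  · subst h
    obtain ⟨i1, e1⟩ := EE_dir_integral (L := L) hF l
    have i2 := N4_dir_int (L := L) 0 F l l
    have b2 := N4_dir_same (L := L) (r := 0) (n := n) (F := F) hF l
    have e : ∀ G : Fin L → Fin K → ℝ, gerr n F G l l ^ 2 =
        N4 0 (dirD (G l) F) (dirD (G l) F) (dirD (G l) F) (dirD (G l) F) -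
        2 * (n * EE (F * F)) * EE (dirD (G l) F * dirD (G l) F) + (n * EE (F * F)) ^ 2 := by
      intro G; simp only [gerr, N4_zero, if_true]; ring
    simp only [e]
    have i3 := i1.const_mul (2 * (n * EE (F * F)))
    refine ⟨(i2.sub i3).add (integrable_const _), ?_⟩
    rw [integral_add (by exact i2.sub i3) (integrable_const _), integral_sub i2 i3,
      integral_const_mul, e1]
    simp only [N4_zero, zero_add] at b2 ⊢
    simp only [integral_const, probReal_univ, one_smul]
    nlinarith
  · have e : ∀ G : Fin L → Fin K → ℝ, gerr n F G l l' ^ 2 =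
        N4 0 (dirD (G l) F) (dirD (G l') F) (dirD (G l) F) (dirD (G l') F) := by
      intro G; simp only [gerr, N4_zero, if_neg h]; ring
    simp only [e]
    refine ⟨N4_dir_int 0 F l l', ?_⟩
    rw [N4_dir_ne 0 F h]
    simp only [zero_add]
    linarith

noncomputable def Dv {L : ℕ} (m : ℕ) (F : MvPolynomial (Fin K) ℝ) (G : Fin L → Fin K → ℝ) : ℝ :=
  ∑ l, ∑ l', gerr (m + 1) F G l l' ^ 2 + ∑ r ∈ Finset.Ico 1 m, ∑ l, ∑ l',
    N4 r (dirD (G l) F) (dirD (G l') F) (dirD (G l) F) (dirD (G l') F)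

lemma Dv_meas {L : ℕ} (m : ℕ) (F : MvPolynomial (Fin K) ℝ) :
    Measurable (Dv (L := L) m F) := by
  unfold Dv gerr
  simp only [N4_dir, EE_dir]
  refine Continuous.measurable ?_
  fun_prop

lemma Dv_integral {L m : ℕ} (hm : 1 ≤ m) {F : MvPolynomial (Fin K) ℝ} (hF : F ∈ Ch (m + 1)) {τ : ℝ}
    (hτ : ∀ r, 1 ≤ r → r < m + 1 → N4 r F F F F ≤ τ) :
    Integrable (Dv (L := L) m F) (gs L K) ∧
    ∫ G, Dv (L := L) m F G ∂gs L K ≤ ((L : ℝ) ^ 2 * 2 + m * (L ^ 2 * (2 + (m + 1) ^ 2))) * τ := by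
  have i1 : Integrable (fun G : Fin L → Fin K → ℝ => ∑ l, ∑ l', gerr (m + 1) F G l l' ^ 2)
      (gs L K) :=
    integrable_finsetSum _ fun l _ => integrable_finsetSum _ fun l' _ => (gerr_bound hF l l').1
  have i2 : ∀ r, Integrable (fun G : Fin L → Fin K → ℝ => ∑ l, ∑ l',
      N4 r (dirD (G l) F) (dirD (G l') F) (dirD (G l) F) (dirD (G l') F)) (gs L K) := fun r =>
    integrable_finsetSum _ fun l _ => integrable_finsetSum _ fun l' _ => N4_dir_int r F l l'
  have hτ0 : 0 ≤ τ := (N4_nonneg 1 F F).trans (hτ 1 le_rfl (by omega))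
  refine ⟨i1.add (integrable_finsetSum _ fun r _ => i2 r), ?_⟩
  unfold Dv
  rw [integral_add i1 (integrable_finsetSum _ fun r _ => i2 r)]
  have b1 : ∫ G : Fin L → Fin K → ℝ, ∑ l, ∑ l', gerr (m + 1) F G l l' ^ 2 ∂gs L K ≤
      (L : ℝ) ^ 2 * 2 * τ := by
    rw [integral_finsetSum _ fun l _ => integrable_finsetSum _ fun l' _ => (gerr_bound hF l l').1]
    calc _ ≤ ∑ _l : Fin L, ∑ _l' : Fin L, 2 * τ := by
          refine Finset.sum_le_sum fun l _ => ?_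
          rw [integral_finsetSum _ fun l' _ => (gerr_bound hF l l').1]
          refine Finset.sum_le_sum fun l' _ => ?_
          have := hτ 1 le_rfl (by omega)
          exact (gerr_bound hF l l').2.trans (by linarith)
      _ = _ := by simp; ring
  have b2 : ∫ G : Fin L → Fin K → ℝ, ∑ r ∈ Finset.Ico 1 m, ∑ l, ∑ l',
      N4 r (dirD (G l) F) (dirD (G l') F) (dirD (G l) F) (dirD (G l') F) ∂gs L K ≤
      m * (L ^ 2 * (2 + (m + 1) ^ 2)) * τ := by
    rw [integral_finsetSum _ fun r _ => i2 r]
    calc _ ≤ ∑ _r ∈ Finset.Ico 1 m, ∑ _l : Fin L, ∑ _l' : Fin L, (2 + ((m : ℝ) + 1) ^ 2) * τ := by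
          refine Finset.sum_le_sum fun r hr => ?_
          rw [Finset.mem_Ico] at hr
          rw [integral_finsetSum _ fun l _ => integrable_finsetSum _ fun l' _ =>
            N4_dir_int r F l l']
          refine Finset.sum_le_sum fun l _ => ?_
          rw [integral_finsetSum _ fun l' _ => N4_dir_int r F l l']
          refine Finset.sum_le_sum fun l' _ => ?_
          have t1 := hτ r hr.1 (by omega)
          have t2 := hτ (r + 1) (by omega) (by omega)
          by_cases h : l = l'
          · subst h
            obtain ⟨n, hn⟩ : ∃ n, m + 1 = n + r := ⟨m + 1 - r, by omega⟩
            have b := N4_dir_same (L := L) (r := r) (n := n) (F := F) (hn ▸ hF) l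
            have hn' : (n : ℝ) ≤ m + 1 := by
              have : n ≤ m + 1 := by omega
              exact_mod_cast this
            have h5 : (n : ℝ) ^ 2 ≤ ((m : ℝ) + 1) ^ 2 := by gcongr
            have h6 : (n : ℝ) ^ 2 * N4 r F F F F ≤ ((m : ℝ) + 1) ^ 2 * τ :=
              mul_le_mul h5 t1 (N4_nonneg r F F) (by positivity)
            linarith
          · rw [N4_dir_ne r F h]
            nlinarith [mul_nonneg (sq_nonneg ((m : ℝ) + 1)) hτ0]
      _ = ((m - 1 : ℕ) : ℝ) * (L ^ 2 * (2 + (m + 1) ^ 2) * τ) := by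
          simp only [Finset.sum_const, Finset.card_univ, Fintype.card_fin, Nat.card_Ico, nsmul_eq_mul]
          ring
      _ ≤ _ := by
          have : ((m - 1 : ℕ) : ℝ) ≤ m := by exact_mod_cast Nat.sub_le m 1
          rw [mul_assoc (m : ℝ)]
          exact mul_le_mul_of_nonneg_right this (by positivity)
  linarith

lemma cs2 {L : ℕ} (b b' : Fin L → ℝ) (e : Fin L → Fin L → ℝ) :
    (∑ l, ∑ l', b l * b' l' * e l l') ^ 2 ≤
      (∑ l, b l ^ 2) * (∑ l, b' l ^ 2) * ∑ l, ∑ l', e l l' ^ 2 := by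
  have h := Finset.sum_mul_sq_le_sq_mul_sq (Finset.univ ×ˢ Finset.univ : Finset (Fin L × Fin L))
    (fun x => b x.1 * b' x.2) (fun x => e x.1 x.2)
  simp only [Finset.sum_product, mul_pow] at h
  simpa only [Finset.sum_mul_sum] using h

lemma N4_comb {L : ℕ} (r : ℕ) (b b' : Fin L → ℝ) : ∀ (f g : Fin L → MvPolynomial (Fin K) ℝ),
    N4 r (∑ l, b l • f l) (∑ l, b' l • g l) (∑ l, b l • f l) (∑ l, b' l • g l) ≤
      (∑ l, b l ^ 2) * (∑ l, b' l ^ 2) * ∑ l, ∑ l', N4 r (f l) (g l') (f l) (g l') := by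
  induction r with
  | zero =>
    intro f g
    have h := cs2 b b' (fun l l' => EE (f l * g l'))
    have e : EE ((∑ l, b l • f l) * (∑ l, b' l • g l)) =
        ∑ l, ∑ l', b l * b' l' * EE (f l * g l') := EE_comb b b' f g
    simp only [N4_zero, e]
    simpa only [sq] using h
  | succ r ih =>
    intro f g
    have e : ∑ l, ∑ l', N4 (r + 1) (f l) (g l') (f l) (g l') = ∑ i, ∑ j, ∑ l, ∑ l',
        N4 r (pderiv i (f l)) (pderiv j (g l')) (pderiv i (f l)) (pderiv j (g l')) := by
      simp only [N4_succ]
      exact sum_swap4 _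
    rw [e, N4_succ]
    simp only [Finset.mul_sum (Finset.univ : Finset (Fin K)), map_sum, Derivation.map_smul]
    exact Finset.sum_le_sum fun i _ => Finset.sum_le_sum fun j _ => ih _ _

theorem good_event {m : ℕ} (hm : 1 ≤ m) (L : ℕ) {c τ' p : ℝ} (hc : 0 < c) (hτ' : 0 < τ')
    (hp : 0 < p) : ∃ τ : ℝ, 0 < τ ∧ ∀ (K : ℕ) (F : MvPolynomial (Fin K) ℝ), F ∈ Ch (m + 1) →
      c ≤ EE (F * F) → (∀ r, 1 ≤ r → r < m + 1 → N4 r F F F F ≤ τ) →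
      ∃ S : Set (Fin L → Fin K → ℝ), MeasurableSet S ∧ (gs L K).real Sᶜ ≤ p ∧
        ∀ G ∈ S, ∀ b : Fin L → ℝ, ∑ l, b l ^ 2 = 1 →
          c / 2 ≤ EE ((∑ l, b l • dirD (G l) F) * (∑ l, b l • dirD (G l) F)) ∧
          ∀ r, 1 ≤ r → r < m → N4 r (∑ l, b l • dirD (G l) F) (∑ l, b l • dirD (G l) F)
            (∑ l, b l • dirD (G l) F) (∑ l, b l • dirD (G l) F) ≤ τ' := by
  obtain ⟨δ, hδ0, hδ1, hδ2⟩ : ∃ δ : ℝ, 0 < δ ∧ δ ≤ c ^ 2 / 4 ∧ δ ≤ τ' :=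
    ⟨min (c ^ 2 / 4) τ', lt_min (by positivity) hτ', min_le_left _ _, min_le_right _ _⟩
  set B : ℝ := (L : ℝ) ^ 2 * 2 + m * (L ^ 2 * (2 + (m + 1) ^ 2)) with hB
  have hB0 : 0 ≤ B := by positivity
  refine ⟨δ * p / (B + 1), by positivity, ?_⟩
  intro K F hF hcF hN
  obtain ⟨hI, hE⟩ := Dv_integral (L := L) hm hF hN
  have hNn : ∀ (r : ℕ) (G : Fin L → Fin K → ℝ), 0 ≤ ∑ l, ∑ l',
      N4 r (dirD (G l) F) (dirD (G l') F) (dirD (G l) F) (dirD (G l') F) := fun r G =>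
    Finset.sum_nonneg fun l _ => Finset.sum_nonneg fun l' _ => N4_nonneg _ _ _
  have hg : ∀ G : Fin L → Fin K → ℝ, 0 ≤ ∑ l, ∑ l', gerr (m + 1) F G l l' ^ 2 := fun G =>
    Finset.sum_nonneg fun l _ => Finset.sum_nonneg fun l' _ => sq_nonneg _
  have hD0 : ∀ G : Fin L → Fin K → ℝ, 0 ≤ Dv m F G := fun G =>
    add_nonneg (hg G) (Finset.sum_nonneg fun r _ => hNn r G)
  refine ⟨{G | Dv m F G < δ}, measurableSet_lt (Dv_meas m F) measurable_const, ?_, ?_⟩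
  · have hM := mul_meas_ge_le_integral_of_nonneg (ae_of_all _ hD0) hI δ
    have e : ({G : Fin L → Fin K → ℝ | Dv m F G < δ})ᶜ = {G | δ ≤ Dv m F G} := by
      ext G; simp
    rw [e]
    have h1 : B * (δ * p / (B + 1)) ≤ δ * p := by
      rw [mul_div_assoc', div_le_iff₀ (by positivity)]
      nlinarith [mul_pos hδ0 hp]
    have h2 := hM.trans (hE.trans h1)
    exact le_of_mul_le_mul_left h2 hδ0
  · intro G hG b hb
    have hG' : Dv m F G < δ := hG
    constructor
    · have e : EE ((∑ l, b l • dirD (G l) F) * (∑ l, b l • dirD (G l) F)) =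
          (m + 1 : ℕ) * EE (F * F) + ∑ l, ∑ l', b l * b l' * gerr (m + 1) F G l l' := by
        have e1 : EE ((∑ l, b l • dirD (G l) F) * (∑ l, b l • dirD (G l) F)) =
            ∑ l, ∑ l', b l * b l' * EE (dirD (G l) F * dirD (G l') F) := EE_comb b b _ _
        rw [e1]
        simp only [gerr, mul_sub, Finset.sum_sub_distrib, mul_ite, mul_zero, Finset.sum_ite_eq,
          Finset.mem_univ, if_true]
        rw [← Finset.sum_mul]
        have : ∑ l, b l * b l = 1 := by rw [← hb]; exact Finset.sum_congr rfl fun l _ => by ring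
        rw [this]; ring
      have h1 := cs2 b b (gerr (m + 1) F G)
      rw [hb] at h1
      have h2 : ∑ l, ∑ l', gerr (m + 1) F G l l' ^ 2 ≤ δ := by
        have := Finset.sum_nonneg fun r (_ : r ∈ Finset.Ico 1 m) => hNn r G
        unfold Dv at hG'
        linarith
      have h3 : |∑ l, ∑ l', b l * b l' * gerr (m + 1) F G l l'| ≤ c / 2 := by
        apply abs_le_of_sq_le_sq _ (by positivity)
        linarith [show (c / 2) ^ 2 = c ^ 2 / 4 by ring]
      have h4 := (abs_le.1 h3).1
      rw [e]; push_cast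
      have : 0 ≤ (m : ℝ) * EE (F * F) := mul_nonneg (by positivity) (EE_sq_nonneg F)
      linarith
    · intro r h1 h2
      have h3 := N4_comb r b b (fun l => dirD (G l) F) (fun l => dirD (G l) F)
      rw [hb, one_mul, one_mul] at h3
      have h4 := Finset.single_le_sum (f := fun r => ∑ l, ∑ l',
        N4 r (dirD (G l) F) (dirD (G l') F) (dirD (G l) F) (dirD (G l') F))
        (fun r _ => hNn r G) (Finset.mem_Ico.2 ⟨h1, h2⟩)
      have := hg G
      unfold Dv at hG'
      linarith

end SC

namespace SC
variable {K : ℕ}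

lemma gauss_small {s : ℝ} (hs : 0 ≤ s) : gaussianReal 0 1 (Set.Ioo (-s) s) ≤ ENNReal.ofReal s := by
  rw [gaussianReal_apply 0 (by norm_num)]
  have hb : ∀ x, gaussianPDF 0 1 x ≤ ENNReal.ofReal (1 / 2) := by
    intro x
    rw [gaussianPDF]
    apply ENNReal.ofReal_le_ofReal
    rw [gaussianPDFReal]
    have h1 : Real.exp (-(x - 0) ^ 2 / (2 * ((1 : NNReal) : ℝ))) ≤ 1 := by
      apply Real.exp_le_one_iff.2
      have := sq_nonneg (x - 0)
      simp only [NNReal.coe_one]; linarith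
    have h2 : (2 : ℝ) ≤ √(2 * Real.pi * ((1 : NNReal) : ℝ)) := by
      apply Real.le_sqrt_of_sq_le
      have := Real.pi_gt_three
      simp only [NNReal.coe_one]; linarith
    have h3 : (√(2 * Real.pi * ((1 : NNReal) : ℝ)))⁻¹ ≤ 1 / 2 := by
      rw [one_div]; exact inv_anti₀ (by norm_num) h2
    calc _ ≤ (1 / 2 : ℝ) * 1 := mul_le_mul h3 h1 (Real.exp_pos _).le (by norm_num)
      _ = _ := by norm_num
  calc ∫⁻ x in Set.Ioo (-s) s, gaussianPDF 0 1 x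
      ≤ ∫⁻ x in Set.Ioo (-s) s, ENNReal.ofReal (1 / 2) := lintegral_mono fun x => hb x
    _ = ENNReal.ofReal (1 / 2) * ENNReal.ofReal (s - -s) := by
        rw [lintegral_const, Measure.restrict_apply_univ, Real.volume_Ioo]
    _ = ENNReal.ofReal s := by
        rw [← ENNReal.ofReal_mul (by norm_num)]; congr 1; ring

lemma gaussPi_small (L : ℕ) {s : ℝ} (hs : 0 ≤ s) :
    (gaussPi (Fin L)).real {b | ∑ l, b l ^ 2 < s ^ 2} ≤ s ^ L := by
  have hsub : {b : Fin L → ℝ | ∑ l, b l ^ 2 < s ^ 2} ⊆ Set.univ.pi fun _ => Set.Ioo (-s) s := by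
    intro b hb l _
    have h1 : b l ^ 2 ≤ ∑ l, b l ^ 2 :=
      Finset.single_le_sum (f := fun l => b l ^ 2) (fun _ _ => sq_nonneg _) (Finset.mem_univ l)
    have h2 : b l ^ 2 < s ^ 2 := lt_of_le_of_lt h1 hb
    exact abs_lt.1 (abs_lt_of_sq_lt_sq h2 hs)
  rw [measureReal_def]
  refine ENNReal.toReal_le_of_le_ofReal (by positivity) ?_
  calc gaussPi (Fin L) _ ≤ gaussPi (Fin L) (Set.univ.pi fun _ => Set.Ioo (-s) s) :=
        measure_mono hsub
    _ = ∏ _l : Fin L, gaussianReal 0 1 (Set.Ioo (-s) s) := by rw [gaussPi, Measure.pi_pi]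
    _ ≤ ∏ _l : Fin L, ENNReal.ofReal s := Finset.prod_le_prod' fun _ _ => gauss_small hs
    _ = ENNReal.ofReal (s ^ L) := by simp [ENNReal.ofReal_pow hs]

lemma avg_swap {L m : ℕ} (f : Fin L → MvPolynomial (Fin K) ℝ) (μ : ℝ) :
    ∫ Y, Real.exp (-(μ ^ 2 * ∑ l, MM m (f l) Y ^ 2) / 2) ∂gs m K =
      ∫ b, PH m (∑ l, b l • f l) μ ∂gaussPi (Fin L) := by
  have hc := fun l => MM_cont m (f l)
  have h1 : ∀ Y, Real.exp (-(μ ^ 2 * ∑ l, MM m (f l) Y ^ 2) / 2) =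
      ∫ b, Real.cos (μ * ∑ l, b l * MM m (f l) Y) ∂gaussPi (Fin L) := by
    intro Y
    have := gauss_cos (fun l => μ * MM m (f l) Y)
    rw [Finset.mul_sum]
    simp only [mul_pow] at this
    rw [← this]
    congr 1; ext b; congr 1
    rw [Finset.mul_sum]; exact Finset.sum_congr rfl fun l _ => by ring
  simp only [h1, PH, MM_sum, MM_smul]
  rw [integral_integral_swap]
  refine Integrable.of_bound (C := 1) (Continuous.aestronglyMeasurable ?_)
    (ae_of_all _ fun x => Real.abs_cos_le_one _)
  unfold Function.uncurry
  fun_prop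

lemma PH_meas_int {L m : ℕ} (f : Fin L → MvPolynomial (Fin K) ℝ) (μ : ℝ) :
    Integrable (fun b : Fin L → ℝ => PH m (∑ l, b l • f l) μ) (gaussPi (Fin L)) := by
  have hc := fun l => MM_cont m (f l)
  simp only [PH, MM_sum, MM_smul]
  have : Integrable (fun x : (Fin L → ℝ) × (Fin m → Fin K → ℝ) =>
      Real.cos (μ * ∑ l, x.1 l * MM m (f l) x.2)) ((gaussPi (Fin L)).prod (gs m K)) := by
    refine Integrable.of_bound (C := 1) (Continuous.aestronglyMeasurable ?_)
      (ae_of_all _ fun x => Real.abs_cos_le_one _)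
    fun_prop
  exact this.integral_prod_left

lemma avg_bound {L m : ℕ} (f : Fin L → MvPolynomial (Fin K) ℝ) {C s : ℝ} (hC : 0 ≤ C) (hs : 0 < s)
    (hs1 : s ≤ 1)
    (h : ∀ b : Fin L → ℝ, ∑ l, b l ^ 2 = 1 → ∀ lam, 1 ≤ lam →
      PH m (∑ l, b l • f l) lam * lam ^ L ≤ C) :
    ∫ Y, Real.exp (-(((s ^ 2)⁻¹) ^ 2 * ∑ l, MM m (f l) Y ^ 2) / 2) ∂gs m K ≤ (1 + C) * s ^ L := by
  rw [avg_swap]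
  set E : Set (Fin L → ℝ) := {b | ∑ l, b l ^ 2 < s ^ 2} with hE
  have hEm : MeasurableSet E := measurableSet_lt (by fun_prop) measurable_const
  have hpt : ∀ b : Fin L → ℝ, PH m (∑ l, b l • f l) ((s ^ 2)⁻¹) ≤
      E.indicator (fun _ => (1 : ℝ)) b + C * s ^ L := by
    intro b
    by_cases hb : b ∈ E
    · rw [Set.indicator_of_mem hb]
      have := PH_le_one m (∑ l, b l • f l) ((s ^ 2)⁻¹)
      have : 0 ≤ C * s ^ L := by positivity
      linarith
    · rw [Set.indicator_of_notMem hb, zero_add]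
      have hb' : s ^ 2 ≤ ∑ l, b l ^ 2 := not_lt.1 hb
      set ρ := √(∑ l, b l ^ 2) with hρ
      have hρs : s ≤ ρ := Real.le_sqrt_of_sq_le hb'
      have hρ0 : 0 < ρ := hs.trans_le hρs
      have hρ2 : ρ ^ 2 = ∑ l, b l ^ 2 := Real.sq_sqrt (Finset.sum_nonneg fun _ _ => sq_nonneg _)
      have e : ∑ l, b l • f l = ρ • ∑ l, (b l / ρ) • f l := by
        rw [Finset.smul_sum]
        refine Finset.sum_congr rfl fun l _ => ?_
        rw [smul_smul]; congr 1; field_simp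
      have hu : ∑ l, (b l / ρ) ^ 2 = 1 := by
        simp only [div_pow]
        rw [← Finset.sum_div, ← hρ2, div_self (by positivity)]
      rw [e, PH_smul]
      have h1 : s⁻¹ ≤ ρ * (s ^ 2)⁻¹ := by
        rw [show s⁻¹ = s * (s ^ 2)⁻¹ by field_simp]
        gcongr
      have h2 : 1 ≤ s⁻¹ := (one_le_inv₀ hs).2 hs1
      have h3 := h _ hu _ (h2.trans h1)
      have h4 : (s⁻¹) ^ L ≤ (ρ * (s ^ 2)⁻¹) ^ L := by gcongr
      have h5 : 0 < (ρ * (s ^ 2)⁻¹) ^ L := by positivity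
      have h6 : PH m (∑ l, (b l / ρ) • f l) (ρ * (s ^ 2)⁻¹) ≤ C / (ρ * (s ^ 2)⁻¹) ^ L := by
        rwa [le_div_iff₀ h5]
      refine h6.trans ?_
      rw [div_eq_mul_inv]
      refine mul_le_mul_of_nonneg_left ?_ hC
      rw [show s ^ L = ((s⁻¹) ^ L)⁻¹ by rw [inv_pow, inv_inv]]
      exact inv_anti₀ (by positivity) h4
  have hi : Integrable (fun b => E.indicator (fun _ => (1 : ℝ)) b) (gaussPi (Fin L)) :=
    (integrable_const 1).indicator hEm
  calc ∫ b, PH m (∑ l, b l • f l) ((s ^ 2)⁻¹) ∂gaussPi (Fin L)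
      ≤ ∫ b, (E.indicator (fun _ => (1 : ℝ)) b + C * s ^ L) ∂gaussPi (Fin L) :=
        integral_mono (PH_meas_int f _) (hi.add (integrable_const _)) hpt
    _ = (gaussPi (Fin L)).real E + C * s ^ L := by
        rw [integral_add hi (integrable_const _), integral_indicator hEm]; simp
    _ ≤ s ^ L + C * s ^ L := by gcongr; exact gaussPi_small L hs.le
    _ = _ := by ring

lemma gauss_lin_sq (v : Fin K → ℝ) :
    Integrable (fun g : Fin K → ℝ => (∑ i, g i * v i) ^ 2) (gaussPi (Fin K)) ∧
    ∫ g, (∑ i, g i * v i) ^ 2 ∂gaussPi (Fin K) = ∑ i, v i ^ 2 := by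
  have e : ∀ g : Fin K → ℝ, (∑ i, g i * v i) ^ 2 = ∑ i, ∑ j, (g i * g j) * (v i * v j) := by
    intro g
    rw [sq, Finset.sum_mul_sum]
    exact Finset.sum_congr rfl fun i _ => Finset.sum_congr rfl fun j _ => by ring
  have hI : ∀ i j, Integrable (fun g : Fin K → ℝ => (g i * g j) * (v i * v j)) (gaussPi (Fin K)) :=
    fun i j => (gauss2_int i j).mul_const _
  simp only [e]
  refine ⟨integrable_finsetSum _ fun i _ => integrable_finsetSum _ fun j _ => hI i j, ?_⟩
  rw [integral_finsetSum _ fun i _ => integrable_finsetSum _ fun j _ => hI i j]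
  refine Finset.sum_congr rfl fun i _ => ?_
  rw [integral_finsetSum _ fun j _ => hI i j]
  simp only [integral_mul_const, gauss2]
  simp [sq]

lemma jensen_exp {L : ℕ} (v : Fin K → ℝ) {M : ℝ} (hM : 0 ≤ M) :
    Real.exp (-(M * (L * ∑ i, v i ^ 2)) / 2) ≤
      ∫ G : Fin L → Fin K → ℝ, Real.exp (-(M * ∑ l, (∑ i, G l i * v i) ^ 2) / 2) ∂gs L K := by
  obtain ⟨i1, e1⟩ := gauss_lin_sq v
  have i2 : ∀ l, Integrable (fun G : Fin L → Fin K → ℝ => (∑ i, G l i * v i) ^ 2) (gs L K) :=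
    fun l => gs_eval_int l i1
  have e2 : ∀ l, ∫ G : Fin L → Fin K → ℝ, (∑ i, G l i * v i) ^ 2 ∂gs L K = ∑ i, v i ^ 2 := by
    intro l
    rw [gs_eval l (f := fun g => (∑ i, g i * v i) ^ 2) (by fun_prop), e1]
  have i3 : Integrable (fun G : Fin L → Fin K → ℝ => ∑ l, (∑ i, G l i * v i) ^ 2) (gs L K) :=
    integrable_finsetSum _ fun l _ => i2 l
  have e3 : ∫ G : Fin L → Fin K → ℝ, ∑ l, (∑ i, G l i * v i) ^ 2 ∂gs L K =
      L * ∑ i, v i ^ 2 := by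
    rw [integral_finsetSum _ fun l _ => i2 l]; simp [e2]
  set x0 : ℝ := -(M * (L * ∑ i, v i ^ 2)) / 2 with hx0
  have hpt : ∀ G : Fin L → Fin K → ℝ,
      Real.exp x0 * (1 - x0) + (-(Real.exp x0 * M / 2)) * ∑ l, (∑ i, G l i * v i) ^ 2 ≤
      Real.exp (-(M * ∑ l, (∑ i, G l i * v i) ^ 2) / 2) := by
    intro G
    set x := -(M * ∑ l, (∑ i, G l i * v i) ^ 2) / 2 with hx
    have h1 := Real.add_one_le_exp (x - x0)
    have h2 : Real.exp x = Real.exp x0 * Real.exp (x - x0) := by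
      rw [← Real.exp_add]; congr 1; ring
    rw [h2]
    have h3 := mul_le_mul_of_nonneg_left h1 (Real.exp_pos x0).le
    refine le_trans (le_of_eq ?_) h3
    rw [hx]; ring
  have i4 : Integrable (fun G : Fin L → Fin K → ℝ =>
      Real.exp (-(M * ∑ l, (∑ i, G l i * v i) ^ 2) / 2)) (gs L K) := by
    refine bdd_integrable _ (Continuous.measurable (by fun_prop)) (B := 1) fun G => ?_
    rw [abs_of_pos (Real.exp_pos _)]
    apply Real.exp_le_one_iff.2
    have : 0 ≤ M * ∑ l, (∑ i, G l i * v i) ^ 2 :=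
      mul_nonneg hM (Finset.sum_nonneg fun _ _ => sq_nonneg _)
    linarith
  have h := integral_mono ((integrable_const _).add (i3.const_mul _)) i4 hpt
  refine le_trans (le_of_eq ?_) h
  simp only [Pi.add_apply]
  rw [integral_add (integrable_const _) (i3.const_mul _)]
  simp only [integral_const_mul, e3, integral_const, probReal_univ, one_smul]
  rw [hx0]; ring

lemma key_base (q : ℕ) {c : ℝ} (hc : 0 < c) : ∃ τ C : ℝ, 0 < τ ∧ 0 ≤ C ∧
    ∀ (K : ℕ) (F : MvPolynomial (Fin K) ℝ), F ∈ Ch 1 → c ≤ EE (F * F) →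
      ∀ lam : ℝ, 1 ≤ lam → PH 1 F lam * lam ^ q ≤ C := by
  refine ⟨1, (q.factorial : ℝ) * (2 / c) ^ q, one_pos, by positivity, ?_⟩
  intro K F hF hcF lam hlam
  have hE : ∑ i, EE (pderiv i F) ^ 2 = EE (F * F) := by
    have h := energy hF F
    simp only [Nat.cast_one, one_mul] at h
    rw [← h]
    refine Finset.sum_congr rfl fun i _ => ?_
    obtain ⟨a, ha⟩ := mem_Ch_zero (pderiv_mem_Ch (n := 0) hF i)
    rw [ha, ← C_mul, EE_C, EE_C]; ring
  have h1 : PH 1 F lam = Real.exp (-(lam ^ 2 * EE (F * F)) / 2) := by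
    rw [PH_succ]
    simp only [MM, hE, integral_const, probReal_univ, one_smul]
  rw [h1]
  have h2 : Real.exp (-(lam ^ 2 * EE (F * F)) / 2) ≤ Real.exp (-(c / 2 * lam)) := by
    apply Real.exp_le_exp.2
    have : lam * c ≤ lam ^ 2 * EE (F * F) := mul_le_mul (by nlinarith) hcF hc.le (by positivity)
    linarith
  have h3 := Real.pow_div_factorial_le_exp (c / 2 * lam) (by positivity) q
  have h4 : 0 < Real.exp (c / 2 * lam) := Real.exp_pos _
  have hf : (0 : ℝ) < q.factorial := by exact_mod_cast q.factorial_pos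
  rw [div_le_iff₀ hf] at h3
  calc _ ≤ Real.exp (-(c / 2 * lam)) * lam ^ q := by gcongr
    _ = (Real.exp (c / 2 * lam))⁻¹ * ((2 / c) ^ q * (c / 2 * lam) ^ q) := by
        rw [Real.exp_neg, ← mul_pow]; congr 2; field_simp
    _ ≤ (Real.exp (c / 2 * lam))⁻¹ * ((2 / c) ^ q * (Real.exp (c / 2 * lam) * q.factorial)) := by
        gcongr
    _ = _ := by field_simp

lemma key_step_lam {m q L : ℕ} (hL : L = 4 * (q + 1)) {C : ℝ} (hC : 0 ≤ C)
    {F : MvPolynomial (Fin K) ℝ} {S : Set (Fin L → Fin K → ℝ)} (hS : MeasurableSet S)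
    (hSp : (gs L K).real Sᶜ ≤ ((2 : ℝ) ^ (q + 1))⁻¹)
    (h : ∀ G ∈ S, ∀ b : Fin L → ℝ, ∑ l, b l ^ 2 = 1 → ∀ lam, 1 ≤ lam →
      PH m (∑ l, b l • dirD (G l) F) lam * lam ^ L ≤ C) {lam : ℝ} (hlam : (L : ℝ) ≤ lam) :
    PH (m + 1) F lam * lam ^ q ≤ (1 + C) * L ^ (q + 1) + 2 ^ q := by
  have hL4 : (4 : ℝ) ≤ L := by
    have : 4 ≤ L := by omega
    exact_mod_cast this
  have hl0 : 0 < lam := by linarith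
  have hc := fun i => MM_cont m (pderiv i F)
  obtain ⟨J, hJ1, hJ2⟩ := exists_nat_pow_near (x := lam) (y := 2) (by linarith) (by norm_num)
  have hJ0 : J ≠ 0 := by
    rintro rfl; norm_num at hJ2; linarith
  have hJl : (J : ℝ) ≤ lam := by
    have : (J : ℝ) ≤ 2 ^ J := by exact_mod_cast (Nat.lt_two_pow_self).le
    linarith
  set s : ℝ := √√(L / lam) with hs
  have hr : 0 < (L : ℝ) / lam := by positivity
  have hs0 : 0 < s := Real.sqrt_pos.2 (Real.sqrt_pos.2 hr)
  have hs4 : s ^ 4 = L / lam := by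
    rw [show s ^ 4 = (s ^ 2) ^ 2 by ring, hs, Real.sq_sqrt (Real.sqrt_nonneg _),
      Real.sq_sqrt hr.le]
  have hs1 : s ≤ 1 := by
    by_contra hcon
    have h1 : 1 < s ^ 4 := one_lt_pow₀ (not_le.1 hcon) (by norm_num)
    rw [hs4, lt_div_iff₀ hl0] at h1
    linarith
  set M : ℝ := ((s ^ 2)⁻¹) ^ 2 with hM
  have hM0 : 0 ≤ M := by positivity
  have hML : M * L = lam := by
    have : M = (s ^ 4)⁻¹ := by rw [hM, ← inv_pow]; ring
    rw [this, hs4, inv_div]; field_simp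
  let a : (Fin L → Fin K → ℝ) → (Fin m → Fin K → ℝ) → ℝ := fun G Y =>
    Real.exp (-(M * ∑ l, (∑ i, G l i * MM m (pderiv i F) Y) ^ 2) / 2)
  have ha0 : ∀ G Y, 0 ≤ a G Y := fun G Y => (Real.exp_pos _).le
  have ha1 : ∀ G Y, a G Y ≤ 1 := by
    intro G Y
    apply Real.exp_le_one_iff.2
    have : 0 ≤ M * ∑ l, (∑ i, G l i * MM m (pderiv i F) Y) ^ 2 :=
      mul_nonneg hM0 (Finset.sum_nonneg fun _ _ => sq_nonneg _)
    linarith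
  have hac : Continuous (Function.uncurry a) := by
    unfold Function.uncurry a
    fun_prop
  have haG : ∀ Y, Integrable (fun G => a G Y) (gs L K) := fun Y =>
    bdd_integrable _ (hac.comp (Continuous.prodMk_left Y)).measurable (B := 1)
      fun G => by rw [abs_of_nonneg (ha0 G Y)]; exact ha1 G Y
  let u : (Fin m → Fin K → ℝ) → ℝ := fun Y => ∫ G in S, a G Y ∂gs L K
  have hu0 : ∀ Y, 0 ≤ u Y := fun Y => integral_nonneg fun G => ha0 G Y
  have hu1 : ∀ Y, u Y ≤ 1 := by
    intro Y
    calc u Y ≤ ∫ G, a G Y ∂gs L K :=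
          setIntegral_le_integral (haG Y) (ae_of_all _ fun G => ha0 G Y)
      _ ≤ ∫ G, (1 : ℝ) ∂gs L K := integral_mono (haG Y) (integrable_const 1) fun G => ha1 G Y
      _ = 1 := by simp
  have hprodI : Integrable (Function.uncurry a) (((gs L K).restrict S).prod (gs m K)) :=
    Integrable.of_bound hac.aestronglyMeasurable 1
      (ae_of_all _ fun x => by
        rw [Real.norm_eq_abs]
        exact (abs_of_nonneg (ha0 x.1 x.2)).trans_le (ha1 x.1 x.2))
  have huI : Integrable u (gs m K) := hprodI.integral_prod_right
  set p : ℝ := ((2 : ℝ) ^ (q + 1))⁻¹ with hp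
  have hp0 : 0 ≤ p := by positivity
  have hpt : ∀ Y, Real.exp (-(lam ^ 2 * ∑ i, MM m (pderiv i F) Y ^ 2) / 2) ≤
      2 ^ J * (u Y + p ^ J) := by
    intro Y
    set V := ∑ i, MM m (pderiv i F) Y ^ 2 with hV
    have hV0 : 0 ≤ V := Finset.sum_nonneg fun _ _ => sq_nonneg _
    have h1 : Real.exp (-(lam ^ 2 * V) / 2) ≤ Real.exp (-(M * (L * V)) / 2) ^ J := by
      rw [← Real.exp_nat_mul]
      apply Real.exp_le_exp.2
      rw [← mul_assoc, hML]
      have : (J : ℝ) * (lam * V) ≤ lam * (lam * V) := by gcongr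
      nlinarith
    have h2 : Real.exp (-(M * (L * V)) / 2) ≤ u Y + p := by
      refine (jensen_exp (L := L) (fun i => MM m (pderiv i F) Y) hM0).trans ?_
      have h3 := integral_add_compl hS (haG Y)
      change ∫ G, a G Y ∂gs L K ≤ _
      rw [← h3]
      refine add_le_add le_rfl ?_
      calc ∫ G in Sᶜ, a G Y ∂gs L K ≤ ∫ G in Sᶜ, (1 : ℝ) ∂gs L K :=
            integral_mono (haG Y).integrableOn (integrable_const 1) fun G => ha1 G Y
        _ = (gs L K).real Sᶜ := by simp
        _ ≤ p := hSp
    have h3 : Real.exp (-(M * (L * V)) / 2) ^ J ≤ (u Y + p) ^ J :=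
      pow_le_pow_left₀ (Real.exp_pos _).le h2 J
    have h4 := add_pow_le (hu0 Y) hp0 J
    have h5 : u Y ^ J ≤ u Y := pow_le_of_le_one (hu0 Y) (hu1 Y) hJ0
    have h6 : (2 : ℝ) ^ (J - 1) ≤ 2 ^ J := pow_le_pow_right₀ (by norm_num) (by omega)
    calc _ ≤ _ := h1.trans (h3.trans h4)
      _ ≤ 2 ^ J * (u Y + p ^ J) :=
        mul_le_mul h6 (by linarith) (add_nonneg (pow_nonneg (hu0 Y) J) (pow_nonneg hp0 J))
          (by positivity)
  have hu : ∫ Y, u Y ∂gs m K ≤ (1 + C) * s ^ L := by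
    have h1 : ∫ Y, u Y ∂gs m K = ∫ G in S, ∫ Y, a G Y ∂gs m K ∂gs L K :=
      (integral_integral_swap hprodI).symm
    rw [h1]
    have hb : ∀ G ∈ S, ∫ Y, a G Y ∂gs m K ≤ (1 + C) * s ^ L := by
      intro G hG
      have := avg_bound (fun l => dirD (G l) F) hC hs0 hs1 (h G hG)
      simpa only [MM_dirD] using this
    calc _ ≤ ∫ G in S, (1 + C) * s ^ L ∂gs L K :=
          setIntegral_mono_on hprodI.integral_prod_left (integrable_const _) hS hb
      _ = (gs L K).real S * ((1 + C) * s ^ L) := by simp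
      _ ≤ 1 * ((1 + C) * s ^ L) := by
          gcongr
          exact measureReal_le_one
      _ = _ := one_mul _
  have hsL : s ^ L = (L / lam) ^ (q + 1) := by
    rw [← hs4, ← pow_mul, ← hL]
  have hPH : PH (m + 1) F lam ≤ 2 ^ J * (∫ Y, u Y ∂gs m K + p ^ J) := by
    rw [PH_succ]
    have i1 : Integrable (fun Y => Real.exp (-(lam ^ 2 * ∑ i, MM m (pderiv i F) Y ^ 2) / 2))
        (gs m K) := by
      refine bdd_integrable _ (Continuous.measurable (by fun_prop)) (B := 1) fun Y => ?_
      rw [abs_of_pos (Real.exp_pos _)]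
      apply Real.exp_le_one_iff.2
      have : 0 ≤ lam ^ 2 * ∑ i, MM m (pderiv i F) Y ^ 2 :=
        mul_nonneg (by positivity) (Finset.sum_nonneg fun _ _ => sq_nonneg _)
      linarith
    calc _ ≤ ∫ Y, 2 ^ J * (u Y + p ^ J) ∂gs m K :=
          integral_mono i1 ((huI.add (integrable_const _)).const_mul _) hpt
      _ = _ := by
          rw [integral_const_mul, integral_add huI (integrable_const _)]; simp
  have hpJ : 2 ^ J * p ^ J * lam ^ q ≤ 2 ^ q := by
    have e : 2 ^ J * p ^ J = (((2 : ℝ) ^ J) ^ q)⁻¹ := by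
      rw [← mul_pow, hp, pow_succ, mul_inv, mul_comm, mul_assoc, inv_mul_cancel₀ (by norm_num),
        mul_one, inv_pow, ← pow_mul, ← pow_mul, mul_comm q J]
    rw [e, inv_mul_le_iff₀ (by positivity), ← mul_pow]
    refine pow_le_pow_left₀ hl0.le ?_ q
    rw [pow_succ] at hJ2; exact hJ2.le
  have hfin : 2 ^ J * (∫ Y, u Y ∂gs m K) * lam ^ q ≤ (1 + C) * L ^ (q + 1) := by
    calc 2 ^ J * (∫ Y, u Y ∂gs m K) * lam ^ q ≤ lam * ((1 + C) * s ^ L) * lam ^ q := by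
          gcongr
      _ = _ := by rw [hsL, div_pow]; field_simp; ring
  calc PH (m + 1) F lam * lam ^ q ≤ 2 ^ J * (∫ Y, u Y ∂gs m K + p ^ J) * lam ^ q := by gcongr
    _ = 2 ^ J * (∫ Y, u Y ∂gs m K) * lam ^ q + 2 ^ J * p ^ J * lam ^ q := by ring
    _ ≤ _ := add_le_add hfin hpJ

theorem key (m : ℕ) : ∀ (q : ℕ) (c : ℝ), 0 < c → ∃ τ C : ℝ, 0 < τ ∧ 0 ≤ C ∧
    ∀ (K : ℕ) (F : MvPolynomial (Fin K) ℝ), F ∈ Ch (m + 1) → c ≤ EE (F * F) →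
      (∀ r, 1 ≤ r → r < m + 1 → N4 r F F F F ≤ τ) →
      ∀ lam : ℝ, 1 ≤ lam → PH (m + 1) F lam * lam ^ q ≤ C := by
  induction m with
  | zero =>
    intro q c hc
    obtain ⟨τ, C, h1, h2, h3⟩ := key_base q hc
    exact ⟨τ, C, h1, h2, fun K F hF hcF _ => h3 K F hF hcF⟩
  | succ m ih =>
    intro q c hc
    obtain ⟨L, hL⟩ : ∃ L, L = 4 * (q + 1) := ⟨_, rfl⟩
    obtain ⟨τ', C, hτ', hC, hIH⟩ := ih L (c / 2) (by positivity)
    obtain ⟨τ, hτ, hge⟩ := good_event (m := m + 1) (by omega) L hc hτ'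
      (p := ((2 : ℝ) ^ (q + 1))⁻¹) (by positivity)
    refine ⟨τ, (L : ℝ) ^ q + ((1 + C) * L ^ (q + 1) + 2 ^ q), hτ, by positivity, ?_⟩
    intro K F hF hcF hN lam hlam
    obtain ⟨S, hS, hSp, hSG⟩ := hge K F hF hcF hN
    by_cases hlL : (L : ℝ) ≤ lam
    · have := key_step_lam (m := m + 1) hL hC hS hSp (F := F) (fun G hG b hb => by
        obtain ⟨g1, g2⟩ := hSG G hG b hb
        refine hIH K _ ?_ g1 g2
        exact Submodule.sum_mem _ fun l _ => Submodule.smul_mem _ _ (dirD_mem hF _)) hlL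
      have h0 : (0 : ℝ) ≤ (L : ℝ) ^ q := by positivity
      linarith
    · have h1 := PH_le_one (m + 1 + 1) F lam
      have h2 : lam ^ q ≤ (L : ℝ) ^ q := pow_le_pow_left₀ (by linarith) (not_le.1 hlL).le q
      have h3 : PH (m + 1 + 1) F lam * lam ^ q ≤ 1 * lam ^ q := by gcongr
      have h4 : 0 ≤ (1 + C) * (L : ℝ) ^ (q + 1) + 2 ^ q := by positivity
      linarith

end SC

namespace SC
variable {K : ℕ}

lemma Kil_smul {n : ℕ} : ∀ {F : MvPolynomial (Fin K) ℝ} (c : ℝ), Kil n F → Kil n (c • F) := by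
  induction n with
  | zero => intro F c h; rw [show F = 0 from h, smul_zero]; exact Kil_zero 0
  | succ n ih => intro F c h i; rw [Derivation.map_smul]; exact ih c (h i)

lemma Kil_one {F : MvPolynomial (Fin K) ℝ} (h : Kil 1 F) : F = C (coeff 0 F) := by
  ext s
  rw [coeff_C]
  split_ifs with hs
  · rw [hs]
  · have : ∃ i, s i ≠ 0 := by
      by_contra hcon; push Not at hcon
      exact hs (Finsupp.ext fun i => (hcon i).symm)
    obtain ⟨i, hi⟩ := this
    have h1 : pderiv i F = 0 := h i
    have h2 := coeff_pderiv (i := i) F (s - Finsupp.single i 1)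
    rw [h1, coeff_zero] at h2
    have h3 : s - Finsupp.single i 1 + Finsupp.single i 1 = s := by
      ext j
      by_cases hj : j = i
      · subst hj; simp; omega
      · simp [Finsupp.single_apply, Ne.symm hj]
    rw [h3] at h2
    rcases mul_eq_zero.1 h2.symm with h4 | h4
    · exact h4
    · exfalso; norm_cast at h4

lemma Kil_two {F : MvPolynomial (Fin K) ℝ} (h : Kil 2 F) :
    ∃ (c : ℝ) (a : Fin K → ℝ), F = C c + ∑ i, a i • X i ∧ ∀ i, pderiv i F = C (a i) := by
  have h1 : ∀ i, pderiv i F = C (coeff 0 (pderiv i F)) := fun i => Kil_one (h i)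
  have h2 : Kil 1 (F - ∑ j, coeff 0 (pderiv j F) • X j) := by
    intro i
    change pderiv i _ = 0
    rw [map_sub, map_sum]
    simp only [Derivation.map_smul, pderiv_X']
    rw [Finset.sum_eq_single i]
    · rw [if_pos rfl, sub_eq_zero]
      conv_lhs => rw [h1 i]
      rw [smul_eq_C_mul, C_1, mul_one]
    · intro j _ hj; rw [if_neg (Ne.symm hj)]; simp
    · simp
  have h3 := Kil_one h2
  refine ⟨coeff 0 (F - ∑ j, coeff 0 (pderiv j F) • X j), fun i => coeff 0 (pderiv i F), ?_, h1⟩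
  rw [← h3]; ring

/-- affine substitution `x ↦ ρ (x + u)` -/
noncomputable def Sb (ρ : ℝ) (u : Fin K → ℝ) :
    MvPolynomial (Fin K) ℝ →ₐ[ℝ] MvPolynomial (Fin K) ℝ :=
  aeval fun i => C ρ * (X i + C (u i))

lemma Sb_eval (ρ : ℝ) (u x : Fin K → ℝ) (Q : MvPolynomial (Fin K) ℝ) :
    eval x (Sb ρ u Q) = eval (fun i => ρ * (x i + u i)) Q := by
  induction Q using MvPolynomial.induction_on with
  | C a => simp [Sb]
  | add p q hp hq => simp [hp, hq]
  | mul_X p i hp => rw [map_mul, map_mul, hp]; simp [Sb]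

lemma Sb_pderiv (ρ : ℝ) (u : Fin K → ℝ) (i : Fin K) (Q : MvPolynomial (Fin K) ℝ) :
    pderiv i (Sb ρ u Q) = ρ • Sb ρ u (pderiv i Q) := by
  induction Q using MvPolynomial.induction_on with
  | C a => simp [Sb]
  | add p q hp hq => simp [hp, hq]
  | mul_X p j hp =>
    have hX : Sb ρ u (X j) = C ρ * (X j + C (u j)) := by simp [Sb]
    have hd : pderiv i (Sb ρ u (X j)) = ρ • Sb ρ u (pderiv i (X j)) := by
      rw [hX, pderiv_C_mul, map_add, pderiv_C, add_zero, pderiv_X', smul_eq_C_mul]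
      simp [Sb]
    rw [map_mul, Derivation.leibniz, Derivation.leibniz, hp, hd]
    simp only [smul_eq_mul, map_add, map_mul, smul_add, mul_smul_comm]

lemma Sb_C (ρ : ℝ) (u : Fin K → ℝ) (a : ℝ) : Sb ρ u (C a) = C a := by simp [Sb]

lemma Kil_Sb {ρ : ℝ} {u u' : Fin K → ℝ} {n : ℕ} : ∀ {Q : MvPolynomial (Fin K) ℝ},
    Kil (n + 1) Q → Kil n (Sb ρ u Q - Sb ρ u' Q) := by
  induction n with
  | zero =>
    intro Q h; rw [Kil_one h, Sb_C, Sb_C, sub_self]; exact Kil_zero 0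
  | succ n ih =>
    intro Q h i
    rw [map_sub, Sb_pderiv, Sb_pderiv, ← smul_sub]
    exact Kil_smul ρ (ih (h i))

lemma MM_Sb {ρ : ℝ} {u u' : Fin K → ℝ} : ∀ (k : ℕ) {Q : MvPolynomial (Fin K) ℝ},
    Kil (k + 2) Q → ∀ X, MM k (Sb ρ u Q - Sb ρ u' Q) X =
      ρ ^ (k + 1) * ∑ j, (u j - u' j) * MM k (pderiv j Q) X := by
  intro k
  induction k with
  | zero =>
    intro Q h Y
    obtain ⟨c, a, hQ, hd⟩ := Kil_two h
    have e : Sb ρ u Q - Sb ρ u' Q = C (ρ * ∑ j, (u j - u' j) * a j) := by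
      rw [hQ]
      simp only [map_add, map_sum, map_smul, Sb_C]
      have hX : ∀ u j, Sb ρ u (X j : MvPolynomial (Fin K) ℝ) = C ρ * (X j + C (u j)) := by
        intro u j; simp [Sb]
      simp only [hX, smul_eq_C_mul]
      rw [add_sub_add_left_eq_sub, ← Finset.sum_sub_distrib, C_mul, map_sum, Finset.mul_sum]
      refine Finset.sum_congr rfl fun j _ => ?_
      simp only [C_mul, C_sub]; ring
    simp only [MM, hd, EE_C, e]
    ring
  | succ k ih =>
    intro Q h Y
    simp only [MM_succ, map_sub, Sb_pderiv, ← smul_sub, MM_smul]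
    have : ∀ i, MM k (Sb ρ u (pderiv i Q) - Sb ρ u' (pderiv i Q)) (Fin.tail Y) = _ :=
      fun i => ih (h i) _
    simp only [this, Finset.mul_sum]
    rw [Finset.sum_comm]
    refine Finset.sum_congr rfl fun j _ => Finset.sum_congr rfl fun i _ => ?_
    rw [pderiv_comm' i j]; ring

lemma gauss_sin {L : ℕ} (v : Fin L → ℝ) :
    ∫ g, Real.sin (∑ i, g i * v i) ∂gaussPi (Fin L) = 0 := by
  have h := gauss_exp v
  have hi : Integrable (fun g : Fin L → ℝ => Complex.exp ((∑ i, g i * v i : ℝ) * Complex.I))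
      (gaussPi (Fin L)) := by
    refine Integrable.of_bound (C := 1) (Measurable.aestronglyMeasurable (by fun_prop))
      (ae_of_all _ fun g => ?_)
    rw [Complex.norm_exp_ofReal_mul_I]
  have h2 := integral_im hi
  have e : ∀ x : ℝ, RCLike.im (Complex.exp (x * Complex.I)) = Real.sin x := by
    intro x; exact Complex.exp_ofReal_mul_I_im x
  simp only [e] at h2
  rw [h2, h]
  exact Complex.ofReal_im (Real.exp (-(∑ i, v i ^ 2) / 2))

lemma gauss_cos_diff {L : ℕ} (v : Fin L → ℝ) :
    ∫ z : (Fin L → ℝ) × (Fin L → ℝ), Real.cos (∑ i, (z.1 i - z.2 i) * v i)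
      ∂(gaussPi (Fin L)).prod (gaussPi (Fin L)) = Real.exp (-(∑ i, v i ^ 2)) := by
  have e : ∀ z : (Fin L → ℝ) × (Fin L → ℝ), Real.cos (∑ i, (z.1 i - z.2 i) * v i) =
      Real.cos (∑ i, z.1 i * v i) * Real.cos (∑ i, z.2 i * v i) +
      Real.sin (∑ i, z.1 i * v i) * Real.sin (∑ i, z.2 i * v i) := by
    intro z
    rw [← Real.cos_sub, ← Finset.sum_sub_distrib]
    congr 1; exact Finset.sum_congr rfl fun i _ => by ring
  simp only [e]
  have i1 : Integrable (fun g : Fin L → ℝ => Real.cos (∑ i, g i * v i)) (gaussPi (Fin L)) :=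
    bdd_integrable _ (Continuous.measurable (by fun_prop)) (B := 1) fun x => Real.abs_cos_le_one _
  have i2 : Integrable (fun g : Fin L → ℝ => Real.sin (∑ i, g i * v i)) (gaussPi (Fin L)) :=
    bdd_integrable _ (Continuous.measurable (by fun_prop)) (B := 1) fun x => Real.abs_sin_le_one _
  rw [integral_add (i1.mul_prod i1) (i2.mul_prod i2),
    integral_prod_mul (fun g : Fin L → ℝ => Real.cos (∑ i, g i * v i))
      (fun g : Fin L → ℝ => Real.cos (∑ i, g i * v i)),
    integral_prod_mul (fun g : Fin L → ℝ => Real.sin (∑ i, g i * v i))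
      (fun g : Fin L → ℝ => Real.sin (∑ i, g i * v i)), gauss_sin, gauss_cos, ← Real.exp_add]
  rw [mul_zero, add_zero]; congr 1; ring

lemma rot {ρ : ℝ} (hρ : ρ ^ 2 = 1 / 2) :
    ((gaussPi (Fin K)).prod (gaussPi (Fin K))).map (fun z i => ρ * (z.1 i + z.2 i)) =
      gaussPi (Fin K) := by
  have hm : Measurable (fun (z : (Fin K → ℝ) × (Fin K → ℝ)) (i : Fin K) => ρ * (z.1 i + z.2 i)) := by
    fun_prop
  have : IsProbabilityMeasure
      (((gaussPi (Fin K)).prod (gaussPi (Fin K))).map (fun z i => ρ * (z.1 i + z.2 i))) :=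
    Measure.isProbabilityMeasure_map hm.aemeasurable
  apply Measure.ext_of_charFunDual
  ext L
  rw [charFunDual_apply, charFunDual_apply]
  obtain ⟨w, hL⟩ : ∃ w : Fin K → ℝ, ∀ x, L x = ∑ i, x i * w i := by
    refine ⟨fun i => L (Pi.single i 1), fun x => ?_⟩
    conv_lhs => rw [pi_eq_sum_univ' x]
    rw [map_sum]
    refine Finset.sum_congr rfl fun i _ => ?_
    rw [map_smul, smul_eq_mul]
  rw [integral_map hm.aemeasurable (Continuous.aestronglyMeasurable (by fun_prop))]
  have e : ∀ z : (Fin K → ℝ) × (Fin K → ℝ),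
      Complex.exp ((L (fun i => ρ * (z.1 i + z.2 i)) : ℝ) * Complex.I) =
      Complex.exp ((∑ i, z.1 i * (ρ * w i) : ℝ) * Complex.I) *
      Complex.exp ((∑ i, z.2 i * (ρ * w i) : ℝ) * Complex.I) := by
    intro z
    rw [← Complex.exp_add, ← add_mul, ← Complex.ofReal_add, ← Finset.sum_add_distrib, hL]
    congr 3
    exact Finset.sum_congr rfl fun i _ => by ring
  simp only [e]
  rw [integral_prod_mul (fun g : Fin K → ℝ => Complex.exp ((∑ i, g i * (ρ * w i) : ℝ) * Complex.I))
      (fun g : Fin K → ℝ => Complex.exp ((∑ i, g i * (ρ * w i) : ℝ) * Complex.I)), gauss_exp]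
  simp only [hL]
  rw [gauss_exp, ← Complex.ofReal_mul, ← Real.exp_add]
  congr 2
  simp only [mul_pow, hρ]
  rw [← Finset.mul_sum]; ring

lemma jensen_pow {α : Type*} [MeasurableSpace α] (μ : Measure α) [IsProbabilityMeasure μ]
    {f : α → ℝ} (hf : AEStronglyMeasurable f μ) (h0 : ∀ x, 0 ≤ f x) (h1 : ∀ x, f x ≤ 1) (n : ℕ) :
    (∫ x, f x ∂μ) ^ n ≤ ∫ x, f x ^ n ∂μ := by
  have hi : Integrable f μ := Integrable.of_bound hf 1
    (ae_of_all _ fun x => by rw [Real.norm_eq_abs, abs_of_nonneg (h0 x)]; exact h1 x)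
  have hi2 : Integrable (fun x => f x ^ n) μ := Integrable.of_bound (hf.pow n) 1
    (ae_of_all _ fun x => by
      rw [Real.norm_eq_abs, abs_of_nonneg (pow_nonneg (h0 x) n)]; exact pow_le_one₀ (h0 x) (h1 x))
  exact (convexOn_pow n).map_integral_le (continuous_pow n).continuousOn isClosed_Ici
    (ae_of_all _ h0) hi hi2

/-- characteristic functional -/
noncomputable def ps (Q : MvPolynomial (Fin K) ℝ) : ℂ :=
  ∫ x, Complex.exp ((eval x Q : ℝ) * Complex.I) ∂gaussPi (Fin K)

lemma ps_le_one (Q : MvPolynomial (Fin K) ℝ) : ‖ps Q‖ ≤ 1 := by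
  have := norm_integral_le_of_norm_le_const (μ := gaussPi (Fin K)) (C := 1)
    (f := fun x => Complex.exp ((eval x Q : ℝ) * Complex.I))
    (ae_of_all _ fun x => (Complex.norm_exp_ofReal_mul_I _).le)
  simpa [ps] using this

lemma Sb_cont (ρ : ℝ) (Q : MvPolynomial (Fin K) ℝ) :
    Continuous (fun z : (Fin K → ℝ) × (Fin K → ℝ) => eval (fun i => ρ * (z.1 i + z.2 i)) Q) :=
  (cont_eval Q).comp (by fun_prop)

lemma ps_sq {ρ : ℝ} (hρ : ρ ^ 2 = 1 / 2) (Q : MvPolynomial (Fin K) ℝ) :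
    ‖ps Q‖ ^ 2 ≤ ∫ z : (Fin K → ℝ) × (Fin K → ℝ), ‖ps (Sb ρ z.1 Q - Sb ρ z.2 Q)‖
      ∂(gaussPi (Fin K)).prod (gaussPi (Fin K)) := by
  set γ := gaussPi (Fin K) with hγ
  have hm : Measurable (fun (z : (Fin K → ℝ) × (Fin K → ℝ)) (i : Fin K) => ρ * (z.1 i + z.2 i)) := by
    fun_prop
  let h : (Fin K → ℝ) → (Fin K → ℝ) → ℂ := fun v u =>
    Complex.exp ((eval (fun i => ρ * (v i + u i)) Q : ℝ) * Complex.I)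
  have hc : Continuous (fun z : (Fin K → ℝ) × (Fin K → ℝ) => h z.1 z.2) := by
    have := Sb_cont ρ Q
    unfold h
    fun_prop
  have hn : ∀ v u, ‖h v u‖ = 1 := fun v u => Complex.norm_exp_ofReal_mul_I _
  have hi : Integrable (fun z : (Fin K → ℝ) × (Fin K → ℝ) => h z.1 z.2) (γ.prod γ) :=
    Integrable.of_bound hc.aestronglyMeasurable 1 (ae_of_all _ fun z => (hn _ _).le)
  have e1 : ps Q = ∫ v, ∫ u, h v u ∂γ ∂γ := by
    have hce := cont_eval Q
    have hr := rot (K := K) hρ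
    rw [← hγ] at hr
    have h2 : ps Q = ∫ x, Complex.exp ((eval x Q : ℝ) * Complex.I) ∂(Measure.map
        (fun (z : (Fin K → ℝ) × (Fin K → ℝ)) (i : Fin K) => ρ * (z.1 i + z.2 i)) (γ.prod γ)) := by
      rw [hr]; rfl
    rw [h2, integral_map hm.aemeasurable
      (Continuous.aestronglyMeasurable (by fun_prop))]
    exact integral_prod _ hi
  have hle : ∀ v, ‖∫ u, h v u ∂γ‖ ≤ 1 := by
    intro v
    have := norm_integral_le_of_norm_le_const (μ := γ) (C := 1) (f := fun u => h v u)
      (ae_of_all _ fun u => (hn v u).le)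
    simpa using this
  have hmeas : AEStronglyMeasurable (fun v => ‖∫ u, h v u ∂γ‖) γ :=
    hi.integral_prod_left.aestronglyMeasurable.norm
  have s1 : ‖ps Q‖ ^ 2 ≤ ∫ v, ‖∫ u, h v u ∂γ‖ ^ 2 ∂γ := by
    refine le_trans ?_ (jensen_pow γ hmeas (fun _ => norm_nonneg _) hle 2)
    rw [e1]
    gcongr
    exact norm_integral_le_integral_norm _
  let H : (Fin K → ℝ) → (Fin K → ℝ) × (Fin K → ℝ) → ℂ := fun v z =>
    h v z.1 * (starRingEnd ℂ) (h v z.2)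
  have e2 : ∀ v, ((‖∫ u, h v u ∂γ‖ ^ 2 : ℝ) : ℂ) = ∫ z, H v z ∂γ.prod γ := by
    intro v
    have := integral_prod_mul (μ := γ) (ν := γ) (fun u => h v u) (fun u => (starRingEnd ℂ) (h v u))
    rw [this, integral_conj, Complex.mul_conj, Complex.normSq_eq_norm_sq]
  have hHc : Continuous (Function.uncurry H) := by
    unfold Function.uncurry H
    have h1 : Continuous (fun a : (Fin K → ℝ) × (Fin K → ℝ) × (Fin K → ℝ) => h a.1 a.2.1) :=
      hc.comp (f := fun a : (Fin K → ℝ) × (Fin K → ℝ) × (Fin K → ℝ) => (a.1, a.2.1)) (by fun_prop)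
    have h2 : Continuous (fun a : (Fin K → ℝ) × (Fin K → ℝ) × (Fin K → ℝ) => h a.1 a.2.2) :=
      hc.comp (f := fun a : (Fin K → ℝ) × (Fin K → ℝ) × (Fin K → ℝ) => (a.1, a.2.2)) (by fun_prop)
    exact h1.mul (Complex.continuous_conj.comp h2)
  have hHi : Integrable (Function.uncurry H) (γ.prod (γ.prod γ)) := by
    refine Integrable.of_bound hHc.aestronglyMeasurable 1 (ae_of_all _ fun a => ?_)
    change ‖h a.1 a.2.1 * (starRingEnd ℂ) (h a.1 a.2.2)‖ ≤ 1
    rw [norm_mul, RCLike.norm_conj, hn, hn, mul_one]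
  have e3 : ∀ z : (Fin K → ℝ) × (Fin K → ℝ),
      ∫ v, H v z ∂γ = ps (Sb ρ z.1 Q - Sb ρ z.2 Q) := by
    intro z
    rw [ps]
    refine integral_congr_ae (ae_of_all _ fun v => ?_)
    change h v z.1 * (starRingEnd ℂ) (h v z.2) = _
    simp only [h]
    rw [← Complex.exp_conj, map_mul, Complex.conj_ofReal, Complex.conj_I, ← Complex.exp_add]
    congr 1
    rw [map_sub, Sb_eval, Sb_eval]
    push_cast; ring
  have e4 : ((∫ v, ‖∫ u, h v u ∂γ‖ ^ 2 ∂γ : ℝ) : ℂ) =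
      ∫ z, ps (Sb ρ z.1 Q - Sb ρ z.2 Q) ∂γ.prod γ := by
    rw [← integral_complex_ofReal]
    simp only [e2, ← e3]
    exact integral_integral_swap hHi
  refine s1.trans ?_
  have h5 : ∫ v, ‖∫ u, h v u ∂γ‖ ^ 2 ∂γ ≤ ‖((∫ v, ‖∫ u, h v u ∂γ‖ ^ 2 ∂γ : ℝ) : ℂ)‖ := by
    rw [Complex.norm_real]; exact le_abs_self _
  refine h5.trans ?_
  rw [e4]
  exact norm_integral_le_integral_norm _

theorem decouple (d : ℕ) : ∃ κ : ℝ, 0 < κ ∧ ∀ (K : ℕ) (Q : MvPolynomial (Fin K) ℝ), Kil (d + 2) Q →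
    ‖ps Q‖ ^ (2 ^ d) ≤ PH (d + 1) Q κ := by
  induction d with
  | zero =>
    refine ⟨1, one_pos, fun K Q hQ => ?_⟩
    obtain ⟨c, a, hQ1, hd⟩ := Kil_two hQ
    rw [PH_succ]
    simp only [MM, hd, EE_C, integral_const, probReal_univ, one_smul, one_pow, one_mul, pow_zero,
      pow_one]
    have e : ∀ x : Fin K → ℝ, Complex.exp ((eval x Q : ℝ) * Complex.I) =
        Complex.exp ((c : ℝ) * Complex.I) * Complex.exp ((∑ i, x i * a i : ℝ) * Complex.I) := by
      intro x
      rw [← Complex.exp_add, ← add_mul, ← Complex.ofReal_add]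
      congr 3
      rw [hQ1]; simp [mul_comm]
    rw [ps]
    simp only [e]
    rw [integral_const_mul, gauss_exp, norm_mul, Complex.norm_exp_ofReal_mul_I, one_mul,
      Complex.norm_real, Real.norm_eq_abs, abs_of_pos (Real.exp_pos _)]
  | succ d ih =>
    obtain ⟨κ, hκ, hd⟩ := ih
    set ρ : ℝ := √(1 / 2) with hρd
    have hρ : ρ ^ 2 = 1 / 2 := Real.sq_sqrt (by norm_num)
    have hρ0 : 0 < ρ := Real.sqrt_pos.2 (by norm_num)
    refine ⟨κ * ρ ^ (d + 1), by positivity, fun K Q hQ => ?_⟩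
    set γ := gaussPi (Fin K) with hγ
    have hc := fun i => MM_cont (d + 1) (pderiv i Q)
    have hk : ∀ z : (Fin K → ℝ) × (Fin K → ℝ), Kil (d + 2) (Sb ρ z.1 Q - Sb ρ z.2 Q) :=
      fun z => Kil_Sb hQ
    have hMM : ∀ (z : (Fin K → ℝ) × (Fin K → ℝ)) (Y : Fin (d + 1) → Fin K → ℝ),
        MM (d + 1) (Sb ρ z.1 Q - Sb ρ z.2 Q) Y =
          ρ ^ (d + 2) * ∑ j, (z.1 j - z.2 j) * MM (d + 1) (pderiv j Q) Y := fun z Y =>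
      MM_Sb (d + 1) hQ Y
    let T : (Fin K → ℝ) × (Fin K → ℝ) → (Fin (d + 1) → Fin K → ℝ) → ℝ := fun z Y =>
      Real.cos (κ * (ρ ^ (d + 2) * ∑ j, (z.1 j - z.2 j) * MM (d + 1) (pderiv j Q) Y))
    have hT : Integrable (Function.uncurry T) ((γ.prod γ).prod (gs (d + 1) K)) := by
      refine Integrable.of_bound (C := 1) (Continuous.aestronglyMeasurable ?_)
        (ae_of_all _ fun x => Real.abs_cos_le_one _)
      unfold Function.uncurry T
      fun_prop
    have hPH : ∀ z, PH (d + 1) (Sb ρ z.1 Q - Sb ρ z.2 Q) κ = ∫ Y, T z Y ∂gs (d + 1) K := by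
      intro z; simp only [PH, hMM, T]
    have hpsm : AEStronglyMeasurable (fun z : (Fin K → ℝ) × (Fin K → ℝ) =>
        ‖ps (Sb ρ z.1 Q - Sb ρ z.2 Q)‖) (γ.prod γ) := by
      refine AEStronglyMeasurable.norm ?_
      simp only [ps, map_sub, Sb_eval]
      have : Integrable (fun a : ((Fin K → ℝ) × (Fin K → ℝ)) × (Fin K → ℝ) =>
          Complex.exp (((eval (fun i => ρ * (a.2 i + a.1.1 i)) Q -
            eval (fun i => ρ * (a.2 i + a.1.2 i)) Q : ℝ)) * Complex.I)) ((γ.prod γ).prod γ) := by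
        refine Integrable.of_bound (C := 1) (Continuous.aestronglyMeasurable ?_)
          (ae_of_all _ fun x => (Complex.norm_exp_ofReal_mul_I _).le)
        have h1 : Continuous (fun a : ((Fin K → ℝ) × (Fin K → ℝ)) × (Fin K → ℝ) =>
            eval (fun i => ρ * (a.2 i + a.1.1 i)) Q) := (cont_eval Q).comp (by fun_prop)
        have h2 : Continuous (fun a : ((Fin K → ℝ) × (Fin K → ℝ)) × (Fin K → ℝ) =>
            eval (fun i => ρ * (a.2 i + a.1.2 i)) Q) := (cont_eval Q).comp (by fun_prop)
        fun_prop
      exact this.integral_prod_left.aestronglyMeasurable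
    have hpsI : Integrable (fun z : (Fin K → ℝ) × (Fin K → ℝ) =>
        ‖ps (Sb ρ z.1 Q - Sb ρ z.2 Q)‖ ^ 2 ^ d) (γ.prod γ) :=
      Integrable.of_bound (hpsm.pow _) 1 (ae_of_all _ fun z => by
        rw [Real.norm_eq_abs, abs_of_nonneg (by positivity)]
        exact pow_le_one₀ (norm_nonneg _) (ps_le_one _))
    calc ‖ps Q‖ ^ 2 ^ (d + 1) = (‖ps Q‖ ^ 2) ^ 2 ^ d := by rw [← pow_mul, pow_succ']
      _ ≤ (∫ z : (Fin K → ℝ) × (Fin K → ℝ), ‖ps (Sb ρ z.1 Q - Sb ρ z.2 Q)‖ ∂γ.prod γ) ^ 2 ^ d :=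
          pow_le_pow_left₀ (by positivity) (ps_sq hρ Q) _
      _ ≤ ∫ z : (Fin K → ℝ) × (Fin K → ℝ), ‖ps (Sb ρ z.1 Q - Sb ρ z.2 Q)‖ ^ 2 ^ d ∂γ.prod γ :=
          jensen_pow _ hpsm (fun _ => norm_nonneg _) (fun _ => ps_le_one _) _
      _ ≤ ∫ z, ∫ Y, T z Y ∂gs (d + 1) K ∂γ.prod γ := by
          refine integral_mono hpsI hT.integral_prod_left fun z => ?_
          change _ ≤ ∫ Y, T z Y ∂gs (d + 1) K
          rw [← hPH]
          exact hd K _ (hk z)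
      _ = ∫ Y, ∫ z, T z Y ∂γ.prod γ ∂gs (d + 1) K := integral_integral_swap hT
      _ = PH (d + 1 + 1) Q (κ * ρ ^ (d + 1)) := by
          rw [PH_succ]
          refine integral_congr_ae (ae_of_all _ fun Y => ?_)
          have h1 := gauss_cos_diff (fun j => κ * ρ ^ (d + 2) * MM (d + 1) (pderiv j Q) Y)
          have h2 : ∀ z : (Fin K → ℝ) × (Fin K → ℝ),
              ∑ j, (z.1 j - z.2 j) * (κ * ρ ^ (d + 2) * MM (d + 1) (pderiv j Q) Y) =
              κ * (ρ ^ (d + 2) * ∑ j, (z.1 j - z.2 j) * MM (d + 1) (pderiv j Q) Y) := by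
            intro z
            rw [← mul_assoc, Finset.mul_sum]
            exact Finset.sum_congr rfl fun j _ => by ring
          simp only [h2] at h1
          simp only [T]
          rw [h1]
          congr 1
          rw [Finset.mul_sum, neg_div, Finset.sum_div]
          congr 1
          refine Finset.sum_congr rfl fun j _ => ?_
          have h3 : (ρ ^ (d + 2)) ^ 2 = (ρ ^ (d + 1)) ^ 2 * (1 / 2) := by
            rw [← hρ]; ring
          rw [mul_pow, mul_pow, h3, mul_pow]; ring

end SC

namespace SC

open scoped FourierTransform SchwartzMap

/-- rescaled characteristic function -/
noncomputable def gch (ν : Measure ℝ) (t : ℝ) : ℂ := charFun ν (2 * Real.pi * t)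

lemma gch_cont (ν : Measure ℝ) [IsProbabilityMeasure ν] : Continuous (gch ν) := by
  unfold gch
  exact (continuous_charFun (μ := ν)).comp (by fun_prop)

lemma gch_eq (ν : Measure ℝ) (t : ℝ) :
    gch ν t = ∫ x, Complex.exp (((2 * Real.pi * (t * x) : ℝ) : ℂ) * Complex.I) ∂ν := by
  rw [gch, charFun_apply_real]
  congr 1
  ext x
  push_cast
  ring_nf

lemma test_schwartz (ν : Measure ℝ) [IsProbabilityMeasure ν] (hg : Integrable (gch ν))
    (h : 𝓢(ℝ, ℂ)) : ∫ x, h x ∂ν = ∫ x, h x * 𝓕 (gch ν) x := by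
  have hF : Integrable (𝓕 (h : ℝ → ℂ)) := by
    rw [← SchwartzMap.fourier_coe]; exact (𝓕 h).integrable
  have s1 : ∫ x, 𝓕 (h : ℝ → ℂ) x • gch ν x = ∫ x, (h x) • 𝓕 (gch ν) x := by
    have := VectorFourier.integral_fourierIntegral_smul_eq_flip (μ := (volume : Measure ℝ))
      (ν := (volume : Measure ℝ)) (L := innerₗ ℝ) (e := Real.fourierChar)
      (f := (h : ℝ → ℂ)) (g := gch ν)
      Real.continuous_fourierChar (by exact continuous_inner) h.integrable hg
    rw [flip_innerₗ] at this
    exact this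
  simp only [smul_eq_mul] at s1
  rw [← s1]
  have s2 : ∀ x, h x = ∫ t, Complex.exp (((2 * Real.pi * (t * x) : ℝ) : ℂ) * Complex.I)
      * 𝓕 (h : ℝ → ℂ) t := by
    intro x
    have := congrFun (Continuous.fourierInv_fourier_eq h.continuous h.integrable hF) x
    rw [Real.fourierInv_eq'] at this
    rw [← this]
    congr 1
    ext t
    simp only [smul_eq_mul]
    congr 5
    simp [mul_comm]
  calc ∫ x, h x ∂ν = ∫ x, (∫ t, Complex.exp (((2 * Real.pi * (t * x) : ℝ) : ℂ) * Complex.I)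
      * 𝓕 (h : ℝ → ℂ) t) ∂ν := by simp_rw [← s2]
    _ = ∫ t, (∫ x, Complex.exp (((2 * Real.pi * (t * x) : ℝ) : ℂ) * Complex.I)
      * 𝓕 (h : ℝ → ℂ) t ∂ν) := by
        apply integral_integral_swap
        have h1 : Integrable (fun z : ℝ × ℝ => 𝓕 (h : ℝ → ℂ) z.2) (ν.prod volume) :=
          hF.comp_snd ν
        refine (h1.bdd_mul (c := 1) (f := fun z : ℝ × ℝ =>
          Complex.exp (((2 * Real.pi * (z.2 * z.1) : ℝ) : ℂ) * Complex.I)) ?_ ?_)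
        · exact Continuous.aestronglyMeasurable (by fun_prop)
        · exact ae_of_all _ fun z => (Complex.norm_exp_ofReal_mul_I _).le
    _ = ∫ t, 𝓕 (h : ℝ → ℂ) t * gch ν t := by
        congr 1
        ext t
        rw [integral_mul_const, gch_eq, mul_comm]

/-- candidate density -/
noncomputable def dens (ν : Measure ℝ) (x : ℝ) : ℝ := (𝓕 (gch ν) x).re

lemma fgch_cont (ν : Measure ℝ) (hg : Integrable (gch ν)) :
    Continuous (𝓕 (gch ν)) :=
  VectorFourier.fourierIntegral_continuous Real.continuous_fourierChar
    (by exact continuous_inner) hg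

lemma dens_cont (ν : Measure ℝ) (hg : Integrable (gch ν)) : Continuous (dens ν) :=
  Complex.continuous_re.comp (fgch_cont ν hg)

lemma test_bump (ν : Measure ℝ) [IsProbabilityMeasure ν] (hg : Integrable (gch ν))
    {c : ℝ} (b : ContDiffBump c) : ∫ x, b x ∂ν = ∫ x, b x * dens ν x := by
  have hs : HasCompactSupport (fun x => ((b x : ℝ) : ℂ)) :=
    b.hasCompactSupport.comp_left (g := fun x : ℝ => (x : ℂ)) (by simp)
  have hd : ContDiff ℝ ((⊤ : ℕ∞) : WithTop ℕ∞) (fun x => ((b x : ℝ) : ℂ)) :=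
    Complex.ofRealCLM.contDiff.comp b.contDiff
  have := test_schwartz ν hg (hs.toSchwartzMap hd)
  have hb : ∀ x, (hs.toSchwartzMap hd) x = ((b x : ℝ) : ℂ) := fun x => rfl
  simp_rw [hb] at this
  rw [integral_complex_ofReal] at this
  have h2 := congrArg Complex.re this
  rw [Complex.ofReal_re] at h2
  rw [h2]
  have hi : Integrable (fun x => ((b x : ℝ) : ℂ) * 𝓕 (gch ν) x) :=
    Continuous.integrable_of_hasCompactSupport
      ((Complex.continuous_ofReal.comp b.continuous).mul (fgch_cont ν hg)) hs.mul_right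
  have := integral_re (𝕜 := ℂ) hi
  simp only [RCLike.re_to_complex] at this
  rw [← this]
  congr 1
  ext x
  simp [dens]

lemma dens_nonneg (ν : Measure ℝ) [IsProbabilityMeasure ν] (hg : Integrable (gch ν)) (x : ℝ) :
    0 ≤ dens ν x := by
  by_contra hx
  push Not at hx
  have hc := dens_cont ν hg
  obtain ⟨δ, hδ, hb⟩ := Metric.eventually_nhds_iff_ball.1
    (hc.continuousAt.eventually_lt_const hx : ∀ᶠ y in 𝓝 x, dens ν y < 0)
  let b : ContDiffBump x := ⟨δ / 2, δ, by positivity, by linarith⟩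
  have h1 := test_bump ν hg b
  have h2 : 0 ≤ ∫ x, b x ∂ν := integral_nonneg fun y => b.nonneg
  rw [h1] at h2
  have hi : Integrable (fun y => -(b y * dens ν y)) :=
    (Continuous.integrable_of_hasCompactSupport (b.continuous.mul hc)
      b.hasCompactSupport.mul_right).neg
  have hpos : 0 < ∫ y, -(b y * dens ν y) := by
    refine (Continuous.neg (b.continuous.mul hc)).integral_pos_of_hasCompactSupport_nonneg_nonzero
      (x := x) ?_ ?_ ?_
    · exact (b.hasCompactSupport.mul_right (f' := dens ν)).comp_left (g := fun z : ℝ => -z) (by simp)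
    · intro y
      by_cases hy : y ∈ Metric.ball x δ
      · have := hb y hy
        have h3 : 0 ≤ b y := b.nonneg
        simp only [Pi.zero_apply]
        nlinarith
      · have : b y = 0 := by
          have := b.support_eq
          by_contra h0
          apply hy
          have h4 : y ∈ Function.support b := h0
          rw [this] at h4
          exact h4
        simp [this]
    · have : b x = 1 := b.one_of_mem_closedBall (by simp [b]; positivity)
      rw [this]
      simp only [one_mul, ne_eq, neg_eq_zero]
      exact hx.ne
  rw [integral_neg] at hpos
  linarith

lemma closedBall_le (μ ν : Measure ℝ) [IsLocallyFiniteMeasure μ] [IsLocallyFiniteMeasure ν]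
    (h : ∀ (c : ℝ) (b : ContDiffBump c), ∫ x, b x ∂ν = ∫ x, b x ∂μ) (c r : ℝ) (hr : 0 ≤ r) :
    ν (Metric.closedBall c r) ≤ μ (Metric.closedBall c r) := by
  have hkey : ∀ δ > 0, ν (Metric.closedBall c r) ≤ μ (Metric.cthickening δ (Metric.closedBall c r)) := by
    intro δ hδ
    rw [cthickening_closedBall hδ.le hr]
    let b : ContDiffBump c := ⟨r + δ / 2, δ + r, by positivity, by linarith⟩
    have hf1 : ν (Metric.closedBall c r) ≠ ⊤ := (isCompact_closedBall c r).measure_lt_top.ne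
    have hf2 : μ (Metric.closedBall c (δ + r)) ≠ ⊤ := (isCompact_closedBall c _).measure_lt_top.ne
    rw [← ENNReal.toReal_le_toReal hf1 hf2]
    change ν.real _ ≤ μ.real _
    have hb1 : Integrable b ν := b.continuous.integrable_of_hasCompactSupport b.hasCompactSupport
    have hb2 : Integrable b μ := b.continuous.integrable_of_hasCompactSupport b.hasCompactSupport
    calc ν.real (Metric.closedBall c r)
        = ∫ x, (Metric.closedBall c r).indicator 1 x ∂ν :=
          (integral_indicator_one Metric.isClosed_closedBall.measurableSet).symm
      _ ≤ ∫ x, b x ∂ν := by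
          refine integral_mono ?_ hb1 ?_
          · exact (continuousOn_const.integrableOn_compact
              (isCompact_closedBall c r)).integrable_indicator
              Metric.isClosed_closedBall.measurableSet
          · intro x
            by_cases hx : x ∈ Metric.closedBall c r
            · rw [Set.indicator_of_mem hx, b.one_of_mem_closedBall
                (Metric.closedBall_subset_closedBall (by simp only [b]; linarith) hx)]
              simp
            · rw [Set.indicator_of_notMem hx]; exact b.nonneg
      _ = ∫ x, b x ∂μ := h c b
      _ ≤ ∫ x, (Metric.closedBall c (δ + r)).indicator 1 x ∂μ := by
          refine integral_mono hb2 ?_ ?_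
          · exact (continuousOn_const.integrableOn_compact
              (isCompact_closedBall c _)).integrable_indicator
              Metric.isClosed_closedBall.measurableSet
          · intro x
            by_cases hx : x ∈ Metric.closedBall c (δ + r)
            · rw [Set.indicator_of_mem hx]; exact b.le_one
            · rw [Set.indicator_of_notMem hx]
              refine (b.zero_of_le_dist ?_).le
              simp only [Metric.mem_closedBall, not_le] at hx
              exact hx.le
      _ = μ.real (Metric.closedBall c (δ + r)) :=
          integral_indicator_one Metric.isClosed_closedBall.measurableSet
  have ht := tendsto_measure_cthickening_of_isCompact (μ := μ) (isCompact_closedBall c r)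
  refine ge_of_tendsto (ht.mono_left nhdsWithin_le_nhds : Tendsto _ (𝓝[>] (0 : ℝ)) _) ?_
  filter_upwards [self_mem_nhdsWithin] with δ hδ
  exact hkey δ hδ

theorem dens_eq (ν : Measure ℝ) [IsProbabilityMeasure ν] (hg : Integrable (gch ν)) :
    ν = volume.withDensity (fun x => ENNReal.ofReal (dens ν x)) := by
  have hc := dens_cont ν hg
  have h0 := dens_nonneg ν hg
  set μ := volume.withDensity (fun x => ENNReal.ofReal (dens ν x)) with hμ
  haveI : IsLocallyFiniteMeasure μ := by
    have : Continuous (fun x => Real.toNNReal (dens ν x)) := by fun_prop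
    exact IsLocallyFiniteMeasure.withDensity_coe (f := fun x => Real.toNNReal (dens ν x)) this
  have h : ∀ (c : ℝ) (b : ContDiffBump c), ∫ x, b x ∂ν = ∫ x, b x ∂μ := by
    intro c b
    rw [test_bump ν hg b, hμ, integral_withDensity_eq_integral_toReal_smul (by fun_prop)
      (ae_of_all _ fun x => ENNReal.ofReal_lt_top)]
    congr 1
    ext x
    rw [ENNReal.toReal_ofReal (h0 x), smul_eq_mul, mul_comm]
  refine Measure.ext_of_Icc ν μ fun a b hab => ?_
  rw [Real.Icc_eq_closedBall]
  have hr : 0 ≤ (b - a) / 2 := by linarith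
  exact le_antisymm (closedBall_le μ ν h _ _ hr) (closedBall_le ν μ (fun c b => (h c b).symm) _ _ hr)

end SC

namespace SC

open scoped FourierTransform

lemma tl_charFun {ν : ℕ → Measure ℝ} [∀ n, IsProbabilityMeasure (ν n)]
    (hlaw : TendstoInLaw ν (gaussianReal 0 1)) (t : ℝ) :
    Tendsto (fun n => charFun (ν n) t) atTop (𝓝 (charFun (gaussianReal 0 1) t)) := by
  have hform : ∀ (μ : Measure ℝ) [IsProbabilityMeasure μ], charFun μ t =
      ((∫ x, Real.cos (t * x) ∂μ : ℝ) : ℂ) + ((∫ x, Real.sin (t * x) ∂μ : ℝ) : ℂ) * Complex.I := by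
    intro μ _
    rw [charFun_apply_real, ← integral_complex_ofReal, ← integral_complex_ofReal,
      ← integral_mul_const, ← integral_add]
    · congr 1
      ext x
      rw [← Complex.ofReal_mul, Complex.exp_mul_I]
      simp
    · exact Integrable.of_bound (Continuous.aestronglyMeasurable (by fun_prop)) 1
        (ae_of_all _ fun x => by
          rw [Complex.norm_real, Real.norm_eq_abs]; exact Real.abs_cos_le_one _)
    · exact Integrable.of_bound (Continuous.aestronglyMeasurable (by fun_prop)) 1
        (ae_of_all _ fun x => by
          rw [norm_mul, Complex.norm_real, Real.norm_eq_abs, Complex.norm_I, mul_one]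
          exact Real.abs_sin_le_one _)
  have hc := hlaw (BoundedContinuousFunction.ofNormedAddCommGroup (fun x : ℝ => Real.cos (t * x))
    (by fun_prop) 1 fun x => Real.abs_cos_le_one _)
  have hs := hlaw (BoundedContinuousFunction.ofNormedAddCommGroup (fun x : ℝ => Real.sin (t * x))
    (by fun_prop) 1 fun x => Real.abs_sin_le_one _)
  simp only [BoundedContinuousFunction.coe_ofNormedAddCommGroup] at hc hs
  simp_rw [hform]
  exact ((Complex.continuous_ofReal.tendsto _).comp hc).add
    (((Complex.continuous_ofReal.tendsto _).comp hs).mul_const _)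

lemma gch_gauss : gch (gaussianReal 0 1) = fun t : ℝ =>
    Complex.exp (-Real.pi * ((2 * Real.pi : ℝ) : ℂ) * t ^ 2) := by
  ext t
  rw [gch, charFun_gaussianReal]
  congr 1
  push_cast
  ring

lemma dens_gauss : dens (gaussianReal 0 1) = gaussianPDFReal 0 1 := by
  ext x
  have hb : 0 < (((2 * Real.pi : ℝ) : ℂ)).re := by
    rw [Complex.ofReal_re]; positivity
  rw [dens, gch_gauss, fourier_gaussian_pi hb]
  have h1 : (((2 * Real.pi : ℝ) : ℂ)) ^ (1 / 2 : ℂ) = ((Real.sqrt (2 * Real.pi) : ℝ) : ℂ) := by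
    rw [Real.sqrt_eq_rpow, Complex.ofReal_cpow (by positivity)]
    norm_num
  have h2 : (-(Real.pi : ℂ) / ((2 * Real.pi : ℝ) : ℂ) * (x : ℂ) ^ 2) = ((-(x ^ 2) / 2 : ℝ) : ℂ) := by
    have : (Real.pi : ℂ) ≠ 0 := by exact_mod_cast Real.pi_ne_zero
    push_cast
    field_simp
  beta_reduce
  rw [h1, h2, ← Complex.ofReal_exp, gaussianPDFReal]
  rw [show (1 : ℂ) / ((Real.sqrt (2 * Real.pi) : ℝ) : ℂ) * ((Real.exp (-(x ^ 2) / 2) : ℝ) : ℂ)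
    = ((1 / Real.sqrt (2 * Real.pi) * Real.exp (-(x ^ 2) / 2) : ℝ) : ℂ) by push_cast; ring,
    Complex.ofReal_re]
  simp

/-- decay of order `s` -/
def Dec (s : ℕ) (C : ℝ) (ν : Measure ℝ) : Prop :=
  ∀ t, (1 + |t|) ^ s * ‖gch ν t‖ ≤ C

lemma dec_bound {q : ℕ} {C : ℝ} {ν : Measure ℝ} (h : Dec (q + 2) C ν) {j : ℕ} (hj : j ≤ q) (t : ℝ) :
    |t| ^ j * ‖gch ν t‖ ≤ C * (1 + t ^ 2)⁻¹ := by
  rw [← div_eq_mul_inv, le_div_iff₀ (by positivity)]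
  refine le_trans ?_ (h t)
  have h1 : |t| ^ j ≤ (1 + |t|) ^ q :=
    (pow_le_pow_left₀ (abs_nonneg t) (by linarith) j).trans
      (pow_le_pow_right₀ (by linarith [abs_nonneg t]) hj)
  have h2 : 1 + t ^ 2 ≤ (1 + |t|) ^ 2 := by
    rw [← sq_abs t]; nlinarith [abs_nonneg t]
  calc |t| ^ j * ‖gch ν t‖ * (1 + t ^ 2) = (|t| ^ j * (1 + t ^ 2)) * ‖gch ν t‖ := by ring
    _ ≤ ((1 + |t|) ^ q * (1 + |t|) ^ 2) * ‖gch ν t‖ := by gcongr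
    _ = _ := by ring

lemma dec_int {q : ℕ} {C : ℝ} {ν : Measure ℝ} [IsProbabilityMeasure ν] (h : Dec (q + 2) C ν) {j : ℕ}
    (hj : j ≤ q) : Integrable (fun t : ℝ => t ^ j • gch ν t) := by
  have hc := gch_cont ν
  refine Integrable.mono' (integrable_inv_one_add_sq.const_mul C)
    (Continuous.aestronglyMeasurable (by fun_prop)) (ae_of_all _ fun t => ?_)
  rw [norm_smul, norm_pow, Real.norm_eq_abs]
  exact dec_bound h hj t

lemma dec_int0 {q : ℕ} {C : ℝ} {ν : Measure ℝ} [IsProbabilityMeasure ν] (h : Dec (q + 2) C ν) :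
    Integrable (gch ν) := by
  simpa using dec_int h (Nat.zero_le q)

lemma fgch_contDiff {q : ℕ} {C : ℝ} {ν : Measure ℝ} [IsProbabilityMeasure ν] (h : Dec (q + 2) C ν) :
    ContDiff ℝ q (𝓕 (gch ν)) := by
  refine Real.contDiff_fourier (N := (q : ℕ∞)) fun n hn => ?_
  have := (dec_int h (j := n) (by exact_mod_cast hn)).norm
  simpa [norm_smul] using this

lemma dens_contDiff {q : ℕ} {C : ℝ} {ν : Measure ℝ} [IsProbabilityMeasure ν] (h : Dec (q + 2) C ν) :
    ContDiff ℝ q (dens ν) :=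
  Complex.reCLM.contDiff.comp (fgch_contDiff h)

lemma dens_deriv {q : ℕ} {C : ℝ} {ν : Measure ℝ} [IsProbabilityMeasure ν] (h : Dec (q + 2) C ν)
    (x : ℝ) : iteratedDeriv q (dens ν) x =
      (𝓕 (fun t : ℝ => (-2 * Real.pi * Complex.I * t) ^ q • gch ν t) x).re := by
  have e1 : iteratedDeriv q (dens ν) x = (iteratedDeriv q (𝓕 (gch ν)) x).re := by
    have := Complex.reCLM.iteratedFDeriv_comp_left (f := 𝓕 (gch ν)) (x := x) (i := q) (n := q)
      (fgch_contDiff h).contDiffAt le_rfl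
    rw [iteratedDeriv_eq_iteratedFDeriv, iteratedDeriv_eq_iteratedFDeriv]
    have h2 : dens ν = ⇑Complex.reCLM ∘ 𝓕 (gch ν) := rfl
    rw [h2, this]
    rfl
  rw [e1, Real.iteratedDeriv_fourier (N := (q : ℕ∞))
    (fun n hn => dec_int h (by exact_mod_cast hn)) le_rfl]

lemma gauss_dec (s : ℕ) : ∃ C, Dec s C (gaussianReal 0 1) := by
  have hc : Continuous (fun t : ℝ => (1 + |t|) ^ s * ‖gch (gaussianReal 0 1) t‖) := by
    have := gch_cont (gaussianReal 0 1)
    fun_prop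
  have hn : ∀ t : ℝ, ‖gch (gaussianReal 0 1) t‖ = Real.exp (-(2 * Real.pi ^ 2 * t ^ 2)) := by
    intro t
    rw [gch_gauss, Complex.norm_exp]
    congr 1
    rw [show (-(Real.pi : ℂ) * ((2 * Real.pi : ℝ) : ℂ) * (t : ℂ) ^ 2)
      = ((-(2 * Real.pi ^ 2 * t ^ 2) : ℝ) : ℂ) by push_cast; ring, Complex.ofReal_re]
  refine ⟨(s.factorial : ℝ) * Real.exp 2, fun t => ?_⟩
  rw [hn]
  have h1 : (1 + |t|) ^ s ≤ s.factorial * Real.exp (1 + |t|) := by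
    have := Real.pow_div_factorial_le_exp (1 + |t|) (by positivity) s
    rwa [div_le_iff₀ (by positivity), mul_comm] at this
  have h2 : 1 + |t| - 2 * Real.pi ^ 2 * t ^ 2 ≤ 2 := by
    have hp : 3 < Real.pi := Real.pi_gt_three
    rw [← sq_abs t]
    have : |t| ^ 2 ≤ 2 * Real.pi ^ 2 * |t| ^ 2 := by
      have h9 : (1 : ℝ) ≤ 2 * Real.pi ^ 2 := by nlinarith
      exact le_mul_of_one_le_left (sq_nonneg _) h9
    nlinarith [sq_nonneg (|t| - 1)]
  calc (1 + |t|) ^ s * Real.exp (-(2 * Real.pi ^ 2 * t ^ 2))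
      ≤ (s.factorial * Real.exp (1 + |t|)) * Real.exp (-(2 * Real.pi ^ 2 * t ^ 2)) := by gcongr
    _ = s.factorial * Real.exp (1 + |t| - 2 * Real.pi ^ 2 * t ^ 2) := by
        rw [mul_assoc, ← Real.exp_add]; ring_nf
    _ ≤ _ := by gcongr

theorem conclude {ν : ℕ → Measure ℝ} [∀ n, IsProbabilityMeasure (ν n)]
    (hlaw : TendstoInLaw ν (gaussianReal 0 1)) {q N : ℕ} {C : ℝ}
    (hdec : ∀ n ≥ N, Dec (q + 2) C (ν n)) :
    (∀ n ≥ N, ν n = volume.withDensity (fun x => ENNReal.ofReal (dens (ν n) x)) ∧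
        (∀ x, 0 ≤ dens (ν n) x) ∧ ContDiff ℝ q (dens (ν n))) ∧
      (∀ ε > (0:ℝ), ∃ M : ℕ, ∀ n ≥ M, ∀ x : ℝ,
        |iteratedDeriv q (dens (ν n)) x - iteratedDeriv q (gaussianPDFReal 0 1) x| ≤ ε) := by
  refine ⟨fun n hn => ⟨dens_eq _ (dec_int0 (hdec n hn)), dens_nonneg _ (dec_int0 (hdec n hn)),
    dens_contDiff (hdec n hn)⟩, ?_⟩
  obtain ⟨C', hG⟩ := gauss_dec (q + 2)
  let D : ℕ → ℝ → ℝ := fun n t => (2 * Real.pi) ^ q * (|t| ^ q *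
    ‖gch (ν n) t - gch (gaussianReal 0 1) t‖)
  have hlim : Tendsto (fun n => ∫ t, D n t) atTop (𝓝 0) := by
    have h0 : (0 : ℝ) = ∫ t : ℝ, (0 : ℝ) := by simp
    rw [h0]
    refine tendsto_integral_filter_of_dominated_convergence
      (fun t => (2 * Real.pi) ^ q * ((C + C') * (1 + t ^ 2)⁻¹)) ?_ ?_ ?_ ?_
    · refine Eventually.of_forall fun n => Continuous.aestronglyMeasurable ?_
      have h1 := gch_cont (ν n)
      have h2 := gch_cont (gaussianReal 0 1)
      fun_prop
    · filter_upwards [eventually_ge_atTop N] with n hn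
      refine ae_of_all _ fun t => ?_
      rw [Real.norm_eq_abs, abs_of_nonneg (by positivity)]
      have b1 := dec_bound (hdec n hn) le_rfl t
      have b2 := dec_bound hG le_rfl t
      have b3 := norm_sub_le (gch (ν n) t) (gch (gaussianReal 0 1) t)
      refine mul_le_mul_of_nonneg_left ?_ (by positivity)
      calc |t| ^ q * ‖gch (ν n) t - gch (gaussianReal 0 1) t‖
          ≤ |t| ^ q * (‖gch (ν n) t‖ + ‖gch (gaussianReal 0 1) t‖) := by gcongr
        _ ≤ _ := by rw [mul_add, add_mul]; exact add_le_add b1 b2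
    · exact (integrable_inv_one_add_sq.const_mul _).const_mul _
    · refine ae_of_all _ fun t => ?_
      have h1 := tl_charFun hlaw (2 * Real.pi * t)
      have h2 : Tendsto (fun n => ‖gch (ν n) t - gch (gaussianReal 0 1) t‖) atTop (𝓝 0) := by
        have := (h1.sub_const (charFun (gaussianReal 0 1) (2 * Real.pi * t))).norm
        simpa [gch] using this
      have := (h2.const_mul (|t| ^ q)).const_mul ((2 * Real.pi) ^ q)
      simpa [D] using this
  intro ε hε
  obtain ⟨M, hM⟩ := eventually_atTop.1 ((hlim.eventually_lt_const hε).and (eventually_ge_atTop N))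
  refine ⟨M, fun n hn x => ?_⟩
  obtain ⟨hlt, hN⟩ := hM n hn
  refine le_trans ?_ hlt.le
  rw [← dens_gauss, dens_deriv (hdec n hN), dens_deriv hG, ← Complex.sub_re]
  refine (Complex.abs_re_le_norm _).trans ?_
  rw [Real.fourier_real_eq, Real.fourier_real_eq]
  have hI : ∀ (μ : Measure ℝ) [IsProbabilityMeasure μ] {A : ℝ}, Dec (q + 2) A μ →
      Integrable (fun t : ℝ => Real.fourierChar (-(t * x)) •
        ((-2 * Real.pi * Complex.I * t) ^ q • gch μ t)) := by
    intro μ _ A hA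
    have hc := gch_cont μ
    refine Integrable.mono' (((integrable_inv_one_add_sq.const_mul A).const_mul
      ((2 * Real.pi) ^ q))) ?_ (ae_of_all _ fun t => ?_)
    · refine Continuous.aestronglyMeasurable ?_
      have : Continuous (fun t : ℝ => Real.fourierChar (-(t * x))) :=
        Real.continuous_fourierChar.comp (by fun_prop)
      fun_prop
    · have b := dec_bound hA le_rfl t
      rw [Circle.norm_smul, norm_smul, norm_pow]
      have : ‖-2 * (Real.pi : ℂ) * Complex.I * (t : ℂ)‖ = 2 * Real.pi * |t| := by
        simp [abs_of_pos Real.pi_pos]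
      rw [this, mul_pow, mul_assoc]
      gcongr
  rw [← integral_sub (hI _ (hdec n hN)) (hI _ hG)]
  refine (norm_integral_le_integral_norm _).trans (le_of_eq ?_)
  congr 1
  ext t
  rw [← smul_sub, ← smul_sub, Circle.norm_smul, norm_smul, norm_pow]
  have : ‖-2 * (Real.pi : ℂ) * Complex.I * (t : ℂ)‖ = 2 * Real.pi * |t| := by
    simp [abs_of_pos Real.pi_pos]
  rw [this, mul_pow, mul_assoc]

lemma PH_abs (k K : ℕ) (F : MvPolynomial (Fin K) ℝ) (lam : ℝ) : PH k F |lam| = PH k F lam := by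
  rcases abs_choice lam with h | h
  · rw [h]
  · rw [h, PH, PH]
    congr 1
    ext X
    rw [neg_mul, Real.cos_neg]

lemma charFun_plaw {K : ℕ} (F : MvPolynomial (Fin K) ℝ) (t : ℝ) :
    charFun (plaw F) t = ps (t • F) := by
  have hc := cont_eval F
  rw [charFun_apply_real, plaw, integral_map hc.measurable.aemeasurable
    (Continuous.aestronglyMeasurable (by fun_prop)), ps]
  congr 1
  ext x
  rw [smul_eval]
  push_cast
  rfl

theorem eventual_dec (m : ℕ) (K : ℕ → ℕ) (P : (n : ℕ) → MvPolynomial (Fin (K n)) ℝ)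
    (hP : ∀ n, P n ∈ Ch (m + 1))
    (hlaw : TendstoInLaw (fun n => plaw (P n)) (gaussianReal 0 1)) (s : ℕ) :
    ∃ (N : ℕ) (C : ℝ), ∀ n ≥ N, Dec s C (plaw (P n)) := by
  obtain ⟨hE, hN⟩ := small_contr K P hP hlaw
  obtain ⟨κ, hκ, hdc⟩ := decouple m
  obtain ⟨τ, C, hτ, hC, hkey⟩ := key m (s * 2 ^ m) (1 / 2) (by norm_num)
  have hev : ∀ᶠ n in atTop, (1 / 2 : ℝ) ≤ EE (P n * P n) ∧
      ∀ r ∈ Finset.range (m + 1), 1 ≤ r → N4 r (P n) (P n) (P n) (P n) ≤ τ := by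
    refine (hE.eventually_const_le (by norm_num)).and ?_
    rw [Filter.eventually_all_finset]
    intro r hr
    by_cases h1 : 1 ≤ r
    · filter_upwards [(hN r h1 (Finset.mem_range.1 hr)).eventually_le_const hτ] with n hn _
      exact hn
    · exact Eventually.of_forall fun n h => absurd h h1
  obtain ⟨N, hN⟩ := eventually_atTop.1 hev
  set a := 2 * Real.pi * κ with ha
  have ha0 : 0 < a := by positivity
  refine ⟨N, max ((1 + a⁻¹) ^ s) ((1 + a⁻¹) ^ s * (1 + C)), fun n hn t => ?_⟩
  obtain ⟨h1, h2⟩ := hN n hn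
  have hQ : ‖gch (plaw (P n)) t‖ ^ (2 ^ m) ≤ PH (m + 1) (P n) (a * |t|) := by
    rw [gch, charFun_plaw]
    have hk : Kil (m + 2) (P n) := Kil_Ch (hP n)
    have hk2 : Kil (m + 2) ((2 * Real.pi * t) • P n) := Kil_smul _ hk
    refine (hdc (K n) _ hk2).trans (le_of_eq ?_)
    rw [PH_smul, ← PH_abs]
    congr 1
    rw [ha, abs_mul, abs_mul, abs_of_pos hκ, abs_of_pos (by positivity : 0 < 2 * Real.pi)]
    ring
  have hone : ‖gch (plaw (P n)) t‖ ≤ 1 := by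
    rw [gch, charFun_plaw]; exact ps_le_one _
  have ht := abs_nonneg t
  have hai : 0 < a⁻¹ := inv_pos.2 ha0
  by_cases hsm : a * |t| < 1
  · refine le_trans ?_ (le_max_left _ _)
    have : |t| ≤ a⁻¹ := by
      rw [← one_div, le_div_iff₀ ha0]; linarith
    calc (1 + |t|) ^ s * ‖gch (plaw (P n)) t‖ ≤ (1 + |t|) ^ s * 1 := by gcongr
      _ ≤ _ := by rw [mul_one]; gcongr
  · push Not at hsm
    refine le_trans ?_ (le_max_right _ _)
    have h3 := hkey (K n) (P n) (hP n) h1 (fun r hr hr2 => h2 r (Finset.mem_range.2 hr2) hr) _ hsm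
    have h4 : (‖gch (plaw (P n)) t‖ * (a * |t|) ^ s) ^ (2 ^ m) ≤ C := by
      rw [mul_pow, ← pow_mul]
      refine le_trans ?_ h3
      gcongr
    have h5 : ‖gch (plaw (P n)) t‖ * (a * |t|) ^ s ≤ 1 + C := by
      by_contra hcon
      push Not at hcon
      have h6 : ‖gch (plaw (P n)) t‖ * (a * |t|) ^ s ≤
          (‖gch (plaw (P n)) t‖ * (a * |t|) ^ s) ^ (2 ^ m) :=
        le_self_pow₀ (by linarith) (by positivity)
      linarith
    have h7 : 1 + |t| ≤ (1 + a⁻¹) * (a * |t|) := by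
      have : (1 + a⁻¹) * (a * |t|) = a * |t| + |t| := by field_simp
      linarith
    calc (1 + |t|) ^ s * ‖gch (plaw (P n)) t‖
        ≤ ((1 + a⁻¹) * (a * |t|)) ^ s * ‖gch (plaw (P n)) t‖ := by gcongr
      _ = (1 + a⁻¹) ^ s * (‖gch (plaw (P n)) t‖ * (a * |t|) ^ s) := by rw [mul_pow]; ring
      _ ≤ _ := by gcongr

theorem main_sc (m : ℕ) (K : ℕ → ℕ)
    (P : (n : ℕ) → MvPolynomial (Fin (K n)) ℝ)
    (hchaos : ∀ n, P n ∈ chaos (K n) m)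
    (hnonconst : ∀ n, 0 < (P n).totalDegree)
    (hlaw : TendstoInLaw
      (fun n => Measure.map (fun x => eval x (P n)) (gaussPi (Fin (K n))))
      (gaussianReal 0 1)) :
    ∀ q : ℕ, ∃ (N : ℕ) (f : ℕ → ℝ → ℝ),
      (∀ n ≥ N,
        Measure.map (fun x => eval x (P n)) (gaussPi (Fin (K n)))
            = volume.withDensity (fun x => ENNReal.ofReal (f n x)) ∧
        (∀ x, 0 ≤ f n x) ∧ ContDiff ℝ q (f n)) ∧
      (∀ ε > (0:ℝ), ∃ M : ℕ, ∀ n ≥ M, ∀ x : ℝ,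
        |iteratedDeriv q (f n) x - iteratedDeriv q (gaussianPDFReal 0 1) x| ≤ ε) := by
  intro q
  have hP : ∀ n, P n ∈ Ch m := fun n => chaos_le_Ch m (hchaos n)
  cases m with
  | zero =>
    exfalso
    obtain ⟨c, hc⟩ := mem_Ch_zero (hP 0)
    have := hnonconst 0
    rw [hc, totalDegree_C] at this
    exact lt_irrefl _ this
  | succ m =>
    have hl : TendstoInLaw (fun n => plaw (P n)) (gaussianReal 0 1) := hlaw
    obtain ⟨N, C, hd⟩ := eventual_dec m K P hP hl (q + 2)
    exact ⟨N, fun n => dens (plaw (P n)), conclude hl hd⟩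

end SC

/-- Superconvergence: along normal convergence on a Wiener chaos of fixed degree,
for each `q` the laws eventually have `C^q` densities whose `q`-th derivatives converge uniformly
on `ℝ` to the corresponding derivative of the standard Gaussian density. -/
theorem superconvergence_on_chaos (m : ℕ) (K : ℕ → ℕ)
    (P : (n : ℕ) → MvPolynomial (Fin (K n)) ℝ)
    (hchaos : ∀ n, P n ∈ chaos (K n) m)
    (hnonconst : ∀ n, 0 < (P n).totalDegree)
    (hlaw : TendstoInLaw
      (fun n => Measure.map (fun x => eval x (P n)) (gaussPi (Fin (K n))))
      (gaussianReal 0 1)) :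
    ∀ q : ℕ, ∃ (N : ℕ) (f : ℕ → ℝ → ℝ),
      (∀ n ≥ N,
        Measure.map (fun x => eval x (P n)) (gaussPi (Fin (K n)))
            = volume.withDensity (fun x => ENNReal.ofReal (f n x)) ∧
        (∀ x, 0 ≤ f n x) ∧ ContDiff ℝ q (f n)) ∧
      (∀ ε > (0:ℝ), ∃ M : ℕ, ∀ n ≥ M, ∀ x : ℝ,
        |iteratedDeriv q (f n) x - iteratedDeriv q (gaussianPDFReal 0 1) x| ≤ ε) := by
  exact SC.main_sc m K P hchaos hnonconst hlaw
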